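/- arXiv:0809.3476 — 5 statements merged into one kernel-verified Lean document; each statement's English description precedes it below -/
import Mathlib

section
/- The number of minimal factorizations of the n-cycle (1 2 … n) into n − 1 transpositions (counting different orderings as different) equals n^{n−2}. -/
namespace Denes
open Equiv Equiv.Perm Finset
set_option linter.unusedSectionVars false
variable {α : Type*} [Fintype α] [DecidableEq α]

/-- cycle of `σ` through `x`, as a finset -/
def cls (σ : Perm α) (x : α) : Finset α := univ.filter (fun y => SameCycle σ x y)
/-- all cycles -/
def parts (σ : Perm α) : Finset (Finset α) := univ.image (cls σ)
/-- product of the cycle lengths -/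
def wt (σ : Perm α) : ℚ := ∏ S ∈ parts σ, (S.card : ℚ)

lemma mem_cls {σ : Perm α} {x y : α} : y ∈ cls σ x ↔ SameCycle σ x y := by simp [cls]
lemma self_mem (σ : Perm α) (x : α) : x ∈ cls σ x := mem_cls.2 (SameCycle.refl _ _)
lemma cls_mem (σ : Perm α) (x : α) : cls σ x ∈ parts σ := by simp [parts]
lemma cls_eq {σ : Perm α} {x y : α} : cls σ x = cls σ y ↔ SameCycle σ x y := by
  constructor
  · intro h
    have := self_mem σ y
    rw [← h] at this
    exact mem_cls.1 this
  · intro h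
    ext z
    rw [mem_cls, mem_cls]
    exact ⟨fun k => h.symm.trans k, fun k => h.trans k⟩

/-- If one step of `σ` stays in a relation then SameCycle implies the relation. -/
lemma sameCycle_le {σ : Perm α} (r : Setoid α) (h : ∀ a, r a (σ a)) {a b : α}
    (hab : SameCycle σ a b) : r a b := by
  obtain ⟨k, hk⟩ := hab.exists_nat_pow_eq
  subst hk
  clear hab
  induction k with
  | zero => exact r.refl _
  | succ k ih => rw [pow_succ', mul_apply]; exact r.trans ih (h _)

lemma same_split {σ : Perm α} {x y : α} (hxy : SameCycle σ x y) {a b : α}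
    (h : SameCycle (swap x y * σ) a b) : SameCycle σ a b := by
  refine sameCycle_le (SameCycle.setoid σ) (fun a => ?_) h
  change SameCycle σ a (swap x y (σ a))
  have h1 : SameCycle σ a (σ a) := by simp [SameCycle.refl]
  rw [swap_apply_def]
  split_ifs with h2 h3
  · rw [h2] at h1; exact h1.trans hxy
  · rw [h3] at h1; exact h1.trans hxy.symm
  · exact h1

lemma card_split {σ : Perm α} {x y : α} (hxy : SameCycle σ x y) :
    (parts σ).card ≤ (parts (swap x y * σ)).card := by
  apply Finset.card_le_card_of_surjOn (fun S => S.biUnion (cls σ))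
  intro S hS
  simp only [parts, coe_image, coe_univ, Set.image_univ, Set.mem_range] at hS
  obtain ⟨a, rfl⟩ := hS
  refine ⟨cls (swap x y * σ) a, by simp [parts], ?_⟩
  ext z
  simp only [mem_biUnion, mem_cls]
  constructor
  · rintro ⟨b, hb, hz⟩
    exact (same_split hxy hb).trans hz
  · intro h
    exact ⟨a, SameCycle.refl _ _, h⟩

/-- relation of merged classes -/
lemma same_merge_le {σ : Perm α} {x y : α} {a b : α}
    (h : SameCycle (swap x y * σ) a b) :
    SameCycle σ a b ∨ (SameCycle σ x a ∨ SameCycle σ y a) ∧ (SameCycle σ x b ∨ SameCycle σ y b) := by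
  let r : Setoid α := {
    r := fun a b => SameCycle σ a b ∨
      (SameCycle σ x a ∨ SameCycle σ y a) ∧ (SameCycle σ x b ∨ SameCycle σ y b)
    iseqv := by
      refine ⟨fun a => Or.inl (SameCycle.refl _ _), ?_, ?_⟩
      · rintro a b (h | h)
        · exact Or.inl h.symm
        · exact Or.inr h.symm
      · rintro a b c (h | ⟨h1, h2⟩) (k | ⟨k1, k2⟩)
        · exact Or.inl (h.trans k)
        · exact Or.inr ⟨k1.imp (fun t => t.trans h.symm) (fun t => t.trans h.symm), k2⟩
        · exact Or.inr ⟨h1, h2.imp (fun t => t.trans k) (fun t => t.trans k)⟩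
        · exact Or.inr ⟨h1, k2⟩ }
  refine sameCycle_le r (fun a => ?_) h
  change SameCycle σ a (swap x y (σ a)) ∨ _ ∧ (SameCycle σ x (swap x y (σ a)) ∨ SameCycle σ y (swap x y (σ a)))
  have h1 : SameCycle σ a (σ a) := by simp [SameCycle.refl]
  rw [swap_apply_def]
  split_ifs with h2 h3
  · rw [h2] at h1
    exact Or.inr ⟨Or.inl h1.symm, Or.inr (SameCycle.refl _ _)⟩
  · rw [h3] at h1
    exact Or.inr ⟨Or.inr h1.symm, Or.inl (SameCycle.refl _ _)⟩
  · exact Or.inl h1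

lemma merge_base {σ : Perm α} {x y : α} (hxy : ¬ SameCycle σ x y) :
    SameCycle (swap x y * σ) y x := by
  have key : ∀ m : ℕ, SameCycle (swap x y * σ) y ((σ ^ m) y) ∨
      SameCycle (swap x y * σ) y x := by
    intro m
    induction m with
    | zero => exact Or.inl (SameCycle.refl _ _)
    | succ m ih =>
      rcases ih with ih | ih
      · by_cases hy : σ ((σ ^ m) y) = y
        · right
          refine ih.trans ?_
          refine ⟨1, ?_⟩
          simp [hy]
        · left
          refine ih.trans ⟨1, ?_⟩
          have hx : σ ((σ ^ m) y) ≠ x := by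
            intro h
            apply hxy
            refine SameCycle.symm ⟨(m + 1 : ℕ), ?_⟩
            rw [zpow_natCast, pow_succ', mul_apply, h]
          rw [zpow_one, mul_apply, swap_apply_of_ne_of_ne hx hy, pow_succ', mul_apply]
      · exact Or.inr ih
  obtain ⟨m, hm0, hm⟩ : ∃ m : ℕ, 0 < m ∧ (σ ^ m) = 1 :=
    ⟨orderOf σ, orderOf_pos σ, pow_orderOf_eq_one σ⟩
  obtain ⟨m, rfl⟩ : ∃ l, m = l + 1 := ⟨m - 1, by omega⟩
  rcases key m with h | h
  · refine h.trans ⟨1, ?_⟩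
    have : σ ((σ ^ m) y) = y := by rw [← mul_apply, ← pow_succ', hm, one_apply]
    rw [zpow_one, mul_apply, this, swap_apply_right]
  · exact h

lemma merge_orbit {σ : Perm α} {x y : α} (hxy : ¬ SameCycle σ x y) {b : α}
    (hb : SameCycle σ x b) : SameCycle (swap x y * σ) x b := by
  obtain ⟨k, hk⟩ := hb.exists_nat_pow_eq
  subst hk
  clear hb
  induction k with
  | zero => exact SameCycle.refl _ _
  | succ k ih =>
    by_cases hx : σ ((σ ^ k) x) = x
    · rw [pow_succ', mul_apply, hx]
    · refine ih.trans ⟨1, ?_⟩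
      have hy : σ ((σ ^ k) x) ≠ y := by
        intro h
        apply hxy
        refine ⟨(k + 1 : ℕ), ?_⟩
        rw [zpow_natCast, pow_succ', mul_apply, h]
      rw [zpow_one, mul_apply, swap_apply_of_ne_of_ne hx hy, pow_succ', mul_apply]

lemma merge_orbit2 {σ : Perm α} {x y : α} (hxy : ¬ SameCycle σ x y) {b : α}
    (hb : SameCycle σ x b ∨ SameCycle σ y b) : SameCycle (swap x y * σ) x b := by
  rcases hb with hb | hb
  · exact merge_orbit hxy hb
  · refine (merge_base hxy).symm.trans ?_
    rw [swap_comm]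
    exact merge_orbit (fun h => hxy h.symm) hb

lemma merge_other {σ : Perm α} {x y a b : α} (hx : ¬ SameCycle σ x a) (hy : ¬ SameCycle σ y a)
    (h : SameCycle σ a b) : SameCycle (swap x y * σ) a b := by
  obtain ⟨k, hk⟩ := h.exists_nat_pow_eq
  subst hk
  clear h
  induction k with
  | zero => exact SameCycle.refl _ _
  | succ k ih =>
    refine ih.trans ⟨1, ?_⟩
    have hh : SameCycle σ a (σ ((σ ^ k) a)) := by
      refine ⟨(k + 1 : ℕ), ?_⟩
      rw [zpow_natCast, pow_succ', mul_apply]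
    have h1 : σ ((σ ^ k) a) ≠ x := by
      intro e; rw [e] at hh; exact hx hh.symm
    have h2 : σ ((σ ^ k) a) ≠ y := by
      intro e; rw [e] at hh; exact hy hh.symm
    rw [zpow_one, mul_apply, swap_apply_of_ne_of_ne h1 h2, pow_succ', mul_apply]

lemma cls_merge {σ : Perm α} {x y : α} (hxy : ¬ SameCycle σ x y) (a : α) :
    cls (swap x y * σ) a = if SameCycle σ x a ∨ SameCycle σ y a then cls σ x ∪ cls σ y
      else cls σ a := by
  split_ifs with h
  · ext b
    rw [mem_union, mem_cls, mem_cls, mem_cls]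
    constructor
    · intro hab
      rcases same_merge_le hab with k | k
      · exact h.imp (fun t => t.trans k) (fun t => t.trans k)
      · exact k.2
    · intro hb
      exact (merge_orbit2 hxy h).symm.trans (merge_orbit2 hxy hb)
  · push Not at h
    ext b
    rw [mem_cls, mem_cls]
    constructor
    · intro hab
      rcases same_merge_le hab with k | k
      · exact k
      · tauto
    · exact merge_other h.1 h.2

lemma parts_merge {σ : Perm α} {x y : α} (hxy : ¬ SameCycle σ x y) :
    parts (swap x y * σ) = insert (cls σ x ∪ cls σ y) (((parts σ).erase (cls σ x)).erase (cls σ y)) := by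
  ext S
  simp only [parts, mem_image, mem_univ, true_and, mem_insert, mem_erase, cls_merge hxy]
  constructor
  · rintro ⟨a, rfl⟩
    split_ifs with h
    · exact Or.inl rfl
    · right
      push Not at h
      exact ⟨fun e => h.2 (cls_eq.1 e.symm), fun e => h.1 (cls_eq.1 e.symm), a, rfl⟩
  · rintro (rfl | ⟨h1, h2, a, rfl⟩)
    · exact ⟨x, by rw [if_pos (Or.inl (SameCycle.refl _ _))]⟩
    · refine ⟨a, if_neg ?_⟩
      rintro (h | h)
      · exact h2 (cls_eq.2 h.symm)
      · exact h1 (cls_eq.2 h.symm)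

lemma union_notMem {σ : Perm α} {x y : α} (hxy : ¬ SameCycle σ x y) :
    cls σ x ∪ cls σ y ∉ (((parts σ).erase (cls σ x)).erase (cls σ y)) := by
  simp only [parts, mem_image, mem_univ, true_and, mem_erase, not_and]
  rintro - h2 ⟨a, ha⟩
  have := self_mem σ x
  have h3 : x ∈ cls σ a := by rw [ha]; exact mem_union_left _ this
  have := cls_eq.2 (mem_cls.1 h3)
  rw [← ha] at h2
  exact h2 this

lemma y_mem_erase {σ : Perm α} {x y : α} (hxy : ¬ SameCycle σ x y) :
    cls σ y ∈ (parts σ).erase (cls σ x) :=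
  mem_erase.2 ⟨fun e => hxy (cls_eq.1 e).symm, cls_mem σ y⟩

lemma card_merge {σ : Perm α} {x y : α} (hxy : ¬ SameCycle σ x y) :
    (parts (swap x y * σ)).card + 1 = (parts σ).card := by
  rw [parts_merge hxy, card_insert_of_notMem (union_notMem hxy)]
  have h1 := card_erase_add_one (y_mem_erase hxy)
  have h2 := card_erase_add_one (cls_mem σ x)
  omega

lemma card_cls_pos (σ : Perm α) (x : α) : (0 : ℚ) < ((cls σ x).card : ℚ) := by
  exact_mod_cast card_pos.2 ⟨x, self_mem σ x⟩

lemma wt_merge {σ : Perm α} {x y : α} (hxy : ¬ SameCycle σ x y) :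
    wt (swap x y * σ) = wt σ * (((cls σ x).card : ℚ)⁻¹ + ((cls σ y).card : ℚ)⁻¹) := by
  have hx := card_cls_pos σ x
  have hy := card_cls_pos σ y
  have e1 := mul_prod_erase (parts σ) (fun S => (S.card : ℚ)) (cls_mem σ x)
  have e2 := mul_prod_erase _ (fun S => (S.card : ℚ)) (y_mem_erase hxy)
  have hd : Disjoint (cls σ x) (cls σ y) := by
    rw [Finset.disjoint_left]
    intro a ha hb
    exact hxy ((mem_cls.1 ha).trans (mem_cls.1 hb).symm)
  unfold wt
  rw [parts_merge hxy, prod_insert (union_notMem hxy), ← e1, ← e2, card_union_of_disjoint hd]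
  push_cast
  field_simp
  ring

lemma sum_inv (σ : Perm α) : ∑ x, ((cls σ x).card : ℚ)⁻¹ = (parts σ).card := by
  rw [Finset.sum_comp (fun S : Finset α => ((S.card : ℚ))⁻¹) (cls σ)]
  rw [Finset.card_eq_sum_ones, Nat.cast_sum]
  refine sum_congr rfl ?_
  intro S hS
  obtain ⟨a, -, rfl⟩ := mem_image.1 hS
  have : (univ.filter (fun b => cls σ b = cls σ a)) = cls σ a := by
    ext b
    simp only [mem_filter, mem_univ, true_and, cls_eq, mem_cls]
    exact ⟨SameCycle.symm, SameCycle.symm⟩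
  rw [this, nsmul_eq_mul, mul_inv_cancel₀ (card_cls_pos σ a).ne']
  simp

/-- the swaps -/
def swaps (α : Type*) [Fintype α] [DecidableEq α] : Finset (Perm α) :=
  univ.offDiag.image (fun p : α × α => swap p.1 p.2)

lemma mem_swaps {τ : Perm α} : τ ∈ swaps α ↔ τ.IsSwap := by
  simp only [swaps, mem_image, mem_offDiag, mem_univ, true_and, Prod.exists, IsSwap]
  constructor
  · rintro ⟨a, b, h, rfl⟩; exact ⟨a, b, h, rfl⟩
  · rintro ⟨a, b, h, rfl⟩; exact ⟨a, b, h, rfl⟩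

lemma sum_swaps (h : Perm α → ℚ) :
    2 * ∑ τ ∈ swaps α, h τ = ∑ p ∈ (univ : Finset α).offDiag, h (swap p.1 p.2) := by
  rw [Finset.sum_comp h (fun p : α × α => swap p.1 p.2), mul_sum]
  refine sum_congr rfl ?_
  intro τ hτ
  obtain ⟨⟨a, b⟩, hab, rfl⟩ := mem_image.1 hτ
  have hab' : a ≠ b := by simpa using hab
  have : (univ : Finset α).offDiag.filter (fun p : α × α => swap p.1 p.2 = swap a b)
      = {(a, b), (b, a)} := by
    ext ⟨c, d⟩
    simp only [mem_filter, mem_offDiag, mem_univ, true_and, mem_insert, mem_singleton, Prod.mk.injEq]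
    constructor
    · rintro ⟨hcd, e⟩
      have h1 : swap a b c = d := by rw [← e, swap_apply_left]
      rw [swap_apply_def] at h1
      split_ifs at h1 with h2 h3
      · exact Or.inl ⟨h2, h1.symm⟩
      · exact Or.inr ⟨h3, h1.symm⟩
      · exact absurd h1 hcd
    · rintro (⟨rfl, rfl⟩ | ⟨rfl, rfl⟩)
      · exact ⟨hab', rfl⟩
      · exact ⟨hab'.symm, swap_comm _ _⟩
  rw [this, card_pair (by simp [hab'])]
  simp

lemma merge_sum (ρ : Perm α) :
    ∑ τ ∈ swaps α, (if (parts (τ * ρ)).card + 1 = (parts ρ).card then wt (τ * ρ) else 0)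
      = wt ρ * (Fintype.card α * ((parts ρ).card - 1)) := by
  have h2 := sum_swaps
    (fun τ => if (parts (τ * ρ)).card + 1 = (parts ρ).card then wt (τ * ρ) else 0)
  have h3 : ∑ p ∈ (univ : Finset α).offDiag,
      (if (parts (swap p.1 p.2 * ρ)).card + 1 = (parts ρ).card then wt (swap p.1 p.2 * ρ) else 0)
      = ∑ x : α, ∑ y : α, (if SameCycle ρ x y then 0 else
        wt ρ * (((cls ρ x).card : ℚ)⁻¹ + ((cls ρ y).card : ℚ)⁻¹)) := by
    rw [← Fintype.sum_prod_type' (f := fun x y => (if SameCycle ρ x y then 0 else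
        wt ρ * (((cls ρ x).card : ℚ)⁻¹ + ((cls ρ y).card : ℚ)⁻¹)))]
    refine sum_subset_zero_on_sdiff (subset_univ _) ?_ ?_
    · rintro ⟨x, y⟩ hp
      have : x = y := by simpa using hp
      subst this
      simp [SameCycle.refl]
    · rintro ⟨x, y⟩ hp
      dsimp only
      by_cases hs : SameCycle ρ x y
      · have := card_split hs
        rw [if_neg (by omega), if_pos hs]
      · rw [if_pos (card_merge hs), if_neg hs, wt_merge hs]
  have h4 : ∀ x : α, ∑ y : α, (if SameCycle ρ x y then 0 else ((cls ρ y).card : ℚ)⁻¹)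
      = (parts ρ).card - 1 := by
    intro x
    have : ∑ y : α, (if SameCycle ρ x y then ((cls ρ y).card : ℚ)⁻¹ else 0) = 1 := by
      rw [← sum_filter]
      change ∑ y ∈ cls ρ x, _ = _
      rw [sum_congr rfl (g := fun _ => ((cls ρ x).card : ℚ)⁻¹)]
      · rw [sum_const, nsmul_eq_mul, mul_inv_cancel₀ (card_cls_pos ρ x).ne']
      · intro y hy
        rw [cls_eq.2 (mem_cls.1 hy)]
    rw [← sum_inv ρ, ← this, ← sum_sub_distrib]
    refine sum_congr rfl fun y _ => ?_
    split_ifs <;> simp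
  have hcomm : ∑ x : α, ∑ y : α, (if SameCycle ρ x y then 0 else ((cls ρ x).card : ℚ)⁻¹)
      = ∑ x : α, ∑ y : α, (if SameCycle ρ x y then 0 else ((cls ρ y).card : ℚ)⁻¹) := by
    rw [sum_comm]
    exact sum_congr rfl fun x _ => sum_congr rfl fun y _ => if_congr sameCycle_comm rfl rfl
  have h5 : ∑ x : α, ∑ y : α, (if SameCycle ρ x y then 0 else
        wt ρ * (((cls ρ x).card : ℚ)⁻¹ + ((cls ρ y).card : ℚ)⁻¹))
      = wt ρ * (∑ x : α, ∑ y : α, (if SameCycle ρ x y then 0 else ((cls ρ x).card : ℚ)⁻¹)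
        + ∑ x : α, ∑ y : α, (if SameCycle ρ x y then 0 else ((cls ρ y).card : ℚ)⁻¹)) := by
    rw [← sum_add_distrib, mul_sum]
    refine sum_congr rfl fun x _ => ?_
    rw [← sum_add_distrib, mul_sum]
    refine sum_congr rfl fun y _ => ?_
    split_ifs <;> ring
  rw [h3, h5, hcomm] at h2
  simp only [h4, sum_const, card_univ, nsmul_eq_mul] at h2
  linarith

lemma card_le_of_swap {τ : Perm α} (hτ : τ ∈ swaps α) (ρ : Perm α) :
    (parts ρ).card ≤ (parts (τ * ρ)).card + 1 := by
  obtain ⟨⟨x, y⟩, -, rfl⟩ := mem_image.1 hτ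
  by_cases hs : SameCycle ρ x y
  · have := card_split hs
    dsimp only
    omega
  · exact (card_merge hs).ge

lemma swap_mul_self_mul {τ : Perm α} (hτ : τ ∈ swaps α) (ρ : Perm α) : τ * (τ * ρ) = ρ := by
  obtain ⟨⟨x, y⟩, -, rfl⟩ := mem_image.1 hτ
  simp

/-- number of factorizations -/
def cnt : ℕ → Perm α → ℕ
  | 0, σ => if σ = 1 then 1 else 0
  | k + 1, σ => ∑ τ ∈ swaps α, cnt k (τ * σ)

lemma parts_one : parts (1 : Perm α) = univ.image (fun x : α => ({x} : Finset α)) := by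
  unfold parts
  congr 1
  ext x y
  simp [cls, eq_comm]

lemma card_parts_one : (parts (1 : Perm α)).card = Fintype.card α := by
  rw [parts_one, card_image_of_injective _ (singleton_injective), card_univ]

lemma wt_one : wt (1 : Perm α) = 1 := by
  unfold wt
  rw [parts_one]
  apply prod_eq_one
  intro S hS
  obtain ⟨a, -, rfl⟩ := mem_image.1 hS
  simp

lemma cnt_ne_zero (k : ℕ) : ∀ σ : Perm α, cnt k σ ≠ 0 → Fintype.card α ≤ (parts σ).card + k := by
  induction k with
  | zero =>
    intro σ h
    simp only [cnt, ne_eq, ite_eq_right_iff, one_ne_zero, imp_false, not_not] at h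
    subst h
    rw [card_parts_one]; omega
  | succ k ih =>
    intro σ h
    obtain ⟨τ, hτ, h1⟩ := exists_ne_zero_of_sum_ne_zero h
    have h2 := ih _ h1
    have h3 := card_le_of_swap hτ (τ * σ)
    rw [swap_mul_self_mul hτ] at h3
    omega

lemma total (k : ℕ) (hk : k + 1 ≤ Fintype.card α) :
    ∑ σ : Perm α, (if (parts σ).card + k = Fintype.card α then (cnt k σ : ℚ) * wt σ else 0)
      = ∏ j ∈ range k, ((Fintype.card α : ℚ) * ((Fintype.card α : ℚ) - 1 - j)) := by
  induction k with
  | zero =>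
    rw [sum_eq_single (1 : Perm α)]
    · simp [card_parts_one, cnt, wt_one]
    · intro σ _ h
      simp [cnt, h]
    · simp
  | succ k ih =>
    rw [prod_range_succ, ← ih (by omega), sum_mul]
    have e1 : ∀ σ : Perm α,
        (if (parts σ).card + (k + 1) = Fintype.card α then (cnt (k + 1) σ : ℚ) * wt σ else 0)
        = ∑ τ ∈ swaps α, (if (parts σ).card + (k + 1) = Fintype.card α then
          (cnt k (τ * σ) : ℚ) * wt σ else 0) := by
      intro σ
      split_ifs
      · simp only [cnt]
        push_cast
        rw [sum_mul]
      · simp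
    rw [sum_congr rfl (fun σ _ => e1 σ), sum_comm]
    have e2 : ∀ τ ∈ swaps α, ∑ σ : Perm α, (if (parts σ).card + (k + 1) = Fintype.card α then
          (cnt k (τ * σ) : ℚ) * wt σ else 0)
        = ∑ ρ : Perm α, (if (parts (τ * ρ)).card + (k + 1) = Fintype.card α then
          (cnt k ρ : ℚ) * wt (τ * ρ) else 0) := by
      intro τ hτ
      rw [← Equiv.sum_comp (Equiv.mulLeft τ)]
      refine sum_congr rfl fun ρ _ => ?_
      simp only [Equiv.coe_mulLeft, swap_mul_self_mul hτ]
    rw [sum_congr rfl e2, sum_comm]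
    refine sum_congr rfl fun ρ _ => ?_
    by_cases h0 : cnt k ρ = 0
    · simp [h0]
    have h1 := cnt_ne_zero k ρ h0
    split_ifs with h
    · have := merge_sum ρ
      have hc : ((parts ρ).card : ℚ) = Fintype.card α - k := by
        rw [← h]; push_cast; ring
      rw [hc] at this
      rw [mul_assoc, show (Fintype.card α : ℚ) - 1 - k = Fintype.card α - k - 1 by ring, ← this,
        mul_sum]
      refine sum_congr rfl fun τ _ => ?_
      rw [mul_ite, mul_zero]
      refine if_congr ?_ rfl rfl
      omega
    · rw [zero_mul]
      refine sum_eq_zero fun τ hτ => ?_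
      have := card_le_of_swap hτ ρ
      rw [if_neg (by omega)]

lemma cnt_conj (g : Perm α) (k : ℕ) : ∀ σ : Perm α, cnt k (g * σ * g⁻¹) = cnt k σ := by
  induction k with
  | zero =>
    intro σ
    simp only [cnt]
    refine if_congr ?_ rfl rfl
    exact conj_eq_one_iff
  | succ k ih =>
    intro σ
    simp only [cnt]
    symm
    refine sum_bij (fun τ _ => g * τ * g⁻¹) ?_ ?_ ?_ ?_
    · intro τ hτ
      obtain ⟨a, b, hab, rfl⟩ := mem_swaps.1 hτ
      refine mem_swaps.2 ⟨g a, g b, g.injective.ne hab, ?_⟩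
      rw [swap_apply_apply]
    · intro a _ b _ h
      simpa using h
    · intro τ hτ
      refine ⟨g⁻¹ * τ * g, ?_, by group⟩
      obtain ⟨a, b, hab, rfl⟩ := mem_swaps.1 hτ
      refine mem_swaps.2 ⟨g⁻¹ a, g⁻¹ b, g⁻¹.injective.ne hab, ?_⟩
      rw [swap_apply_apply, inv_inv]
    · intro τ _
      rw [← ih]
      congr 1
      group

/-- cycles -/
lemma parts_card_one_iff (hα : 2 ≤ Fintype.card α) (σ : Perm α) :
    (parts σ).card = 1 ↔ σ.cycleType = {Fintype.card α} := by
  constructor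
  · intro h
    obtain ⟨S, hS⟩ := card_eq_one.1 h
    have hs : ∀ x y, SameCycle σ x y := by
      intro x y
      have h1 := cls_mem σ x
      have h2 := cls_mem σ y
      rw [hS, mem_singleton] at h1 h2
      exact cls_eq.1 (h1.trans h2.symm)
    have hsup : σ.support = univ := by
      ext x
      simp only [mem_support, mem_univ, iff_true]
      intro hx
      obtain ⟨y, hy⟩ := Fintype.exists_ne_of_one_lt_card (by omega) x
      apply hy
      exact ((hs x y).eq_of_left hx).symm
    have hc : σ.IsCycle := by
      obtain ⟨x⟩ : Nonempty α := Fintype.card_pos_iff.1 (by omega)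
      refine ⟨x, ?_, fun y _ => hs x y⟩
      have : x ∈ σ.support := by rw [hsup]; simp
      exact mem_support.1 this
    rw [hc.cycleType, hsup, card_univ]
  · intro h
    have hc : σ.IsCycle := by
      rw [← card_cycleType_eq_one, h]; simp
    have hsup : σ.support = univ := by
      rw [hc.cycleType] at h
      exact (card_eq_iff_eq_univ _).1 (by simpa using h)
    have hs : ∀ x y, SameCycle σ x y := by
      intro x y
      refine hc.sameCycle ?_ ?_ <;> rw [← mem_support, hsup] <;> simp
    obtain ⟨x⟩ : Nonempty α := Fintype.card_pos_iff.1 (by omega)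
    refine card_eq_one.2 ⟨cls σ x, ?_⟩
    ext S
    simp only [parts, mem_image, mem_univ, true_and, mem_singleton]
    constructor
    · rintro ⟨a, rfl⟩; exact cls_eq.2 (hs _ _)
    · rintro rfl; exact ⟨x, rfl⟩

lemma wt_cycle (hα : 2 ≤ Fintype.card α) (σ : Perm α) (h : (parts σ).card = 1) :
    wt σ = Fintype.card α := by
  obtain ⟨S, hS⟩ := card_eq_one.1 h
  have : S = univ := by
    ext x
    have h1 := cls_mem σ x
    rw [hS, mem_singleton] at h1
    simp only [mem_univ, iff_true]
    rw [← h1]; exact self_mem σ x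
  simp [wt, hS, this]

lemma cnt_cycle (hα : 2 ≤ Fintype.card α) (c : Perm α) (hc : c.cycleType = {Fintype.card α}) :
    cnt (Fintype.card α - 1) c = (Fintype.card α) ^ (Fintype.card α - 2) := by
  have ht := total (α := α) (Fintype.card α - 1) (by omega)
  have e : ∀ σ : Perm α, (if (parts σ).card + (Fintype.card α - 1) = Fintype.card α then
      (cnt (Fintype.card α - 1) σ : ℚ) * wt σ else 0)
      = if σ.cycleType = {Fintype.card α} then
        (cnt (Fintype.card α - 1) c : ℚ) * Fintype.card α else 0 := by
    intro σ
    have hiff := parts_card_one_iff hα σ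
    by_cases h : (parts σ).card = 1
    · rw [if_pos (by omega), if_pos (hiff.1 h), wt_cycle hα σ h]
      have : IsConj c σ := isConj_iff_cycleType_eq.2 (by rw [hc, hiff.1 h])
      obtain ⟨g, hg⟩ := isConj_iff.1 this
      rw [← hg, cnt_conj]
    · rw [if_neg (by omega), if_neg (fun k => h (hiff.2 k))]
  rw [sum_congr rfl (fun σ _ => e σ), ← sum_filter, sum_const,
    card_of_cycleType_singleton hα le_rfl, Nat.choose_self, mul_one, prod_mul_distrib,
    prod_const, card_range] at ht
  generalize hN : Fintype.card α = N at *
  obtain ⟨m, rfl⟩ : ∃ m, N = m + 2 := ⟨N - 2, by omega⟩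
  simp only [show m + 2 - 1 = m + 1 by omega, show m + 2 - 2 = m by omega] at *
  have hf : ∏ j ∈ range (m + 1), (((m + 2 : ℕ) : ℚ) - 1 - j) = (m + 1).factorial := by
    rw [← prod_range_reflect, ← prod_range_add_one_eq_factorial, Nat.cast_prod]
    refine prod_congr rfl fun j hj => ?_
    have : j ≤ m := by simpa [Nat.lt_succ_iff] using hj
    rw [show m + 1 - 1 - j = m - j by omega, Nat.cast_sub this]
    push_cast; ring
  rw [hf, nsmul_eq_mul, pow_succ] at ht
  have h1 : ((m + 1).factorial : ℚ) ≠ 0 := by exact_mod_cast Nat.factorial_ne_zero _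
  have h2 : ((m + 2 : ℕ) : ℚ) ≠ 0 := by exact_mod_cast (by omega : m + 2 ≠ 0)
  have h3 : (cnt (m + 1) c : ℚ) = ((m + 2 : ℕ) : ℚ) ^ m := by
    apply mul_right_cancel₀ h2
    apply mul_left_cancel₀ h1
    rw [ht]; ring
  exact_mod_cast h3

lemma card_fact (k : ℕ) : ∀ σ : Perm α, Nat.card {f : Fin k → Perm α //
    (∀ i, (f i).IsSwap) ∧ (List.ofFn f).reverse.prod = σ} = cnt k σ := by
  induction k with
  | zero =>
    intro σ
    simp only [cnt, List.ofFn_zero, List.reverse_nil, List.prod_nil, IsEmpty.forall_iff, true_and]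
    split_ifs with h
    · subst h
      simp
    · have : IsEmpty {f : Fin 0 → Perm α // 1 = σ} := ⟨fun f => h f.2.symm⟩
      simp
  | succ k ih =>
    intro σ
    have hext : ∀ p q : (Σ τ : {τ : Perm α // τ ∈ swaps α}, {f : Fin k → Perm α //
          (∀ i, (f i).IsSwap) ∧ (List.ofFn f).reverse.prod = τ.1 * σ}),
        p.1.1 = q.1.1 → p.2.1 = q.2.1 → p = q := by
      rintro ⟨⟨a, ha⟩, f, hf⟩ ⟨⟨b, hb⟩, g, hg⟩ h1 h2
      dsimp only at h1 h2
      subst h1 h2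
      rfl
    let e : {f : Fin (k + 1) → Perm α //
        (∀ i, (f i).IsSwap) ∧ (List.ofFn f).reverse.prod = σ} ≃
        Σ τ : {τ : Perm α // τ ∈ swaps α}, {f : Fin k → Perm α //
          (∀ i, (f i).IsSwap) ∧ (List.ofFn f).reverse.prod = τ.1 * σ} := {
      toFun := fun f => ⟨⟨f.1 (Fin.last k), mem_swaps.2 (f.2.1 _)⟩, fun i => f.1 i.castSucc,
        fun i => f.2.1 _, by
          have h := f.2.2
          rw [List.ofFn_succ'] at h
          simp only [List.concat_eq_append, List.reverse_append, List.reverse_singleton, List.singleton_append, List.prod_cons] at h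
          exact (swap_mul_self_mul (mem_swaps.2 (f.2.1 _)) _).symm.trans (congrArg _ h)⟩
      invFun := fun p => ⟨Fin.snoc (α := fun _ => Perm α) p.2.1 p.1.1, by
          intro i
          refine Fin.lastCases ?_ (fun i => ?_) i
          · rw [Fin.snoc_last]; exact mem_swaps.1 p.1.2
          · rw [Fin.snoc_castSucc]; exact p.2.2.1 i, by
          rw [List.ofFn_succ']
          simp only [List.concat_eq_append, List.reverse_append, List.reverse_singleton, List.singleton_append, List.prod_cons, Fin.snoc_last, Fin.snoc_castSucc]
          rw [p.2.2.2, swap_mul_self_mul p.1.2]⟩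
      left_inv := by
        rintro ⟨f, hf⟩
        apply Subtype.ext
        exact Fin.snoc_init_self f
      right_inv := by
        rintro ⟨⟨τ, hτ⟩, f, hf⟩
        have h1 : (Fin.snoc (α := fun _ => Perm α) f τ) (Fin.last k) = τ := Fin.snoc_last _ _
        have h2 : (fun i : Fin k => (Fin.snoc (α := fun _ => Perm α) f τ) i.castSucc) = f := by
          funext i; exact Fin.snoc_castSucc _ _ _
        exact hext _ _ h1 h2 }
    rw [Nat.card_congr e, Nat.card_sigma]
    simp only [cnt, ih]
    exact sum_coe_sort (swaps α) (fun τ => cnt k (τ * σ))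

end Denes



/-- Dénes: the number of minimal factorizations of the `n`-cycle
`(1 2 … n)` (realized as `finRotate n`) into `n − 1` transpositions, counting
different orderings as different, equals `n^(n−2)`.  A factorization
`τ_{n−1} ⋯ τ_1` is encoded as `f : Fin (n-1) → Perm (Fin n)` with `f i = τ_{i+1}`,
so the right-to-left product is `(List.ofFn f).reverse.prod`. -/
theorem denes_count_transposition_factorizations (n : ℕ) (hn : 2 ≤ n) :
    Nat.card {f : Fin (n - 1) → Equiv.Perm (Fin n) //
      (∀ i, (f i).IsSwap) ∧ (List.ofFn f).reverse.prod = finRotate n} =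
      n ^ (n - 2) := by
  rw [Denes.card_fact]
  have h := Denes.cnt_cycle (α := Fin n) (by simpa using hn) (finRotate n) (by
    obtain ⟨m, rfl⟩ : ∃ m, n = m + 2 := ⟨n - 2, by omega⟩
    rw [cycleType_finRotate, Fintype.card_fin])
  simpa only [Fintype.card_fin] using h
end

section
/- Let T(n) denote the number of equivalence classes of factorizations of the n-cycle (1 2 … n) into n − 1 transpositions, where two factorizations are equivalent if one is obtained from the other by swapping adjacent commuting factors. Then the generating function ξ(x) = 1 + ∑_{n≥2} T(n) x^{n−1} satisfies ξ = 1 + x ξ^3. -/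
/-- Equivalence of factorizations: generated by swapping two adjacent
commuting factors. -/
inductive FactEquiv {n : ℕ} : List (Equiv.Perm (Fin n)) → List (Equiv.Perm (Fin n)) → Prop
  | refl (l) : FactEquiv l l
  | swap (l₁ l₂ : List (Equiv.Perm (Fin n))) (a b : Equiv.Perm (Fin n)) (h : a * b = b * a) :
      FactEquiv (l₁ ++ a :: b :: l₂) (l₁ ++ b :: a :: l₂)
  | trans {l₁ l₂ l₃} : FactEquiv l₁ l₂ → FactEquiv l₂ l₃ → FactEquiv l₁ l₃

/-- Factorizations of the `n`-cycle `(1 2 … n)` into `n − 1` transpositions. -/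
def TransFact (n : ℕ) : Type :=
  {l : List (Equiv.Perm (Fin n)) //
    l.length = n - 1 ∧ (∀ σ ∈ l, σ.IsSwap) ∧ l.prod = finRotate n}

/-- `T n` = number of equivalence classes of factorizations of the `n`-cycle
into `n − 1` transpositions. -/
noncomputable def T (n : ℕ) : ℕ :=
  Nat.card (Quot (fun l₁ l₂ : TransFact n => FactEquiv l₁.1 l₂.1))

/-- The generating function `ξ(x) = 1 + ∑_{n≥2} T(n) x^(n−1)`. -/
noncomputable def xi : PowerSeries ℚ :=
  PowerSeries.mk (fun k => if k = 0 then (1 : ℚ) else (T (k + 1) : ℚ))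

namespace NCT

/-- The transposition of the two entries of `e`, as a function on `ℕ`. -/
def sw (e : ℕ × ℕ) (z : ℕ) : ℕ := if z = e.1 then e.2 else if z = e.2 then e.1 else z

/-- Right-to-left action of a list of transpositions. -/
def act : List (ℕ × ℕ) → ℕ → ℕ
  | [], z => z
  | e :: l, z => sw e (act l z)

theorem act_append (l r : List (ℕ × ℕ)) (z : ℕ) : act (l ++ r) z = act l (act r z) := by
  induction l with
  | nil => rfl
  | cons e l ih => simp [act, ih]

/-- Disjoint transpositions. -/
def Dj (e f : ℕ × ℕ) : Prop := e.1 ≠ f.1 ∧ e.1 ≠ f.2 ∧ e.2 ≠ f.1 ∧ e.2 ≠ f.2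

/-- Commutation equivalence of lists of pairs. -/
inductive CE : List (ℕ × ℕ) → List (ℕ × ℕ) → Prop
  | refl (l) : CE l l
  | swap (l₁ l₂ : List (ℕ × ℕ)) (e f : ℕ × ℕ) (h : Dj e f) :
      CE (l₁ ++ e :: f :: l₂) (l₁ ++ f :: e :: l₂)
  | trans {l₁ l₂ l₃} : CE l₁ l₂ → CE l₂ l₃ → CE l₁ l₃

theorem CE.append_left (u : List (ℕ × ℕ)) {l r} (h : CE l r) : CE (u ++ l) (u ++ r) := by
  induction h with
  | refl l => exact .refl _
  | swap l₁ l₂ e f h => simpa using CE.swap (u ++ l₁) l₂ e f h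
  | trans _ _ h1 h2 => exact h1.trans h2

theorem CE.append_right (u : List (ℕ × ℕ)) {l r} (h : CE l r) : CE (l ++ u) (r ++ u) := by
  induction h with
  | refl l => exact .refl _
  | swap l₁ l₂ e f h => simpa using CE.swap l₁ (l₂ ++ u) e f h
  | trans _ _ h1 h2 => exact h1.trans h2

theorem CE.append {l r l' r'} (h : CE l r) (h' : CE l' r') : CE (l ++ l') (r ++ r') :=
  (h.append_right l').trans (h'.append_left r)

theorem CE.length_eq {l r} (h : CE l r) : l.length = r.length := by
  induction h with
  | refl l => rfl
  | swap l₁ l₂ e f h => simp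
  | trans _ _ h1 h2 => exact h1.trans h2

theorem CE.move (x : ℕ × ℕ) (u v : List (ℕ × ℕ)) (h : ∀ e ∈ u, Dj x e) :
    CE (x :: (u ++ v)) (u ++ x :: v) := by
  induction u with
  | nil => exact .refl _
  | cons e u ih =>
    have h1 : CE (x :: e :: (u ++ v)) (e :: x :: (u ++ v)) :=
      CE.swap [] _ x e (h e (by simp))
    have h2 := CE.append_left [e] (ih (fun f hf => h f (by simp [hf])))
    exact h1.trans h2

/-- Stable sorting according to a key with values in `{0,1,2,3}`. -/
theorem CE.sort (key : ℕ × ℕ → ℕ) (hk : ∀ e, key e < 4) (l : List (ℕ × ℕ))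
    (h : l.Pairwise (fun e f => key f < key e → Dj e f)) :
    CE l (l.filter (fun e => key e = 0) ++ (l.filter (fun e => key e = 1) ++
      (l.filter (fun e => key e = 2) ++ l.filter (fun e => key e = 3)))) := by
  induction l with
  | nil => exact .refl _
  | cons x l ih =>
    rw [List.pairwise_cons] at h
    have h1 := CE.append_left [x] (ih h.2)
    refine CE.trans h1 ?_
    have hx := hk x
    have hl : ∀ c, c < key x → ∀ e ∈ l.filter (fun e => key e = c), Dj x e := by
      intro c hc e he
      simp only [List.mem_filter, decide_eq_true_eq] at he
      exact h.1 e he.1 (by omega)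
    rcases (by omega : key x = 0 ∨ key x = 1 ∨ key x = 2 ∨ key x = 3) with h0 | h0 | h0 | h0
    · simp only [List.filter_cons, h0]
      exact .refl _
    · simp only [List.filter_cons, h0]
      exact CE.move _ _ _ (hl 0 (by omega))
    · simp only [List.filter_cons, h0]
      have := CE.move x (l.filter (fun e => key e = 0) ++ l.filter (fun e => key e = 1))
        (l.filter (fun e => key e = 2) ++ l.filter (fun e => key e = 3)) (by
          intro e he
          rw [List.mem_append] at he
          rcases he with he | he
          · exact hl 0 (by omega) e he
          · exact hl 1 (by omega) e he)
      simpa using this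
    · simp only [List.filter_cons, h0]
      have := CE.move x (l.filter (fun e => key e = 0) ++ (l.filter (fun e => key e = 1) ++
        l.filter (fun e => key e = 2))) (l.filter (fun e => key e = 3)) (by
          intro e he
          simp only [List.mem_append] at he
          rcases he with he | he | he
          · exact hl 0 (by omega) e he
          · exact hl 1 (by omega) e he
          · exact hl 2 (by omega) e he)
      simpa using this

/-- A list of `r` transpositions merges at most `r` points. -/
theorem merge (l : List (ℕ × ℕ)) : ∃ (f : ℕ → ℕ) (S : Finset ℕ), S.card ≤ l.length ∧
    (∀ e ∈ l, f e.1 = f e.2) ∧ ∀ x, x ∉ S → f x = x := by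
  induction l with
  | nil => exact ⟨id, ∅, by simp, by simp, by simp⟩
  | cons e l ih =>
    obtain ⟨f, S, hS, h1, h2⟩ := ih
    refine ⟨fun x => if f x = f e.1 then f e.2 else f x, insert (f e.1) S, ?_, ?_, ?_⟩
    · have := Finset.card_insert_le (f e.1) S
      simp only [List.length_cons]; omega
    · intro g hg
      rcases List.mem_cons.1 hg with rfl | hg
      · simp
      · simp [h1 g hg]
    · intro x hx
      simp only [Finset.mem_insert, not_or] at hx
      have := h2 x hx.2
      simp only [this]
      rw [if_neg hx.1]

theorem act_inv (f : ℕ → ℕ) (l : List (ℕ × ℕ)) (h : ∀ e ∈ l, f e.1 = f e.2) (x : ℕ) :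
    f (act l x) = f x := by
  induction l with
  | nil => rfl
  | cons e l ih =>
    have ih := ih (fun g hg => h g (by simp [hg]))
    have he := h e (by simp)
    simp only [act, sw]
    split_ifs with h1 h2
    · rw [← he, ← h1, ih]
    · rw [he, ← h2, ih]
    · exact ih

theorem const_of_step (f : ℕ → ℕ) (u : ℕ) (r : ℕ) (h : ∀ i, u ≤ i → i < u + r → f (i + 1) = f i) :
    ∀ i, u ≤ i → i ≤ u + r → f i = f u := by
  intro i hi
  induction i, hi using Nat.le_induction with
  | base => intro _; rfl
  | succ i hi ih => intro h'; rw [h i hi (by omega), ih (by omega)]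

theorem card_le (f : ℕ → ℕ) (S : Finset ℕ) (u r : ℕ) (hf : ∀ x, x ∉ S → f x = x)
    (h : ∀ i, u ≤ i → i ≤ u + r → f i = f u) : r ≤ S.card := by
  have : (Finset.Icc u (u + r)).erase (f u) ⊆ S := by
    intro x hx
    simp only [Finset.mem_erase, Finset.mem_Icc] at hx
    by_contra hc
    exact hx.1 ((hf x hc).symm.trans (h x hx.2.1 hx.2.2))
  have h1 := Finset.card_le_card this
  have h2 := Finset.pred_card_le_card_erase (s := Finset.Icc u (u + r)) (a := f u)
  simp only [Nat.card_Icc] at h2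
  omega

theorem length_ge (l : List (ℕ × ℕ)) (u r : ℕ)
    (h : ∀ i, u ≤ i → i < u + r → act l i = i + 1) : r ≤ l.length := by
  obtain ⟨f, S, hS, h1, h2⟩ := merge l
  refine le_trans (card_le f S u r h2 (const_of_step f u r ?_)) hS
  intro i hi hi'
  rw [← h i hi hi', act_inv f l h1]

/-- Splitting lemma: no transposition crosses. -/
theorem split (l : List (ℕ × ℕ)) (u q r : ℕ) (hq : u < q) (hq' : q ≤ u + r) (hl : l.length < r)
    (h : ∀ i, u ≤ i → i < u + r → i + 1 ≠ q → act l i = i + 1) (e : ℕ × ℕ) (he : e ∈ l)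
    (h1 : u ≤ e.1) (h2 : e.1 ≤ u + r) (h3 : u ≤ e.2) (h4 : e.2 ≤ u + r) :
    (e.1 < q ↔ e.2 < q) := by
  obtain ⟨f, S, hS, hf, hf'⟩ := merge l
  have c1 := const_of_step f u (q - 1 - u) (by
    intro i hi hi'
    rw [← h i hi (by omega) (by omega), act_inv f l hf])
  have c2 := const_of_step f q (u + r - q) (by
    intro i hi hi'
    rw [← h i (by omega) (by omega) (by omega), act_inv f l hf])
  by_contra hc
  have key : f q = f u := by
    have := hf e he
    by_cases hx : e.1 < q
    · have hy : ¬ e.2 < q := fun hy => hc ⟨fun _ => hy, fun _ => hx⟩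
      rw [← c1 e.1 h1 (by omega), this, c2 e.2 (by omega) (by omega)]
    · have hy : e.2 < q := by
        by_contra hy
        exact hc ⟨fun h => absurd h hx, fun h => absurd h hy⟩
      rw [← c1 e.2 h3 (by omega), ← this, c2 e.1 (by omega) (by omega)]
  have := card_le f S u r hf' (by
    intro i hi hi'
    by_cases hx : i < q
    · exact c1 i hi (by omega)
    · rw [c2 i (by omega) (by omega), key])
  omega

theorem act_filter (S : ℕ → Prop) (c : ℕ × ℕ → Bool) (l : List (ℕ × ℕ))
    (h1 : ∀ e ∈ l, ∀ x, S x → S (sw e x))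
    (h2 : ∀ e ∈ l, c e = false → ∀ x, S x → sw e x = x) (x : ℕ) (hx : S x) :
    S (act l x) ∧ act (l.filter c) x = act l x := by
  induction l with
  | nil => exact ⟨hx, rfl⟩
  | cons e l ih =>
    obtain ⟨i1, i2⟩ := ih (fun g hg => h1 g (by simp [hg])) (fun g hg => h2 g (by simp [hg]))
    refine ⟨h1 e (by simp) _ i1, ?_⟩
    rw [List.filter_cons]
    split_ifs with hc
    · simp [act, i2]
    · simp only [act]
      rw [h2 e (by simp) (by simpa using hc) _ i1, i2]

theorem act_mem (S : ℕ → Prop) (l : List (ℕ × ℕ))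
    (h1 : ∀ e ∈ l, ∀ x, S x → S (sw e x)) (x : ℕ) (hx : S x) : S (act l x) := by
  induction l with
  | nil => exact hx
  | cons e l ih => exact h1 e (by simp) _ (ih (fun g hg => h1 g (by simp [hg])))

theorem act_conj (s : ℕ × ℕ) (l : List (ℕ × ℕ)) (z : ℕ) :
    act (l.map (fun e => (sw s e.1, sw s e.2))) z = sw s (act l (sw s z)) := by
  have inv : ∀ z, sw s (sw s z) = z := by intro z; simp only [sw]; grind
  induction l with
  | nil => simp [act, inv]
  | cons e l ih =>
    simp only [List.map_cons, act, ih]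
    generalize act l (sw s z) = w
    simp only [sw]; grind

/-- Ternary trees. -/
inductive TT
  | leaf : TT
  | node : TT → TT → TT → TT

/-- Number of nodes. -/
def TT.size : TT → ℕ
  | .leaf => 0
  | .node t₁ t₂ t₃ => t₁.size + t₂.size + t₃.size + 1

/-- Canonical factorization attached to a ternary tree. -/
def canon : TT → ℕ → List (ℕ × ℕ)
  | .leaf, _ => []
  | .node t₁ t₂ t₃, a =>
    canon t₂ (a + t₁.size + 1) ++ ([(a, a + t₁.size + 1 + t₂.size)] ++
      (canon t₁ a ++ canon t₃ (a + t₁.size + 1 + t₂.size)))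

theorem canon_length (t : TT) : ∀ a, (canon t a).length = t.size := by
  induction t with
  | leaf => intro a; rfl
  | node t₁ t₂ t₃ h1 h2 h3 => intro a; simp [canon, TT.size, h1, h2, h3]; omega

theorem canon_mem (t : TT) : ∀ a, ∀ e ∈ canon t a, a ≤ e.1 ∧ e.1 < e.2 ∧ e.2 ≤ a + t.size := by
  induction t with
  | leaf => intro a e he; simp [canon] at he
  | node t₁ t₂ t₃ h1 h2 h3 =>
    intro a e he
    simp only [canon, List.mem_append, List.mem_singleton] at he
    simp only [TT.size]
    rcases he with he | he | he | he
    · have := h2 _ e he; omega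
    · subst he; simp only; omega
    · have := h1 _ e he; omega
    · have := h3 _ e he; omega

theorem canon_act (t : TT) : ∀ a i, act (canon t a) i =
    if a ≤ i ∧ i < a + t.size then i + 1 else if i = a + t.size then a else i := by
  induction t with
  | leaf => intro a i; simp only [canon, act, TT.size]; grind
  | node t₁ t₂ t₃ h1 h2 h3 =>
    intro a i
    simp only [canon, act_append, h1, h2, h3, act, TT.size, sw]
    grind

theorem canon_inj (t : TT) : ∀ t' a, (∀ e, e ∈ canon t a ↔ e ∈ canon t' a) → t = t' := by
  -- one-sided comparisons
  have hm : ∀ (t₁ t₂ t₃ t₁' t₂' t₃' : TT) (a : ℕ),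
      (∀ e, e ∈ canon (.node t₁ t₂ t₃) a ↔ e ∈ canon (.node t₁' t₂' t₃') a) →
      t₁.size + t₂.size ≤ t₁'.size + t₂'.size := by
    intro t₁ t₂ t₃ t₁' t₂' t₃' a h
    have := (h (a, a + t₁.size + 1 + t₂.size)).1 (by simp [canon])
    simp only [canon, List.mem_append, List.mem_singleton] at this
    rcases this with he | he | he | he
    · have := canon_mem _ _ _ he; simp only at this; omega
    · simp only [Prod.mk.injEq] at he; omega
    · have := canon_mem _ _ _ he; simp only at this; omega
    · have := canon_mem _ _ _ he; simp only at this; omega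
  have hp : ∀ (t₁ t₂ t₃ t₁' t₂' t₃' : TT) (a : ℕ),
      (∀ e, e ∈ canon (.node t₁ t₂ t₃) a ↔ e ∈ canon (.node t₁' t₂' t₃') a) →
      t₁.size + t₂.size = t₁'.size + t₂'.size → t₁'.size ≤ t₁.size := by
    intro t₁ t₂ t₃ t₁' t₂' t₃' a h hs
    by_contra hc
    have h1 := act_mem (fun x => x ≤ a + t₁.size) (canon t₁' a) (by
      intro e he x hx
      have b := canon_mem _ _ _ he
      have he' := (h e).2 (by simp [canon, he])
      simp only [canon, List.mem_append, List.mem_singleton] at he'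
      have hcl : e.2 ≤ a + t₁.size ∨ a + t₁.size < e.1 := by
        rcases he' with he | he | he | he
        · have := canon_mem _ _ _ he; omega
        · subst he; simp only at b; omega
        · have := canon_mem _ _ _ he; omega
        · have := canon_mem _ _ _ he; omega
      simp only [sw]
      split_ifs <;> omega) (a + t₁.size) (le_refl _)
    simp only [canon_act] at h1
    rw [if_pos (by omega)] at h1
    omega
  induction t with
  | leaf =>
    intro t' a h
    cases t' with
    | leaf => rfl
    | node t₁' t₂' t₃' =>
      exact absurd ((h (a, a + t₁'.size + 1 + t₂'.size)).2 (by simp [canon])) (by simp [canon])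
  | node t₁ t₂ t₃ ih1 ih2 ih3 =>
    intro t' a h
    cases t' with
    | leaf =>
      exact absurd ((h (a, a + t₁.size + 1 + t₂.size)).1 (by simp [canon])) (by simp [canon])
    | node t₁' t₂' t₃' =>
      have e1 : t₁.size + t₂.size = t₁'.size + t₂'.size :=
        le_antisymm (hm _ _ _ _ _ _ a h) (hm _ _ _ _ _ _ a (fun e => (h e).symm))
      have e2 : t₁.size = t₁'.size :=
        le_antisymm (hp _ _ _ _ _ _ a (fun e => (h e).symm) e1.symm) (hp _ _ _ _ _ _ a h e1)
      have e3 : t₂.size = t₂'.size := by omega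
      have g : ∀ e, (e ∈ canon t₁ a ↔ e ∈ canon t₁' a) ∧
          (e ∈ canon t₂ (a + t₁.size + 1) ↔ e ∈ canon t₂' (a + t₁.size + 1)) ∧
          (e ∈ canon t₃ (a + t₁.size + 1 + t₂.size) ↔
            e ∈ canon t₃' (a + t₁.size + 1 + t₂.size)) := by
        intro e
        have he := h e
        simp only [canon, List.mem_append, List.mem_singleton, ← e2, ← e3] at he
        have b1 := canon_mem t₁ a e
        have b2 := canon_mem t₂ (a + t₁.size + 1) e
        have b3 := canon_mem t₃ (a + t₁.size + 1 + t₂.size) e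
        have b1' := canon_mem t₁' a e
        have b2' := canon_mem t₂' (a + t₁.size + 1) e
        have b3' := canon_mem t₃' (a + t₁.size + 1 + t₂.size) e
        have b4 : e = (a, a + t₁.size + 1 + t₂.size) →
          e.1 = a ∧ e.2 = a + t₁.size + 1 + t₂.size := by rintro rfl; simp
        rw [← e2] at b1'
        rw [← e3] at b2'
        generalize (e ∈ canon t₁ a) = P1 at *
        generalize (e ∈ canon t₂ _) = P2 at *
        generalize (e ∈ canon t₃ _) = P3 at *
        generalize (e ∈ canon t₁' a) = P1' at *
        generalize (e ∈ canon t₂' _) = P2' at *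
        generalize (e ∈ canon t₃' _) = P3' at *
        clear h hm hp ih1 ih2 ih3
        refine ⟨?_, ?_, ?_⟩ <;> constructor <;> intro hh <;> grind
      rw [ih1 _ _ (fun e => (g e).1), ih2 _ _ (fun e => (g e).2.1), ih3 _ _ (fun e => (g e).2.2)]

/-- Minimal factorizations of the cycle on `[a, a+k]`. -/
def IsF (a k : ℕ) (l : List (ℕ × ℕ)) : Prop :=
  (∀ e ∈ l, a ≤ e.1 ∧ e.1 < e.2 ∧ e.2 ≤ a + k) ∧ l.length = k ∧
    ∀ i, a ≤ i → i < a + k → act l i = i + 1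

theorem first_split (a : ℕ) (l : List (ℕ × ℕ)) (h : ∀ e ∈ l, a ≤ e.1 ∧ e.1 < e.2)
    (hne : act l a ≠ a) : ∃ L m R, l = L ++ (a, m) :: R ∧ ∀ e ∈ L, a < e.1 := by
  induction l with
  | nil => exact absurd rfl hne
  | cons e l ih =>
    by_cases he : e.1 = a
    · exact ⟨[], e.2, l, by simp [← he], by simp⟩
    · have hb := h e (by simp)
      obtain ⟨L, m, R, h1, h2⟩ := ih (fun g hg => h g (by simp [hg])) (by
        intro hc
        apply hne
        simp only [act, sw, hc]
        split_ifs <;> omega)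
      refine ⟨e :: L, m, R, by simp [h1], ?_⟩
      intro g hg
      rcases List.mem_cons.1 hg with rfl | hg
      · omega
      · exact h2 g hg

/-- Sorting key. -/
def key (a p m : ℕ) (e : ℕ × ℕ) : ℕ :=
  if p ≤ e.1 ∧ e.2 ≤ m then 0 else if e.1 = a ∧ e.2 = m then 1 else if e.2 < p then 2 else 3

theorem key_spec (a p m : ℕ) (e : ℕ × ℕ) :
    (key a p m e = 0 ∧ p ≤ e.1 ∧ e.2 ≤ m) ∨
    (key a p m e = 1 ∧ ¬ (p ≤ e.1 ∧ e.2 ≤ m) ∧ e.1 = a ∧ e.2 = m) ∨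
    (key a p m e = 2 ∧ ¬ (p ≤ e.1 ∧ e.2 ≤ m) ∧ ¬ (e.1 = a ∧ e.2 = m) ∧ e.2 < p) ∨
    (key a p m e = 3 ∧ ¬ (p ≤ e.1 ∧ e.2 ≤ m) ∧ ¬ (e.1 = a ∧ e.2 = m) ∧ ¬ e.2 < p) := by
  unfold key
  split_ifs <;> omega

theorem main (k : ℕ) : ∀ a l, IsF a k l → ∃ t : TT, t.size = k ∧ CE l (canon t a) := by
  induction k using Nat.strong_induction_on with
  | _ k IH =>
  intro a l hl
  obtain ⟨hb, hlen, hact⟩ := hl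
  rcases Nat.eq_zero_or_pos k with rfl | hk
  · refine ⟨.leaf, rfl, ?_⟩
    rw [List.length_eq_zero_iff.1 hlen]
    exact .refl _
  obtain ⟨L, m, R, rfl, hL⟩ := first_split a l (fun e he => ⟨(hb e he).1, (hb e he).2.1⟩)
    (by rw [hact a le_rfl (by omega)]; omega)
  have hbL : ∀ e ∈ L, a < e.1 ∧ e.1 < e.2 ∧ e.2 ≤ a + k := fun e he =>
    ⟨hL e he, (hb e (by simp [he])).2⟩
  have hbR : ∀ e ∈ R, a ≤ e.1 ∧ e.1 < e.2 ∧ e.2 ≤ a + k := fun e he =>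
    hb e (by simp [he])
  have hm : a < m ∧ m ≤ a + k := (hb (a, m) (by simp)).2
  have hP : ∀ i, a ≤ i → i < a + k → act L (sw (a, m) (act R i)) = i + 1 := by
    intro i h1 h2
    have := hact i h1 h2
    rwa [act_append] at this
  have hlen' : L.length + R.length + 1 = k := by
    rw [← hlen]; simp; omega
  have hLa : act L a = a := by
    refine act_mem (fun x => x = a) L ?_ a rfl
    intro e he x hx
    have := hbL e he
    simp only [sw]
    split_ifs <;> omega
  obtain ⟨p, hp⟩ : ∃ p, p = act L m := ⟨_, rfl⟩
  have hpb : a < p ∧ p ≤ a + k := by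
    rw [hp]
    refine act_mem (fun x => a < x ∧ x ≤ a + k) L ?_ m hm
    intro e he x hx
    have := hbL e he
    simp only [sw]
    split_ifs <;> omega
  -- first splitting
  have hQ : ∀ i, a ≤ i → i < a + k → i + 1 ≠ p → act (L ++ R) i = i + 1 := by
    intro i h1 h2 h3
    have := hP i h1 h2
    rw [act_append]
    simp only [sw] at this
    split_ifs at this with c1 c2
    · omega
    · omega
    · exact this
  have s1 : ∀ e ∈ L ++ R, e.1 < p ↔ e.2 < p := by
    intro e he
    have hbe : a ≤ e.1 ∧ e.1 < e.2 ∧ e.2 ≤ a + k := by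
      rcases List.mem_append.1 he with he | he
      · have := hbL e he; omega
      · exact hbR e he
    exact split (L ++ R) a p k hpb.1 hpb.2 (by simp; omega) hQ e he
      (by omega) (by omega) (by omega) (by omega)
  -- second splitting
  have hQ2 : ∀ i, a ≤ i → i < a + k → i + 1 ≠ m →
      act (L.map (fun e => (sw (a, m) e.1, sw (a, m) e.2)) ++ R) i = i + 1 := by
    intro i h1 h2 h3
    rw [act_append, act_conj, hP i h1 h2]
    simp only [sw]
    split_ifs <;> omega
  have s2L : ∀ e ∈ L, e.2 ≤ m ∨ m < e.1 := by
    intro e he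
    have hbe := hbL e he
    have := split _ a m k hm.1 hm.2 (by simp; omega) hQ2 (sw (a, m) e.1, sw (a, m) e.2)
      (List.mem_append_left _ (List.mem_map.2 ⟨e, he, rfl⟩))
      (by simp only [sw]; split_ifs <;> omega) (by simp only [sw]; split_ifs <;> omega)
      (by simp only [sw]; split_ifs <;> omega) (by simp only [sw]; split_ifs <;> omega)
    simp only [sw] at this
    split_ifs at this <;> omega
  have s2R : ∀ e ∈ R, e.2 < m ∨ m ≤ e.1 := by
    intro e he
    have hbe := hbR e he
    have := split _ a m k hm.1 hm.2 (by simp; omega) hQ2 e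
      (List.mem_append_right _ he) (by omega) (by omega) (by omega) (by omega)
    omega
  have hpm : p ≤ m := by
    by_contra hc
    have := act_mem (fun x => x < p) L (by
      intro e he x hx
      have := s1 e (by simp [he])
      simp only [sw]
      split_ifs <;> omega) m (by omega)
    simp only [← hp] at this
    omega
  -- final classification
  have cL : ∀ e ∈ L, a < e.1 ∧ e.1 < e.2 ∧ e.2 ≤ a + k ∧ (e.2 < p ∨ p ≤ e.1) ∧
      (e.2 ≤ m ∨ m < e.1) := by
    intro e he
    have h1 := hbL e he
    have h2 := s1 e (by simp [he])
    have h3 := s2L e he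
    omega
  have cR : ∀ e ∈ R, a ≤ e.1 ∧ e.1 < e.2 ∧ e.2 ≤ a + k ∧ (e.2 < p ∨ p ≤ e.1) ∧
      (e.2 < m ∨ m ≤ e.1) := by
    intro e he
    have h1 := hbR e he
    have h2 := s1 e (by simp [he])
    have h3 := s2R e he
    omega
  clear s1 s2L s2R hQ hQ2 hb hbL hbR hL hact
  have hks : key a p m (a, m) = 1 := by
    have := key_spec a p m (a, m)
    dsimp only at this
    omega
  have hsort := CE.sort (key a p m) (by intro e; have := key_spec a p m e; omega)
    (L ++ (a, m) :: R) (by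
      rw [List.pairwise_append, List.pairwise_cons]
      refine ⟨?_, ⟨?_, ?_⟩, ?_⟩
      · refine List.pairwise_iff_forall_sublist.2 (fun {e f} hef hlt => ?_)
        have h1 := cL e (hef.subset (by simp))
        have h2 := cL f (hef.subset (by simp))
        have k1 := key_spec a p m e
        have k2 := key_spec a p m f
        simp only [Dj]
        omega
      · intro f hf hlt
        have h2 := cR f hf
        have k1 := hks
        have k2 := key_spec a p m f
        simp only [Dj]
        omega
      · refine List.pairwise_iff_forall_sublist.2 (fun {e f} hef hlt => ?_)
        have h1 := cR e (hef.subset (by simp))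
        have h2 := cR f (hef.subset (by simp))
        have k1 := key_spec a p m e
        have k2 := key_spec a p m f
        simp only [Dj]
        omega
      · intro e he f hf hlt
        have h1 := cL e he
        rcases List.mem_cons.1 hf with rfl | hf
        · have k1 := key_spec a p m e
          have k2 := hks
          simp only [Dj]
          omega
        · have h2 := cR f hf
          have k1 := key_spec a p m e
          have k2 := key_spec a p m f
          simp only [Dj]
          omega)
  have hf1 : (L ++ (a, m) :: R).filter (fun e => key a p m e = 1) = [(a, m)] := by
    rw [List.filter_append, List.filter_cons, if_pos (by simp [hks])]
    rw [List.filter_eq_nil_iff.2, List.filter_eq_nil_iff.2]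
    · rfl
    · intro e he
      have := cR e he
      have := key_spec a p m e
      simp only [decide_eq_true_eq]
      omega
    · intro e he
      have := cL e he
      have := key_spec a p m e
      simp only [decide_eq_true_eq]
      omega
  have hfil : ∀ c, c ≠ 1 → (L ++ (a, m) :: R).filter (fun e => key a p m e = c) =
      L.filter (fun e => key a p m e = c) ++ R.filter (fun e => key a p m e = c) := by
    intro c hc
    rw [List.filter_append, List.filter_cons, if_neg (by simp [hks, Ne.symm hc])]
  rw [hf1, hfil 0 (by omega), hfil 2 (by omega), hfil 3 (by omega)] at hsort
  have hlsum := hsort.length_eq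
  -- the three actions
  have a2 : ∀ i, p ≤ i → i < p + (m - p) → act (L.filter (fun e => key a p m e = 0) ++
      R.filter (fun e => key a p m e = 0)) i = i + 1 := by
    intro i h1 h2
    obtain ⟨g1, g2⟩ := act_filter (fun x => p ≤ x ∧ x < m) (fun e => key a p m e = 0) R
      (by
        intro e he x hx
        have := cR e he
        simp only [sw]; split_ifs <;> omega)
      (by
        intro e he hke x hx
        have := cR e he
        simp only [decide_eq_false_iff_not] at hke
        have := key_spec a p m e
        simp only [sw]; split_ifs <;> omega) i (by omega)
    obtain ⟨g3, g4⟩ := act_filter (fun x => p ≤ x ∧ x ≤ m) (fun e => key a p m e = 0) L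
      (by
        intro e he x hx
        have := cL e he
        simp only [sw]; split_ifs <;> omega)
      (by
        intro e he hke x hx
        have := cL e he
        simp only [decide_eq_false_iff_not] at hke
        have := key_spec a p m e
        simp only [sw]; split_ifs <;> omega) (act R i) (by omega)
    rw [act_append, g2, g4]
    have := hP i (by omega) (by omega)
    rwa [show sw (a, m) (act R i) = act R i by simp only [sw]; split_ifs <;> omega] at this
  have a1 : ∀ i, a ≤ i → i < a + (p - 1 - a) → act (L.filter (fun e => key a p m e = 2) ++
      R.filter (fun e => key a p m e = 2)) i = i + 1 := by
    intro i h1 h2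
    obtain ⟨g1, g2⟩ := act_filter (fun x => a ≤ x ∧ x < p) (fun e => key a p m e = 2) R
      (by
        intro e he x hx
        have := cR e he
        simp only [sw]; split_ifs <;> omega)
      (by
        intro e he hke x hx
        have := cR e he
        simp only [decide_eq_false_iff_not] at hke
        have := key_spec a p m e
        simp only [sw]; split_ifs <;> omega) i (by omega)
    obtain ⟨g3, g4⟩ := act_filter (fun x => a ≤ x ∧ x < p) (fun e => key a p m e = 2) L
      (by
        intro e he x hx
        have := cL e he
        simp only [sw]; split_ifs <;> omega)
      (by
        intro e he hke x hx
        have := cL e he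
        simp only [decide_eq_false_iff_not] at hke
        have := key_spec a p m e
        simp only [sw]; split_ifs <;> omega) (act R i) (by omega)
    rw [act_append, g2, g4]
    have := hP i (by omega) (by omega)
    simp only [sw] at this
    split_ifs at this with c1 c2
    · omega
    · omega
    · exact this
  have a3 : ∀ i, m ≤ i → i < m + (a + k - m) → act (L.filter (fun e => key a p m e = 3) ++
      R.filter (fun e => key a p m e = 3)) i = i + 1 := by
    intro i h1 h2
    obtain ⟨g1, g2⟩ := act_filter (fun x => m ≤ x) (fun e => key a p m e = 3) R
      (by
        intro e he x hx
        have := cR e he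
        simp only [sw]; split_ifs <;> omega)
      (by
        intro e he hke x hx
        have := cR e he
        simp only [decide_eq_false_iff_not] at hke
        have := key_spec a p m e
        simp only [sw]; split_ifs <;> omega) i (by omega)
    have hne : act R i ≠ m := by
      intro hc
      have := hP i (by omega) (by omega)
      rw [hc, show sw (a, m) m = a by simp only [sw]; split_ifs <;> omega, hLa] at this
      omega
    obtain ⟨g3, g4⟩ := act_filter (fun x => m < x) (fun e => key a p m e = 3) L
      (by
        intro e he x hx
        have := cL e he
        simp only [sw]; split_ifs <;> omega)
      (by
        intro e he hke x hx
        have := cL e he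
        simp only [decide_eq_false_iff_not] at hke
        have := key_spec a p m e
        simp only [sw]; split_ifs <;> omega) (act R i) (by omega)
    rw [act_append, g2, g4]
    have := hP i (by omega) (by omega)
    rwa [show sw (a, m) (act R i) = act R i by simp only [sw]; split_ifs <;> omega] at this
  have l1 := length_ge _ _ _ a1
  have l2 := length_ge _ _ _ a2
  have l3 := length_ge _ _ _ a3
  rw [List.length_append (as := List.filter (fun e => key a p m e = 0) L ++ _),
    List.length_append (as := [(a, m)]),
    List.length_append (as := List.filter (fun e => key a p m e = 2) L ++ _), hlen,
    List.length_singleton] at hlsum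
  have hmem : ∀ c, ∀ e ∈ L.filter (fun e => key a p m e = c) ++
      R.filter (fun e => key a p m e = c), key a p m e = c ∧ (e ∈ L ∨ e ∈ R) := by
    intro c e he
    simp only [List.mem_append, List.mem_filter, decide_eq_true_eq] at he
    tauto
  obtain ⟨t₁, z1, q1⟩ := IH (p - 1 - a) (by omega) a _ ⟨by
    intro e he
    obtain ⟨h1, h2 | h2⟩ := hmem 2 e he
    · have := cL e h2
      have := key_spec a p m e
      omega
    · have := cR e h2
      have := key_spec a p m e
      omega, by omega, a1⟩
  obtain ⟨t₂, z2, q2⟩ := IH (m - p) (by omega) p _ ⟨by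
    intro e he
    obtain ⟨h1, h2 | h2⟩ := hmem 0 e he
    · have := cL e h2
      have := key_spec a p m e
      omega
    · have := cR e h2
      have := key_spec a p m e
      omega, by omega, a2⟩
  obtain ⟨t₃, z3, q3⟩ := IH (a + k - m) (by omega) m _ ⟨by
    intro e he
    obtain ⟨h1, h2 | h2⟩ := hmem 3 e he
    · have := cL e h2
      have := key_spec a p m e
      omega
    · have := cR e h2
      have := key_spec a p m e
      omega, by omega, a3⟩
  refine ⟨.node t₁ t₂ t₃, by simp only [TT.size]; omega, hsort.trans ?_⟩
  simp only [canon]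
  rw [show a + t₁.size + 1 = p by omega, show p + t₂.size = m by omega]
  exact q2.append ((CE.refl _).append (q1.append q3))

end NCT

namespace NCT

theorem FactEquiv_mem {n : ℕ} {l r : List (Equiv.Perm (Fin n))} (h : FactEquiv l r) :
    ∀ σ, σ ∈ l ↔ σ ∈ r := by
  induction h with
  | refl l => intro σ; rfl
  | swap l₁ l₂ a b h => intro σ; simp only [List.mem_append, List.mem_cons]; tauto
  | trans _ _ h1 h2 => intro σ; rw [h1, h2]

/-- The transposition of `Fin (k+1)` given by a pair. -/
def toFin (k : ℕ) (e : ℕ × ℕ) : Equiv.Perm (Fin (k + 1)) :=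
  Equiv.swap (Fin.ofNat (k + 1) e.1) (Fin.ofNat (k + 1) e.2)

theorem ofNat_val {k x : ℕ} (h : x ≤ k) : (Fin.ofNat (k + 1) x).val = x := by
  simp [Fin.ofNat, Nat.mod_eq_of_lt (Nat.lt_succ_of_le h)]

theorem toFin_val (k : ℕ) (e : ℕ × ℕ) (h1 : e.1 ≤ k) (h2 : e.2 ≤ k) (i : Fin (k + 1)) :
    (toFin k e i).val = sw e i.val := by
  have e1 := ofNat_val h1
  have e2 := ofNat_val h2
  simp only [toFin, Equiv.swap_apply_def, sw, Fin.ext_iff, e1, e2]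
  split_ifs <;> simp only [e1, e2]

theorem prod_val (k : ℕ) (l : List (ℕ × ℕ)) (h : ∀ e ∈ l, e.1 ≤ k ∧ e.2 ≤ k) (i : Fin (k + 1)) :
    ((l.map (toFin k)).prod i).val = act l i.val := by
  induction l with
  | nil => rfl
  | cons e l ih =>
    have he := h e (by simp)
    simp only [List.map_cons, List.prod_cons, Equiv.Perm.mul_apply, act]
    rw [toFin_val k e he.1 he.2, ih (fun g hg => h g (by simp [hg]))]

theorem toFin_comm (k : ℕ) (e f : ℕ × ℕ) (he : e.1 ≤ k ∧ e.2 ≤ k) (hf : f.1 ≤ k ∧ f.2 ≤ k)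
    (h : Dj e f) : toFin k e * toFin k f = toFin k f * toFin k e := by
  ext i
  simp only [Equiv.Perm.mul_apply]
  rw [toFin_val k e he.1 he.2, toFin_val k f hf.1 hf.2, toFin_val k f hf.1 hf.2,
    toFin_val k e he.1 he.2]
  simp only [sw, Dj] at *
  grind

theorem CE.mem {l r} (h : CE l r) : ∀ e, e ∈ l ↔ e ∈ r := by
  induction h with
  | refl l => intro e; rfl
  | swap l₁ l₂ e f h => intro g; simp only [List.mem_append, List.mem_cons]; tauto
  | trans _ _ h1 h2 => intro e; rw [h1, h2]

theorem CE.toFactEquiv (k : ℕ) {l r} (h : CE l r) (hl : ∀ e ∈ l, e.1 ≤ k ∧ e.2 ≤ k) :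
    FactEquiv (l.map (toFin k)) (r.map (toFin k)) := by
  induction h with
  | refl l => exact .refl _
  | swap l₁ l₂ e f h =>
    simp only [List.map_append, List.map_cons]
    exact .swap _ _ _ _ (toFin_comm k e f (hl e (by simp)) (hl f (by simp)) h)
  | trans h1 h2 i1 i2 => exact (i1 hl).trans (i2 (fun e he => hl e ((h1.mem e).2 he)))

theorem toFin_inj (k : ℕ) (e f : ℕ × ℕ) (he : e.1 < e.2 ∧ e.2 ≤ k) (hf : f.1 < f.2 ∧ f.2 ≤ k)
    (h : toFin k e = toFin k f) : e = f := by
  have key : ∀ x, x ≤ k → sw e x = sw f x := by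
    intro x hx
    rw [← ofNat_val hx, ← toFin_val k e (by omega) (by omega),
      ← toFin_val k f (by omega) (by omega), h]
  have h1 := key e.1 (by omega)
  have h2 := key e.2 (by omega)
  simp only [sw] at h1 h2
  ext <;> grind

theorem lift_list (k : ℕ) (l : List (Equiv.Perm (Fin (k + 1)))) (h : ∀ σ ∈ l, σ.IsSwap) :
    ∃ q : List (ℕ × ℕ), q.map (toFin k) = l ∧ ∀ e ∈ q, e.1 < e.2 ∧ e.2 ≤ k := by
  induction l with
  | nil => exact ⟨[], rfl, by simp⟩
  | cons σ l ih =>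
    obtain ⟨q, h1, h2⟩ := ih (fun g hg => h g (by simp [hg]))
    obtain ⟨x, y, hxy, rfl⟩ := h σ (by simp)
    have hx : Fin.ofNat (k + 1) x.val = x := by simp
    have hy : Fin.ofNat (k + 1) y.val = y := by simp
    have hxy' : x.val ≠ y.val := fun hc => hxy (Fin.ext hc)
    rcases lt_or_gt_of_ne hxy' with hlt | hlt
    · refine ⟨(x.val, y.val) :: q, by simp only [List.map_cons, toFin, hx, hy, ← h1], ?_⟩
      intro e he
      rcases List.mem_cons.1 he with rfl | he
      · exact ⟨hlt, by simp only; omega⟩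
      · exact h2 e he
    · refine ⟨(y.val, x.val) :: q, by
        simp only [List.map_cons, toFin, hx, hy, ← h1]; rw [Equiv.swap_comm], ?_⟩
      intro e he
      rcases List.mem_cons.1 he with rfl | he
      · exact ⟨hlt, by simp only; omega⟩
      · exact h2 e he

theorem finRotate_val (k : ℕ) (i : Fin (k + 1)) :
    (finRotate (k + 1) i).val = if i.val < k then i.val + 1 else 0 := by
  split_ifs with h
  · rw [coe_finRotate_of_ne_last]
    intro hc
    rw [hc] at h
    simp at h
  · have : i = Fin.last k := Fin.ext (by simp; omega)
    rw [this, finRotate_last]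
    rfl

/-- The factorization of a tree. -/
def ofTree (k : ℕ) (t : {t : TT // t.size = k}) : TransFact (k + 1) :=
  ⟨(canon t.1 0).map (toFin k), by
    have hm : ∀ e ∈ canon t.1 0, e.1 < e.2 ∧ e.2 ≤ k := by
      intro e he
      have := canon_mem t.1 0 e he
      have := t.2
      omega
    refine ⟨by simp [canon_length, t.2], ?_, ?_⟩
    · intro σ hσ
      obtain ⟨e, he, rfl⟩ := List.mem_map.1 hσ
      have hb := hm e he
      refine ⟨_, _, ?_, rfl⟩
      intro hc
      have := congrArg Fin.val hc
      rw [ofNat_val (by omega), ofNat_val (by omega)] at this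
      omega
    · ext i
      rw [prod_val k _ (fun e he => by have := hm e he; omega), canon_act, finRotate_val, t.2]
      have := i.2
      split_ifs <;> omega⟩

theorem FactEquiv_symm {n : ℕ} {l r : List (Equiv.Perm (Fin n))} (h : FactEquiv l r) :
    FactEquiv r l := by
  induction h with
  | refl l => exact .refl _
  | swap l₁ l₂ a b h => exact .swap _ _ _ _ h.symm
  | trans _ _ h1 h2 => exact h2.trans h1

theorem T_eq (k : ℕ) : T (k + 1) = Nat.card {t : TT // t.size = k} := by
  have eqv : Equivalence (fun l₁ l₂ : TransFact (k + 1) => FactEquiv l₁.1 l₂.1) := by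
    refine ⟨fun l => .refl _, fun h => FactEquiv_symm h, fun h1 h2 => h1.trans h2⟩
  symm
  refine Nat.card_eq_of_bijective (fun t => Quot.mk _ (ofTree k t)) ⟨?_, ?_⟩
  · intro t t' h
    have h1 : FactEquiv (ofTree k t).1 (ofTree k t').1 := (eqv.quot_mk_eq_iff _ _).1 h
    have h2 := FactEquiv_mem h1
    have hm : ∀ t : {t : TT // t.size = k}, ∀ e ∈ canon t.1 0, e.1 < e.2 ∧ e.2 ≤ k := by
      intro t e he
      have := canon_mem t.1 0 e he
      have := t.2
      omega
    apply Subtype.ext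
    apply canon_inj t.1 t'.1 0
    intro e
    constructor
    · intro he
      obtain ⟨f, hf, hfe⟩ := List.mem_map.1 ((h2 (toFin k e)).1 (List.mem_map.2 ⟨e, he, rfl⟩))
      rwa [← toFin_inj k f e (hm t' f hf) (hm t e he) hfe]
    · intro he
      obtain ⟨f, hf, hfe⟩ := List.mem_map.1 ((h2 (toFin k e)).2 (List.mem_map.2 ⟨e, he, rfl⟩))
      rwa [← toFin_inj k f e (hm t f hf) (hm t' e he) hfe]
  · intro x
    induction x using Quot.ind with
    | _ l =>
    obtain ⟨l, hlen, hsw, hprod⟩ := l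
    obtain ⟨q, rfl, hq⟩ := lift_list k l hsw
    obtain ⟨t, ht, hce⟩ := main k 0 q ⟨fun e he => by have := hq e he; omega, by simpa using hlen,
      fun i _ hi => by
        have h1 := prod_val k q (fun e he => by have := hq e he; omega) ⟨i, by omega⟩
        rw [hprod, finRotate_val] at h1
        simp only at h1
        rw [← h1, if_pos (by omega)]⟩
    refine ⟨⟨t, ht⟩, ?_⟩
    refine Quot.sound (eqv.symm ?_)
    exact hce.toFactEquiv k (fun e he => by have := hq e he; omega)

/-- Decomposition of trees with `k+1` nodes. -/
def treeEquiv (k : ℕ) : {t : TT // t.size = k + 1} ≃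
    (x : Finset.HasAntidiagonal.antidiagonal k) × ({t : TT // t.size = x.1.1} ×
      ((y : Finset.HasAntidiagonal.antidiagonal x.1.2) × ({t : TT // t.size = y.1.1} × {t : TT // t.size = y.1.2})))
    where
  toFun
    | ⟨.node t₁ t₂ t₃, h⟩ => ⟨⟨(t₁.size, t₂.size + t₃.size), by
        simp only [TT.size] at h; simp only [Finset.HasAntidiagonal.mem_antidiagonal]; omega⟩,
        ⟨t₁, rfl⟩, ⟨(t₂.size, t₃.size), by simp⟩, ⟨t₂, rfl⟩, ⟨t₃, rfl⟩⟩
    | ⟨.leaf, h⟩ => absurd h (by simp [TT.size])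
  invFun := fun z => ⟨.node z.2.1.1 z.2.2.2.1.1 z.2.2.2.2.1, by
    have h1 := Finset.HasAntidiagonal.mem_antidiagonal.1 z.1.2
    have h2 := Finset.HasAntidiagonal.mem_antidiagonal.1 z.2.2.1.2
    simp only [TT.size, z.2.1.2, z.2.2.2.1.2, z.2.2.2.2.2]
    omega⟩
  left_inv := by
    rintro ⟨_ | ⟨t₁, t₂, t₃⟩, h⟩
    · exact absurd h (by simp [TT.size])
    · rfl
  right_inv := by
    rintro ⟨⟨⟨i, r⟩, hx⟩, ⟨t₁, h1⟩, ⟨⟨p, q⟩, hy⟩, ⟨t₂, h2⟩, ⟨t₃, h3⟩⟩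
    simp only at h1 h2 h3
    have hy' := Finset.HasAntidiagonal.mem_antidiagonal.1 hy
    simp only at hy'
    subst h1 h2 h3 hy'
    rfl

instance treeFinite (k : ℕ) : Finite {t : TT // t.size = k} := by
  induction k using Nat.strong_induction_on with
  | _ k IH =>
  cases k with
  | zero =>
    have : Subsingleton {t : TT // t.size = 0} := by
      constructor
      rintro ⟨_ | _, h⟩ ⟨_ | _, h'⟩
      · rfl
      all_goals simp [TT.size] at h h'
    infer_instance
  | succ k =>
    have hx : ∀ x : Finset.HasAntidiagonal.antidiagonal k, Finite ({t : TT // t.size = x.1.1} ×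
      ((y : Finset.HasAntidiagonal.antidiagonal x.1.2) ×
        ({t : TT // t.size = y.1.1} × {t : TT // t.size = y.1.2}))) := by
      intro x
      have h1 := Finset.HasAntidiagonal.mem_antidiagonal.1 x.2
      have := IH x.1.1 (by omega)
      have : ∀ y : Finset.HasAntidiagonal.antidiagonal x.1.2,
          Finite ({t : TT // t.size = y.1.1} × {t : TT // t.size = y.1.2}) := by
        intro y
        have h2 := Finset.HasAntidiagonal.mem_antidiagonal.1 y.2
        have := IH y.1.1 (by omega)
        have := IH y.1.2 (by omega)
        infer_instance
      infer_instance
    exact Finite.of_equiv _ (treeEquiv k).symm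

theorem card_zero : Nat.card {t : TT // t.size = 0} = 1 := by
  rw [Nat.card_eq_one_iff_unique]
  refine ⟨⟨?_⟩, ⟨.leaf, rfl⟩⟩
  rintro ⟨_ | _, h⟩ ⟨_ | _, h'⟩
  · rfl
  all_goals simp [TT.size] at h h'

theorem card_succ (k : ℕ) : Nat.card {t : TT // t.size = k + 1} =
    ∑ x ∈ Finset.HasAntidiagonal.antidiagonal k, Nat.card {t : TT // t.size = x.1} *
      ∑ y ∈ Finset.HasAntidiagonal.antidiagonal x.2,
        Nat.card {t : TT // t.size = y.1} * Nat.card {t : TT // t.size = y.2} := by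
  rw [Nat.card_congr (treeEquiv k), Nat.card_sigma]
  refine Eq.trans ?_ (Finset.sum_coe_sort (Finset.HasAntidiagonal.antidiagonal k)
    (fun x => Nat.card {t : TT // t.size = x.1} *
      ∑ y ∈ Finset.HasAntidiagonal.antidiagonal x.2,
        Nat.card {t : TT // t.size = y.1} * Nat.card {t : TT // t.size = y.2}))
  refine Finset.sum_congr rfl (fun x _ => ?_)
  rw [Nat.card_prod, Nat.card_sigma]
  refine congrArg _ ?_
  refine Eq.trans ?_ (Finset.sum_coe_sort (Finset.HasAntidiagonal.antidiagonal x.1.2)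
    (fun y => Nat.card {t : TT // t.size = y.1} * Nat.card {t : TT // t.size = y.2}))
  refine Finset.sum_congr rfl (fun y _ => ?_)
  rw [Nat.card_prod]

end NCT

/-- `ξ = 1 + x ξ³`. -/
theorem xi_eq_one_add_X_mul_xi_cubed :
    xi = 1 + PowerSeries.X * xi ^ 3 := by
  have hxi : ∀ k, PowerSeries.coeff k xi = (Nat.card {t : NCT.TT // t.size = k} : ℚ) := by
    intro k
    rw [xi, PowerSeries.coeff_mk]
    split_ifs with h
    · subst h; rw [NCT.card_zero]; simp
    · rw [NCT.T_eq]
  ext k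
  cases k with
  | zero => simp [hxi, NCT.card_zero]
  | succ k =>
    rw [map_add, PowerSeries.coeff_succ_X_mul, hxi, NCT.card_succ, pow_succ', pow_two,
      PowerSeries.coeff_mul]
    simp [PowerSeries.coeff_mul, hxi, PowerSeries.coeff_one]
end

section
/- The number of equivalence classes of factorizations of the n-cycle (1 2 … n) into n − 1 transpositions equals the number of rooted plane trees with n − 1 internal vertices all of degree 4 and 2n leaves of degree 1 (where the root is a leaf). -/
/-- A plane tree: a node together with an ordered (left-to-right) list of
child subtrees; `node 0 _` is a leaf.  A rooted plane tree whose root is a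
leaf is encoded by the subtree hanging below the root, so that a non-root
vertex of degree `d` is a node with `d - 1` children. -/
inductive PTree : Type
  | node : (k : ℕ) → (Fin k → PTree) → PTree

/-- Number of leaves (vertices with no children) of a plane tree. -/
def PTree.numLeaves : PTree → ℕ
  | .node k f => if k = 0 then 1 else ∑ i : Fin k, PTree.numLeaves (f i)

/-- Number of internal (non-leaf) vertices of a plane tree. -/
def PTree.internalCount : PTree → ℕ
  | .node k f => (if k = 0 then 0 else 1) + ∑ i : Fin k, PTree.internalCount (f i)

/-- Every internal vertex has exactly 3 children, i.e. degree 4 once the edge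
towards the root is counted. -/
def PTree.ternary : PTree → Prop
  | .node k f => (k = 0 ∨ k = 3) ∧ ∀ i, PTree.ternary (f i)

namespace TF

open Equiv

/-- Ternary trees. -/
inductive Tern : Type
  | leaf : Tern
  | node : Tern → Tern → Tern → Tern

def Tern.size : Tern → ℕ
  | .leaf => 0
  | .node t₁ t₂ t₃ => t₁.size + t₂.size + t₃.size + 1

/-- The canonical factorization attached to a ternary tree, on the interval
`[a, a + size]`; pairs encode transpositions. -/
def Tern.G : Tern → ℕ → List (ℕ × ℕ)
  | .leaf, _ => []
  | .node t₁ t₂ t₃, a =>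
      t₂.G (a + t₁.size + 1) ++ (a, a + t₁.size + 1 + t₂.size) ::
        (t₃.G (a + t₁.size + 1 + t₂.size) ++ t₁.G a)

def pr (l : List (ℕ × ℕ)) : Perm ℕ := (l.map (fun p => swap p.1 p.2)).prod

@[simp] lemma pr_nil : pr [] = 1 := rfl
@[simp] lemma pr_cons (p) (l) : pr (p :: l) = swap p.1 p.2 * pr l := by simp [pr]
@[simp] lemma pr_append (l l') : pr (l ++ l') = pr l * pr l' := by simp [pr]

/-- The cycle `a → a+1 → ... → b → a`. -/
def cyc (a b : ℕ) : Perm ℕ where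
  toFun x := if a ≤ x ∧ x < b then x + 1 else if x = b ∧ a ≤ b then a else x
  invFun x := if a < x ∧ x ≤ b then x - 1 else if x = a ∧ a ≤ b then b else x
  left_inv x := by grind
  right_inv x := by grind

lemma cyc_apply (a b x : ℕ) : cyc a b x =
    if a ≤ x ∧ x < b then x + 1 else if x = b ∧ a ≤ b then a else x := rfl

lemma cyc_self (a : ℕ) : cyc a a = 1 := by
  ext x; simp only [cyc_apply, Perm.coe_one, id]; grind

lemma cyc_split (y k b : ℕ) (h : y ≤ k) (h' : k ≤ b) : cyc y b = cyc y k * cyc k b := by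
  ext x; simp only [cyc_apply, Perm.mul_apply]; grind

lemma cyc_swap (a y b : ℕ) (h : a < y) (h' : y ≤ b) :
    swap a y * cyc a b = cyc a (y - 1) * cyc y b := by
  ext x; simp only [cyc_apply, Perm.mul_apply, swap_apply_def]; grind

lemma cyc_four (a y k b : ℕ) (h : a < y) (h' : y ≤ k) (h'' : k ≤ b) :
    cyc y k * (swap a k * (cyc k b * cyc a (y - 1))) = cyc a b := by
  ext x; simp only [cyc_apply, Perm.mul_apply, swap_apply_def]; grind

def Good (a b : ℕ) (l : List (ℕ × ℕ)) : Prop :=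
  ∀ p ∈ l, a ≤ p.1 ∧ p.1 < p.2 ∧ p.2 ≤ b

lemma G_good (t : Tern) : ∀ a, Good a (a + t.size) (t.G a) := by
  induction t with
  | leaf => intro a p hp; simp [Tern.G] at hp
  | node t₁ t₂ t₃ h₁ h₂ h₃ =>
    intro a p hp
    simp only [Tern.G, List.mem_append, List.mem_cons] at hp
    simp only [Tern.size]
    rcases hp with hp | rfl | hp | hp
    · have := h₂ _ p hp; omega
    · simp only; omega
    · have := h₃ _ p hp; omega
    · have := h₁ _ p hp; omega

lemma G_length (t : Tern) : ∀ a, (t.G a).length = t.size := by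
  induction t with
  | leaf => intro a; rfl
  | node t₁ t₂ t₃ h₁ h₂ h₃ =>
    intro a
    simp only [Tern.G, Tern.size, List.length_append, List.length_cons, h₁, h₂, h₃]; omega

lemma G_pr (t : Tern) : ∀ a, pr (t.G a) = cyc a (a + t.size) := by
  induction t with
  | leaf => intro a; simp [Tern.G, Tern.size, cyc_self]
  | node t₁ t₂ t₃ h₁ h₂ h₃ =>
    intro a
    simp only [Tern.G, Tern.size, pr_append, pr_cons, h₁, h₂, h₃]
    have := cyc_four a (a + t₁.size + 1) (a + t₁.size + 1 + t₂.size)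
      (a + t₁.size + 1 + t₂.size + t₃.size) (by omega) (by omega) (by omega)
    rw [Nat.add_sub_cancel] at this
    rw [this]; congr 1; omega

/-! ### Injectivity -/

lemma pr_mem (l : List (ℕ × ℕ)) (P : ℕ → Prop) (h : ∀ p ∈ l, (P p.1 ↔ P p.2)) (x : ℕ) :
    P (pr l x) ↔ P x := by
  induction l with
  | nil => simp
  | cons p l ih =>
    have h1 := h p (by simp)
    have ih := ih (fun q hq => h q (by simp [hq]))
    simp only [pr_cons, Perm.mul_apply, swap_apply_def]
    grind

lemma pr_fix (l : List (ℕ × ℕ)) (x : ℕ) (h : ∀ p ∈ l, p.1 ≠ x ∧ p.2 ≠ x) : pr l x = x :=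
  (pr_mem l (fun z => z = x) (fun p hp => by have := h p hp; simp [this.1, this.2]) x).2 rfl

lemma perm_split {α : Type*} {P : α → Prop} [DecidablePred P] {u v u' v' : List α}
    (h : (u ++ v).Perm (u' ++ v')) (hu : ∀ p ∈ u, P p) (hu' : ∀ p ∈ u', P p)
    (hv : ∀ p ∈ v, ¬ P p) (hv' : ∀ p ∈ v', ¬ P p) : u.Perm u' ∧ v.Perm v' := by
  have h1 := h.filter (fun p => decide (P p))
  have h2 : u.Perm u' := by
    have f1 : u.filter (fun p => decide (P p)) = u := List.filter_eq_self.2 (by simpa using hu)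
    have f2 : u'.filter (fun p => decide (P p)) = u' :=
      List.filter_eq_self.2 (by simpa using hu')
    have f3 : v.filter (fun p => decide (P p)) = [] :=
      List.filter_eq_nil_iff.2 (by simpa using hv)
    have f4 : v'.filter (fun p => decide (P p)) = [] :=
      List.filter_eq_nil_iff.2 (by simpa using hv')
    rw [List.filter_append, List.filter_append, f1, f2, f3, f4] at h1
    simpa using h1
  refine ⟨h2, ?_⟩
  exact (List.perm_append_left_iff u').1 ((h2.symm.append_right v).trans h)

lemma size_le_aux (t₁ t₂ t₁' : Tern) (a : ℕ)
    (h : ∀ p ∈ t₁'.G a, p ∈ t₂.G (a + t₁.size + 1) ++ t₁.G a) : t₁'.size ≤ t₁.size := by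
  by_contra hlt
  have h1 := pr_mem (t₁'.G a) (fun x => x < a + t₁.size + 1) (fun p hp => by
    have := h p hp
    rw [List.mem_append] at this
    rcases this with h2 | h2
    · have := G_good _ _ p h2; omega
    · have := G_good _ _ p h2; omega) (a + t₁.size)
  rw [G_pr, cyc_apply, if_pos (by omega)] at h1
  omega

lemma G_inj (t : Tern) : ∀ (t' : Tern) (a : ℕ), (t.G a).Perm (t'.G a) → t = t' := by
  induction t with
  | leaf =>
    intro t' a h
    have := h.length_eq
    cases t' with
    | leaf => rfl
    | node _ _ _ => simp [Tern.G] at this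
  | node t₁ t₂ t₃ h₁ h₂ h₃ =>
    intro t' a h
    cases t' with
    | leaf => have := h.length_eq; simp [Tern.G] at this
    | node t₁' t₂' t₃' =>
      have hlen := h.length_eq
      simp only [G_length, Tern.size] at hlen
      have key : ∀ (t₁ t₂ t₃ t₁' t₂' t₃' : Tern),
          ((Tern.node t₁ t₂ t₃).G a).Perm ((Tern.node t₁' t₂' t₃').G a) →
          t₁.size + t₂.size ≤ t₁'.size + t₂'.size := by
        intro t₁ t₂ t₃ t₁' t₂' t₃' h
        have hm : (a, a + t₁.size + 1 + t₂.size) ∈ (Tern.node t₁ t₂ t₃).G a := by simp [Tern.G]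
        have := h.mem_iff.1 hm
        simp only [Tern.G, List.mem_append, List.mem_cons, Prod.mk.injEq] at this
        rcases this with h2 | h2 | h2 | h2
        · have := G_good _ _ _ h2; simp only at this; omega
        · omega
        · have := G_good _ _ _ h2; simp only at this; omega
        · have := G_good _ _ _ h2; simp only at this; omega
      have e12 : t₁.size + t₂.size = t₁'.size + t₂'.size :=
        le_antisymm (key _ _ _ _ _ _ h) (key _ _ _ _ _ _ h.symm)
      have e3 : t₃.size = t₃'.size := by omega
      have ek : a + t₁'.size + 1 + t₂'.size = a + t₁.size + 1 + t₂.size := by omega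
      have hp : (t₃.G (a + t₁.size + 1 + t₂.size) ++ (t₂.G (a + t₁.size + 1) ++ t₁.G a)).Perm
          (t₃'.G (a + t₁.size + 1 + t₂.size) ++ (t₂'.G (a + t₁'.size + 1) ++ t₁'.G a)) := by
        simp only [Tern.G] at h
        rw [ek] at h
        have h' := (List.perm_middle.symm.trans h).trans List.perm_middle
        have h' := h'.cons_inv
        have c : ∀ x y z : List (ℕ × ℕ), (y ++ (x ++ z)).Perm (x ++ (y ++ z)) := by
          intro x y z
          rw [← List.append_assoc, ← List.append_assoc]
          exact List.perm_append_comm.append_right _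
        exact ((c _ _ _).symm.trans h').trans (c _ _ _)
      obtain ⟨p3, p12⟩ := perm_split (P := fun p => a + t₁.size + 1 + t₂.size ≤ p.1) hp
        (fun p hp => (G_good _ _ p hp).1) (fun p hp => (G_good _ _ p hp).1)
        (by
          intro p hp
          rw [List.mem_append] at hp
          rcases hp with h2 | h2
          · have := G_good _ _ p h2; omega
          · have := G_good _ _ p h2; omega)
        (by
          intro p hp
          rw [List.mem_append] at hp
          rcases hp with h2 | h2
          · have := G_good _ _ p h2; omega
          · have := G_good _ _ p h2; omega)
      have e1 : t₁'.size = t₁.size := by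
        apply le_antisymm
        · exact size_le_aux t₁ t₂ t₁' a (fun p hp => p12.mem_iff.2 (by simp [hp]))
        · exact size_le_aux t₁' t₂' t₁ a (fun p hp => p12.mem_iff.1 (by simp [hp]))
      rw [e1] at p12
      obtain ⟨p2, p1⟩ := perm_split (P := fun p => a + t₁.size + 1 ≤ p.1) p12
        (fun p hp => (G_good _ _ p hp).1) (fun p hp => (G_good _ _ p hp).1)
        (fun p hp => by have := G_good _ _ p hp; omega)
        (fun p hp => by have := G_good _ _ p hp; omega)
      rw [h₁ _ _ p1, h₂ _ _ p2, h₃ _ _ p3]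

/-! ### Commutation equivalence -/

def Dj (p q : ℕ × ℕ) : Prop := p.1 ≠ q.1 ∧ p.1 ≠ q.2 ∧ p.2 ≠ q.1 ∧ p.2 ≠ q.2

inductive Eqv : List (ℕ × ℕ) → List (ℕ × ℕ) → Prop
  | refl (l) : Eqv l l
  | swap (l₁ l₂) (p q) (h : Dj p q) : Eqv (l₁ ++ p :: q :: l₂) (l₁ ++ q :: p :: l₂)
  | trans {l₁ l₂ l₃} : Eqv l₁ l₂ → Eqv l₂ l₃ → Eqv l₁ l₃

lemma Eqv.append_left {l l'} (h : Eqv l l') (u) : Eqv (u ++ l) (u ++ l') := by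
  induction h with
  | refl l => exact .refl _
  | swap l₁ l₂ p q h => simpa using Eqv.swap (u ++ l₁) l₂ p q h
  | trans _ _ h1 h2 => exact h1.trans h2

lemma Eqv.append_right {l l'} (h : Eqv l l') (u) : Eqv (l ++ u) (l' ++ u) := by
  induction h with
  | refl l => exact .refl _
  | swap l₁ l₂ p q h => simpa using Eqv.swap l₁ (l₂ ++ u) p q h
  | trans _ _ h1 h2 => exact h1.trans h2

lemma Eqv.append {l l' u u'} (h : Eqv l l') (h' : Eqv u u') : Eqv (l ++ u) (l' ++ u') :=
  (h.append_right u).trans (h'.append_left l')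

lemma Eqv.perm {l l'} (h : Eqv l l') : l.Perm l' := by
  induction h with
  | refl l => exact .refl _
  | swap l₁ l₂ p q h => exact (List.Perm.swap _ _ _).append_left _
  | trans _ _ h1 h2 => exact h1.trans h2

lemma swap_comm_of_dj {p q : ℕ × ℕ} (h : Dj p q) :
    swap p.1 p.2 * swap q.1 q.2 = swap q.1 q.2 * swap p.1 p.2 := by
  obtain ⟨h1, h2, h3, h4⟩ := h
  ext x; simp only [Perm.mul_apply, swap_apply_def]; grind

lemma Eqv.pr_eq {l l'} (h : Eqv l l') : pr l = pr l' := by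
  induction h with
  | refl l => rfl
  | swap l₁ l₂ p q h =>
    simp only [pr_append, pr_cons]
    rw [← mul_assoc (Equiv.swap p.1 p.2), swap_comm_of_dj h, mul_assoc]
  | trans _ _ h1 h2 => exact h1.trans h2

lemma Eqv.comm_one (p) : ∀ v : List (ℕ × ℕ), (∀ q ∈ v, Dj p q) → Eqv (p :: v) (v ++ [p])
  | [], _ => .refl _
  | q :: v, h => by
    have h1 := Eqv.swap [] v p q (h q (by simp))
    have h2 := (Eqv.comm_one p v (fun r hr => h r (by simp [hr]))).append_left [q]
    exact h1.trans (by simpa using h2)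

lemma Eqv.comm : ∀ (u v : List (ℕ × ℕ)), (∀ p ∈ u, ∀ q ∈ v, Dj p q) → Eqv (u ++ v) (v ++ u)
  | [], v, _ => by simpa using Eqv.refl v
  | p :: u, v, h => by
    have h1 := (Eqv.comm u v (fun r hr => h r (by simp [hr]))).append_left [p]
    have h2 := (Eqv.comm_one p v (h p (by simp))).append_right u
    have : Eqv (p :: (u ++ v)) ((p :: v) ++ u) := by simpa using h1
    exact this.trans (by simpa using h2)

lemma Eqv.split (P : ℕ × ℕ → Prop) (l : List (ℕ × ℕ))
    (h : ∀ p ∈ l, ∀ q ∈ l, P p → ¬ P q → Dj q p) :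
    ∃ u v, Eqv l (u ++ v) ∧ (∀ p ∈ u, p ∈ l ∧ P p) ∧ (∀ p ∈ v, p ∈ l ∧ ¬ P p) := by
  induction l with
  | nil => exact ⟨[], [], .refl _, by simp, by simp⟩
  | cons p l ih =>
    obtain ⟨u, v, he, hu, hv⟩ := ih (fun r hr q hq => h r (by simp [hr]) q (by simp [hq]))
    have he' : Eqv (p :: l) (p :: (u ++ v)) := he.append_left [p]
    by_cases hp : P p
    · refine ⟨p :: u, v, he', ?_, ?_⟩
      · intro q hq
        rcases List.mem_cons.1 hq with rfl | hq
        · exact ⟨by simp, hp⟩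
        · exact ⟨by simp [(hu q hq).1], (hu q hq).2⟩
      · intro q hq
        exact ⟨by simp [(hv q hq).1], (hv q hq).2⟩
    · refine ⟨u, p :: v, ?_, ?_, ?_⟩
      · have h2 := (Eqv.comm_one p u (fun q hq =>
          h q (by simp [(hu q hq).1]) p (by simp) (hu q hq).2 hp)).append_right v
        exact he'.trans (by simpa using h2)
      · intro q hq
        exact ⟨by simp [(hu q hq).1], (hu q hq).2⟩
      · intro q hq
        rcases List.mem_cons.1 hq with rfl | hq
        · exact ⟨by simp, hp⟩
        · exact ⟨by simp [(hv q hq).1], (hv q hq).2⟩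

/-! ### Colouring lemma -/

lemma colour (S : Finset ℕ) (l : List (ℕ × ℕ)) :
    ∃ f : ℕ → ℕ, (∀ p ∈ l, f p.1 = f p.2) ∧ S.card ≤ (S.image f).card + l.length := by
  induction l with
  | nil => exact ⟨id, by simp, by simp⟩
  | cons p l ih =>
    obtain ⟨f, hf, hc⟩ := ih
    refine ⟨fun z => if f z = f p.2 then f p.1 else f z, ?_, ?_⟩
    · intro q hq
      rcases List.mem_cons.1 hq with rfl | hq
      · simp
      · simp [hf q hq]
    · have : (S.image f).erase (f p.2) ⊆
          S.image (fun z => if f z = f p.2 then f p.1 else f z) := by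
        intro w hw
        simp only [Finset.mem_erase, Finset.mem_image] at hw ⊢
        obtain ⟨h1, z, hz, rfl⟩ := hw
        exact ⟨z, hz, by simp [h1]⟩
      have h1 := Finset.card_le_card this
      have h2 := Finset.pred_card_le_card_erase (s := S.image f) (a := f p.2)
      simp only [List.length_cons]; omega

lemma colour_pr {l : List (ℕ × ℕ)} {f : ℕ → ℕ} (h : ∀ p ∈ l, f p.1 = f p.2) (x : ℕ) :
    f (pr l x) = f x :=
  (pr_mem l (fun z => f z = f x) (fun p hp => by rw [h p hp]) x).2 rfl

lemma const_of_succ {f : ℕ → ℕ} {p q : ℕ} (h : ∀ x, p ≤ x → x < q → f (x + 1) = f x) :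
    ∀ x, p ≤ x → x ≤ q → f x = f p := by
  intro x hx
  induction x, hx using Nat.le_induction with
  | base => intro _; rfl
  | succ x hx ih => intro hq; rw [h x hx (by omega), ih (by omega)]

lemma card_le_one_of_const {S : Finset ℕ} {f : ℕ → ℕ} {c : ℕ} (h : ∀ x ∈ S, f x = c) :
    (S.image f).card ≤ 1 := by
  have : S.image f ⊆ {c} := by
    intro w hw
    simp only [Finset.mem_image] at hw
    obtain ⟨z, hz, rfl⟩ := hw
    simp [h z hz]
  simpa using Finset.card_le_card this

lemma length_lower {l : List (ℕ × ℕ)} {p q : ℕ} (h : pr l = cyc p q) : q - p ≤ l.length := by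
  obtain ⟨f, hf, hc⟩ := colour (Finset.Icc p q) l
  have h1 := const_of_succ (f := f) (p := p) (q := q) (fun x hx hq => by
    have := colour_pr hf x
    rwa [h, cyc_apply, if_pos ⟨hx, hq⟩] at this)
  have h2 := card_le_one_of_const (S := Finset.Icc p q) (f := f) (c := f p) (by
    intro x hx; rw [Finset.mem_Icc] at hx; exact h1 x hx.1 hx.2)
  rw [Nat.card_Icc] at hc
  omega


/-! ### The decomposition of a factorization -/

lemma perm_eq_of_mul {P P' Q Q' : Perm ℕ} (k : ℕ)
    (h : ∀ x, x ≠ k → (P x = x ∧ P' x = x) ∨ (Q x = x ∧ Q' x = x))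
    (he : P * Q = P' * Q') : P = P' ∧ Q = Q' := by
  have h1 : ∀ x, x ≠ k → P x = P' x := by
    intro x hx
    rcases h x hx with h | h
    · rw [h.1, h.2]
    · have := congrArg (fun σ : Perm ℕ => σ x) he
      simpa [Perm.mul_apply, h.1, h.2] using this
  have h2 : P = P' := by
    ext x
    by_cases hx : x = k
    · subst hx
      by_contra hne
      have hz : P'.symm (P x) ≠ x := by
        intro h; apply hne; rw [Equiv.symm_apply_eq] at h; exact h
      have := h1 _ hz
      rw [Equiv.apply_symm_apply] at this
      exact hz (P.injective this)
    · exact h1 x hx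
  exact ⟨h2, by subst h2; exact mul_left_cancel he⟩

lemma first_split (a b : ℕ) (l : List (ℕ × ℕ)) (hg : Good a b l) (h : pr l a ≠ a) :
    ∃ l₁ k l₂, l = l₁ ++ (a, k) :: l₂ ∧ ∀ p ∈ l₁, p.1 ≠ a := by
  induction l with
  | nil => simp at h
  | cons p l ih =>
    by_cases hp : p.1 = a
    · exact ⟨[], p.2, l, by simp [← hp], by simp⟩
    · have hgp := hg p (by simp)
      have : pr l a ≠ a := by
        intro h'
        apply h
        rw [pr_cons, Perm.mul_apply, h', swap_apply_of_ne_of_ne] <;> omega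
      obtain ⟨l₁, k, l₂, rfl, hl⟩ := ih (fun q hq => hg q (by simp [hq])) this
      refine ⟨p :: l₁, k, l₂, by simp, ?_⟩
      intro q hq
      rcases List.mem_cons.1 hq with rfl | hq
      · exact hp
      · exact hl q hq

lemma pr_conj (a k : ℕ) (l : List (ℕ × ℕ)) :
    pr (l.map (fun p => (swap a k p.1, swap a k p.2))) = swap a k * pr l * swap a k := by
  induction l with
  | nil => simp
  | cons p l ih =>
    simp only [List.map_cons, pr_cons, ih]
    have := Equiv.mul_swap_eq_swap_mul (swap a k) p.1 p.2
    rw [← mul_assoc, ← mul_assoc, ← mul_assoc, ← this, mul_assoc (swap a k)]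

lemma step_one {a b k : ℕ} {l₁ l₂ : List (ℕ × ℕ)} (hg : Good a b (l₁ ++ (a, k) :: l₂))
    (hp : pr (l₁ ++ (a, k) :: l₂) = cyc a b) (hl : l₁.length + l₂.length + 1 = b - a)
    (h₁ : ∀ p ∈ l₁, p.1 ≠ a) :
    ∃ y U W A, a < y ∧ y ≤ k ∧ k ≤ b ∧ Eqv (l₁ ++ (a, k) :: l₂) (U ++ (a, k) :: (W ++ A)) ∧
      Good y b U ∧ Good y b W ∧ Good a (y - 1) A ∧ pr A = cyc a (y - 1) ∧
      pr (U ++ W) = cyc y b ∧ A.length = y - 1 - a ∧ U.length + W.length = b - y := by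
  have hg1 : Good a b l₁ := fun p hp => hg p (by simp [hp])
  have hg2 : Good a b l₂ := fun p hp => hg p (by simp [hp])
  have hgk := hg (a, k) (by simp)
  simp only at hgk
  obtain ⟨y, hy⟩ : ∃ y, y = pr l₁ k := ⟨_, rfl⟩
  have hfa : pr l₁ a = a := pr_fix l₁ a (fun p hp => by
    have := h₁ p hp; have := hg1 p hp; omega)
  have hya : y ≠ a := by
    intro h
    have : pr l₁ k = pr l₁ a := by rw [← hy, h, hfa]
    have := (pr l₁).injective this
    omega
  have hyI : a ≤ y ∧ y ≤ b := by
    have := (pr_mem l₁ (fun z => a ≤ z ∧ z ≤ b) (fun p hp => by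
      have := hg1 p hp; omega) k).2 (by omega)
    rwa [← hy] at this
  have hprod : pr l₁ * pr l₂ = cyc a (y - 1) * cyc y b := by
    rw [← cyc_swap a y b (by omega) (by omega), ← hp, pr_append, pr_cons]
    have := Equiv.mul_swap_eq_swap_mul (pr l₁) a k
    rw [hfa, ← hy] at this
    simp only
    rw [← mul_assoc (pr l₁), this, mul_assoc (swap a y), ← mul_assoc, swap_mul_self, one_mul]
  -- colours
  have hcol : ∀ p ∈ l₁ ++ l₂, (p.1 < y ↔ p.2 < y) := by
    obtain ⟨f, hf, hc⟩ := colour (Finset.Icc a b) (l₁ ++ l₂)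
    have hstep : ∀ x, f ((cyc a (y - 1) * cyc y b) x) = f x := by
      intro x
      have := colour_pr hf x
      rwa [pr_append, hprod] at this
    have c1 := const_of_succ (f := f) (p := a) (q := y - 1) (fun x hx hq => by
      rw [← hstep x]; congr 1
      simp only [cyc_apply, Perm.mul_apply]; grind)
    have c2 := const_of_succ (f := f) (p := y) (q := b) (fun x hx hq => by
      rw [← hstep x]; congr 1
      simp only [cyc_apply, Perm.mul_apply]; grind)
    have hne : f a ≠ f y := by
      intro hay
      have h2 := card_le_one_of_const (S := Finset.Icc a b) (f := f) (c := f a) (by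
        intro x hx; rw [Finset.mem_Icc] at hx
        rcases lt_or_ge x y with h | h
        · exact c1 x hx.1 (by omega)
        · rw [hay]; exact c2 x h hx.2)
      rw [Nat.card_Icc, List.length_append] at hc
      omega
    intro p hp
    have hgp : a ≤ p.1 ∧ p.1 < p.2 ∧ p.2 ≤ b := by
      rcases List.mem_append.1 hp with h | h
      · exact hg1 p h
      · exact hg2 p h
    refine ⟨fun h => ?_, fun h => by omega⟩
    by_contra h'
    have e1 := c1 p.1 (by omega) (by omega)
    have e2 := c2 p.2 (by omega) (by omega)
    have := hf p hp
    apply hne; rw [← e1, ← e2, this]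
  have hcol1 : ∀ p ∈ l₁, (p.1 < y ↔ p.2 < y) := fun p hp => hcol p (by simp [hp])
  have hcol2 : ∀ p ∈ l₂, (p.1 < y ↔ p.2 < y) := fun p hp => hcol p (by simp [hp])
  have hyk : y ≤ k := by
    by_contra h
    have := (pr_mem l₁ (fun z => z < y) hcol1 k).2 (by omega)
    omega
  obtain ⟨U, A₁, hE1, hU, hA1⟩ := Eqv.split (fun p => ¬ p.2 < y) l₁ (by
    intro p hp q hq hP hQ
    have := hg1 p hp; have := hg1 q hq; have := hcol1 p hp
    simp only [Dj]; omega)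
  obtain ⟨W, A₂, hE2, hW, hA2⟩ := Eqv.split (fun p => ¬ p.2 < y) l₂ (by
    intro p hp q hq hP hQ
    have := hg2 p hp; have := hg2 q hq; have := hcol2 p hp
    simp only [Dj]; omega)
  have gU : Good y b U := fun p hp => by
    have h1 := hU p hp
    have := hg1 p h1.1; have := hcol1 p h1.1; omega
  have gW : Good y b W := fun p hp => by
    have h1 := hW p hp
    have := hg2 p h1.1; have := hcol2 p h1.1; omega
  have gA1 : Good (a + 1) (y - 1) A₁ := fun p hp => by
    have h1 := hA1 p hp
    have := hg1 p h1.1; have := hcol1 p h1.1; have := h₁ p h1.1; omega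
  have gA2 : Good a (y - 1) A₂ := fun p hp => by
    have h1 := hA2 p hp
    have := hg2 p h1.1; have := hcol2 p h1.1; omega
  have gA : Good a (y - 1) (A₁ ++ A₂) := fun p hp => by
    rcases List.mem_append.1 hp with h | h
    · have := gA1 p h; omega
    · exact gA2 p h
  have gUW : Good y b (U ++ W) := fun p hp => by
    rcases List.mem_append.1 hp with h | h
    · exact gU p h
    · exact gW p h
  have E0 : Eqv (l₁ ++ (a, k) :: l₂) (U ++ (a, k) :: (W ++ (A₁ ++ A₂))) := by
    have s1 : Eqv (l₁ ++ (a, k) :: l₂) ((U ++ A₁) ++ ([(a, k)] ++ (W ++ A₂))) :=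
      hE1.append (hE2.append_left [(a, k)])
    have s2 : Eqv (A₁ ++ ([(a, k)] ++ W)) (([(a, k)] ++ W) ++ A₁) := by
      apply Eqv.comm
      intro p hp q hq
      have := gA1 p hp
      simp only [List.mem_append, List.mem_singleton] at hq
      rcases hq with rfl | hq
      · simp only [Dj]; omega
      · have := gW q hq; simp only [Dj]; omega
    have s3 := (s2.append_right A₂).append_left U
    exact s1.trans (by simpa using s3)
  have E1 : Eqv (l₁ ++ l₂) ((A₁ ++ A₂) ++ (U ++ W)) := by
    have s1 := hE1.append hE2
    have s2 : Eqv (A₁ ++ W) (W ++ A₁) := by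
      apply Eqv.comm
      intro p hp q hq
      have := gA1 p hp; have := gW q hq; simp only [Dj]; omega
    have s3 : Eqv ((U ++ W) ++ (A₁ ++ A₂)) ((A₁ ++ A₂) ++ (U ++ W)) := by
      apply Eqv.comm
      intro p hp q hq
      have := gUW p hp; have := gA q hq; simp only [Dj]; omega
    have s4 := (s2.append_right A₂).append_left U
    have s5 : Eqv (U ++ A₁ ++ (W ++ A₂)) ((U ++ W) ++ (A₁ ++ A₂)) := by simpa using s4
    exact s1.trans (s5.trans s3)
  have hpp := E1.pr_eq
  rw [pr_append l₁, hprod, pr_append (A₁ ++ A₂)] at hpp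
  obtain ⟨pA, pB⟩ := perm_eq_of_mul (y + b + 1) (by
    intro x hx
    rcases lt_or_ge x y with h | h
    · right
      refine ⟨by rw [cyc_apply]; grind, pr_fix _ _ (fun p hp => ?_)⟩
      have := gUW p hp; omega
    · left
      refine ⟨by rw [cyc_apply]; grind, pr_fix _ _ (fun p hp => ?_)⟩
      have := gA p hp; omega) hpp
  have L1 := length_lower pA.symm
  have L2 := length_lower pB.symm
  have L3 := E1.perm.length_eq
  simp only [List.length_append] at L1 L2 L3 ⊢
  exact ⟨y, U, W, A₁ ++ A₂, by omega, hyk, by omega, E0, gU, gW, gA, pA.symm, pB.symm,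
    by rw [List.length_append]; omega, by omega⟩

lemma step_two {a b k y : ℕ} {U W A : List (ℕ × ℕ)} (hay : a < y) (hyk : y ≤ k) (hkb : k ≤ b)
    (gU : Good y b U) (gW : Good y b W) (pA : pr A = cyc a (y - 1))
    (pUW : pr (U ++ W) = cyc y b) (hl : U.length + W.length = b - y)
    (hp : pr (U ++ (a, k) :: (W ++ A)) = cyc a b) :
    ∃ X Y, Eqv (U ++ (a, k) :: W) (X ++ (a, k) :: Y) ∧ Good y k X ∧ Good k b Y ∧
      pr X = cyc y k ∧ pr Y = cyc k b ∧ X.length = k - y ∧ Y.length = b - k := by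
  have hM : ∀ z, pr U (swap a k (pr W (cyc a (y - 1) z))) = cyc a b z := by
    intro z
    rw [← hp, ← pA]; simp [Perm.mul_apply]
  have hM1 : ∀ x, y ≤ x → x < b → pr U (swap a k (pr W x)) = x + 1 := by
    intro x h1 h2
    have := hM x
    have e : cyc a (y - 1) x = x := by rw [cyc_apply]; grind
    rw [e] at this
    rw [this, cyc_apply]; grind
  have hcol : (∀ p ∈ U, (p.1 ≤ k ↔ p.2 ≤ k)) ∧ (∀ p ∈ W, (p.1 < k ↔ p.2 < k)) := by
    obtain ⟨f, hf, hc⟩ := colour (insert a (Finset.Icc y b))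
      (U ++ W.map (fun p => (swap a k p.1, swap a k p.2)))
    have hstep : ∀ x, f (pr U (swap a k (pr W (swap a k x)))) = f x := by
      intro x
      have := colour_pr hf x
      rw [pr_append, pr_conj] at this
      simpa [Perm.mul_apply] using this
    have c1 := const_of_succ (f := f) (p := y) (q := k) (fun x hx hq => by
      rw [← hstep x]
      rw [swap_apply_of_ne_of_ne (a := a) (b := k) (x := x) (by omega) (by omega),
        hM1 x hx (by omega)])
    have c2 := const_of_succ (f := f) (p := k + 1) (q := b) (fun x hx hq => by
      rw [← hstep x]
      rw [swap_apply_of_ne_of_ne (a := a) (b := k) (x := x) (by omega) (by omega),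
        hM1 x (by omega) (by omega)])
    have c3 : ∀ x, k < x → x ≤ b → f x = f a := by
      intro x hx hxb
      rw [c2 x hx hxb, ← hstep a, swap_apply_left, hM1 k hyk (by omega)]
    have hne : f a ≠ f y := by
      intro hay'
      have h2 := card_le_one_of_const (S := insert a (Finset.Icc y b)) (f := f) (c := f a) (by
        intro x hx
        rw [Finset.mem_insert, Finset.mem_Icc] at hx
        rcases hx with rfl | hx
        · rfl
        rcases le_or_gt x k with h | h
        · rw [hay']; exact c1 x hx.1 h
        · exact c3 x h hx.2)
      rw [Finset.card_insert_of_notMem (by simp; omega), Nat.card_Icc, List.length_append,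
        List.length_map] at hc
      omega
    constructor
    · intro p hp
      have := gU p hp
      refine ⟨fun h => ?_, fun h => by omega⟩
      by_contra h'
      apply hne
      rw [← c1 p.1 (by omega) h, ← c3 p.2 (by omega) (by omega)]
      exact (hf p (by simp [hp])).symm
    · intro p hp
      have hgp := gW p hp
      refine ⟨fun h => ?_, fun h => by omega⟩
      by_contra h'
      apply hne
      have e := hf (swap a k p.1, swap a k p.2)
        (List.mem_append_right _ (List.mem_map.2 ⟨p, hp, rfl⟩))
      simp only at e
      rw [swap_apply_of_ne_of_ne (x := p.1) (by omega) (by omega),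
        c1 p.1 (by omega) (by omega)] at e
      rw [e]
      by_cases hk : p.2 = k
      · rw [hk, swap_apply_right]
      · rw [swap_apply_of_ne_of_ne (by omega) (by omega), c3 p.2 (by omega) (by omega)]
  obtain ⟨hc1, hc2⟩ := hcol
  obtain ⟨X₁, Y₁, hE1, hX1, hY1⟩ := Eqv.split (fun p => p.2 ≤ k) U (by
    intro p hp q hq hP hQ
    have := gU p hp; have := gU q hq; have := hc1 q hq
    simp only [Dj]; omega)
  obtain ⟨X₂, Y₂, hE2, hX2, hY2⟩ := Eqv.split (fun p => p.2 < k) W (by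
    intro p hp q hq hP hQ
    have := gW p hp; have := gW q hq; have := hc2 q hq
    simp only [Dj]; omega)
  have gX1 : Good y k X₁ := fun p hp => by
    have h1 := hX1 p hp
    have := gU p h1.1; omega
  have gY1 : Good (k + 1) b Y₁ := fun p hp => by
    have h1 := hY1 p hp
    have := gU p h1.1; have := hc1 p h1.1; omega
  have gX2 : Good y (k - 1) X₂ := fun p hp => by
    have h1 := hX2 p hp
    have := gW p h1.1; omega
  have gY2 : Good k b Y₂ := fun p hp => by
    have h1 := hY2 p hp
    have := gW p h1.1; have := hc2 p h1.1; omega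
  have gX : Good y k (X₁ ++ X₂) := fun p hp => by
    rcases List.mem_append.1 hp with h | h
    · exact gX1 p h
    · have := gX2 p h; omega
  have gY : Good k b (Y₁ ++ Y₂) := fun p hp => by
    rcases List.mem_append.1 hp with h | h
    · have := gY1 p h; omega
    · exact gY2 p h
  have cYX : Eqv (Y₁ ++ X₂) (X₂ ++ Y₁) := by
    apply Eqv.comm
    intro p hp q hq
    have := gY1 p hp; have := gX2 q hq; simp only [Dj]; omega
  have E0 : Eqv (U ++ (a, k) :: W) ((X₁ ++ X₂) ++ (a, k) :: (Y₁ ++ Y₂)) := by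
    have s1 : Eqv (U ++ (a, k) :: W) ((X₁ ++ Y₁) ++ ([(a, k)] ++ (X₂ ++ Y₂))) :=
      hE1.append (hE2.append_left [(a, k)])
    have s2 : Eqv (Y₁ ++ [(a, k)]) ([(a, k)] ++ Y₁) := by
      apply Eqv.comm
      intro p hp q hq
      have := gY1 p hp
      rw [List.mem_singleton] at hq
      subst hq
      simp only [Dj]; omega
    have s3 : Eqv ([(a, k)] ++ X₂) (X₂ ++ [(a, k)]) := by
      apply Eqv.comm
      intro q hq p hp
      have := gX2 p hp
      rw [List.mem_singleton] at hq
      subst hq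
      simp only [Dj]; omega
    have t1 : Eqv ((X₁ ++ Y₁) ++ ([(a, k)] ++ (X₂ ++ Y₂)))
        (X₁ ++ ([(a, k)] ++ (Y₁ ++ (X₂ ++ Y₂)))) := by
      simpa using (s2.append_right (X₂ ++ Y₂)).append_left X₁
    have t2 : Eqv (X₁ ++ ([(a, k)] ++ (Y₁ ++ (X₂ ++ Y₂))))
        (X₁ ++ ([(a, k)] ++ (X₂ ++ (Y₁ ++ Y₂)))) := by
      simpa using (cYX.append_right Y₂).append_left (X₁ ++ [(a, k)])
    have t3 : Eqv (X₁ ++ ([(a, k)] ++ (X₂ ++ (Y₁ ++ Y₂))))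
        ((X₁ ++ X₂) ++ (a, k) :: (Y₁ ++ Y₂)) := by
      simpa using (s3.append_right (Y₁ ++ Y₂)).append_left X₁
    exact s1.trans (t1.trans (t2.trans t3))
  have E1 : Eqv (U ++ W) ((X₁ ++ X₂) ++ (Y₁ ++ Y₂)) := by
    refine (hE1.append hE2).trans ?_
    simpa using (cYX.append_right Y₂).append_left X₁
  have hpp := E1.pr_eq
  rw [pUW, pr_append (X₁ ++ X₂), cyc_split y k b hyk hkb] at hpp
  obtain ⟨pX, pY⟩ := perm_eq_of_mul k (by
    intro x hx
    rcases lt_or_ge x k with h | h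
    · right
      refine ⟨by rw [cyc_apply]; grind, pr_fix _ _ (fun p hp => ?_)⟩
      have := gY p hp; omega
    · left
      refine ⟨by rw [cyc_apply]; grind, pr_fix _ _ (fun p hp => ?_)⟩
      have := gX p hp; omega) hpp
  have L1 := length_lower pX.symm
  have L2 := length_lower pY.symm
  have L3 := E1.perm.length_eq
  simp only [List.length_append] at L1 L2 L3
  exact ⟨X₁ ++ X₂, Y₁ ++ Y₂, E0, gX, gY, pX.symm, pY.symm,
    by rw [List.length_append]; omega, by rw [List.length_append]; omega⟩

lemma exists_tree (m : ℕ) : ∀ (a b : ℕ) (l : List (ℕ × ℕ)), b = a + m → Good a b l →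
    l.length = m → pr l = cyc a b → ∃ t : Tern, t.size = m ∧ Eqv l (t.G a) := by
  induction m using Nat.strong_induction_on with
  | _ m ih =>
    intro a b l hb hg hlen hp
    rcases Nat.eq_zero_or_pos m with rfl | hm
    · refine ⟨.leaf, rfl, ?_⟩
      rw [List.length_eq_zero_iff.1 hlen]
      exact .refl _
    · obtain ⟨l₁, k, l₂, rfl, h₁⟩ := first_split a b l hg (by
        rw [hp, cyc_apply, if_pos (by omega)]; omega)
      obtain ⟨y, U, W, A, hay, hyk, hkb, E0, gU, gW, gA, pA, pUW, lA, lUW⟩ :=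
        step_one hg hp (by simp at hlen; omega) h₁
      obtain ⟨X, Y, E1, gX, gY, pX, pY, lX, lY⟩ := step_two hay hyk hkb gU gW pA pUW lUW
        (by rw [← E0.pr_eq, hp])
      obtain ⟨t₁, s₁, e₁⟩ := ih (y - 1 - a) (by omega) a (y - 1) A (by omega) gA lA pA
      obtain ⟨t₂, s₂, e₂⟩ := ih (k - y) (by omega) y k X (by omega) gX lX pX
      obtain ⟨t₃, s₃, e₃⟩ := ih (b - k) (by omega) k b Y (by omega) gY lY pY
      refine ⟨.node t₁ t₂ t₃, by simp only [Tern.size]; omega, E0.trans ?_⟩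
      have h1 : a + t₁.size + 1 = y := by omega
      have h2 : y + t₂.size = k := by omega
      simp only [Tern.G, h1, h2]
      have f1 : Eqv (U ++ (a, k) :: (W ++ A)) (X ++ (a, k) :: (Y ++ A)) := by
        simpa using E1.append_right A
      exact f1.trans (e₂.append ((e₃.append e₁).append_left [(a, k)]))

/-! ### Plane trees -/

def Tern.toP : Tern → PTree
  | .leaf => .node 0 Fin.elim0
  | .node t₁ t₂ t₃ => .node 3 ![t₁.toP, t₂.toP, t₃.toP]

lemma toP_internal (t : Tern) : t.toP.internalCount = t.size := by
  induction t with
  | leaf => simp [Tern.toP, Tern.size, PTree.internalCount]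
  | node t₁ t₂ t₃ h₁ h₂ h₃ =>
    simp [Tern.toP, Tern.size, PTree.internalCount, Fin.sum_univ_three, h₁, h₂, h₃]; omega

lemma toP_leaves (t : Tern) : t.toP.numLeaves = 2 * t.size + 1 := by
  induction t with
  | leaf => simp [Tern.toP, Tern.size, PTree.numLeaves]
  | node t₁ t₂ t₃ h₁ h₂ h₃ =>
    simp [Tern.toP, Tern.size, PTree.numLeaves, Fin.sum_univ_three, h₁, h₂, h₃]; omega

lemma toP_ternary (t : Tern) : t.toP.ternary := by
  induction t with
  | leaf => simp [Tern.toP, PTree.ternary]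
  | node t₁ t₂ t₃ h₁ h₂ h₃ =>
    simp [Tern.toP, PTree.ternary, Fin.forall_fin_succ, h₁, h₂, h₃]

lemma toP_inj (t : Tern) : ∀ t' : Tern, t.toP = t'.toP → t = t' := by
  induction t with
  | leaf => intro t' h; cases t' <;> simp_all [Tern.toP]
  | node t₁ t₂ t₃ h₁ h₂ h₃ =>
    intro t' h
    cases t' with
    | leaf => simp [Tern.toP] at h
    | node u₁ u₂ u₃ =>
      simp only [Tern.toP, PTree.node.injEq, heq_eq_eq, true_and] at h
      have e1 := congrFun h 0
      have e2 := congrFun h 1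
      have e3 := congrFun h 2
      simp at e1 e2 e3
      rw [h₁ _ e1, h₂ _ e2, h₃ _ e3]

lemma toP_surj (t : PTree) : t.ternary → ∃ u : Tern, u.toP = t := by
  induction t with
  | node k f ih =>
    intro h
    simp only [PTree.ternary] at h
    obtain ⟨rfl | rfl, h⟩ := h
    · refine ⟨.leaf, ?_⟩
      simp only [Tern.toP]; congr 1; exact Subsingleton.elim _ _
    · obtain ⟨u₁, e₁⟩ := ih 0 (h 0)
      obtain ⟨u₂, e₂⟩ := ih 1 (h 1)
      obtain ⟨u₃, e₃⟩ := ih 2 (h 2)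
      refine ⟨.node u₁ u₂ u₃, ?_⟩
      simp only [Tern.toP]; congr 1
      ext i; fin_cases i <;> simp [e₁, e₂, e₃]

lemma card_trees (n : ℕ) (hn : 2 ≤ n) :
    Nat.card {t : Tern // t.size = n - 1} = Nat.card {t : PTree //
        t.ternary ∧ t.internalCount = n - 1 ∧ t.numLeaves = 2 * n - 1} := by
  apply Nat.card_congr
  refine Equiv.ofBijective (fun t => ⟨t.1.toP, toP_ternary _, ?_, ?_⟩) ⟨?_, ?_⟩
  · rw [toP_internal, t.2]
  · rw [toP_leaves, t.2]; omega
  · intro t t' h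
    exact Subtype.ext (toP_inj _ _ (congrArg Subtype.val h))
  · rintro ⟨t, h1, h2, h3⟩
    obtain ⟨u, rfl⟩ := toP_surj t h1
    exact ⟨⟨u, by rw [← toP_internal, h2]⟩, rfl⟩

/-! ### Transfer to `Perm (Fin n)` -/

def ev (n : ℕ) (p : ℕ × ℕ) : Perm (Fin n) :=
  if h : p.1 < n ∧ p.2 < n then swap ⟨p.1, h.1⟩ ⟨p.2, h.2⟩ else 1

lemma ev_apply {n : ℕ} {p : ℕ × ℕ} (h1 : p.1 < n) (h2 : p.2 < n) (x : Fin n) :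
    ((ev n p x : Fin n) : ℕ) = swap p.1 p.2 (x : ℕ) := by
  rw [ev, dif_pos ⟨h1, h2⟩]
  simp only [swap_apply_def, Fin.ext_iff]
  split_ifs <;> rfl

lemma ev_prod {n : ℕ} (hn : 2 ≤ n) (l : List (ℕ × ℕ)) (hg : Good 0 (n - 1) l) (x : Fin n) :
    (((l.map (ev n)).prod x : Fin n) : ℕ) = pr l x := by
  induction l with
  | nil => simp
  | cons p l ih =>
    have := hg p (by simp)
    rw [List.map_cons, List.prod_cons, Perm.mul_apply, ev_apply (by omega) (by omega),
      ih (fun q hq => hg q (by simp [hq])), pr_cons, Perm.mul_apply]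

lemma rot_apply {n : ℕ} (hn : 2 ≤ n) (x : Fin n) : ((finRotate n x : Fin n) : ℕ) =
    cyc 0 (n - 1) x := by
  obtain ⟨m, rfl⟩ : ∃ m, n = m + 1 := ⟨n - 1, by omega⟩
  rw [coe_finRotate, cyc_apply]
  have := x.2
  simp only [Fin.ext_iff, Fin.val_last]
  grind

lemma prod_iff {n : ℕ} (hn : 2 ≤ n) (l : List (ℕ × ℕ)) (hg : Good 0 (n - 1) l) :
    (l.map (ev n)).prod = finRotate n ↔ pr l = cyc 0 (n - 1) := by
  constructor
  · intro h
    ext x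
    by_cases hx : x < n
    · have := ev_prod hn l hg ⟨x, hx⟩
      rw [h, rot_apply hn] at this
      exact this.symm
    · rw [pr_fix l x (fun p hp => by have := hg p hp; omega), cyc_apply]
      grind
  · intro h
    ext x
    rw [ev_prod hn l hg, rot_apply hn, h]

lemma ev_isSwap {n : ℕ} {p : ℕ × ℕ} (h1 : p.1 < p.2) (h2 : p.2 < n) : (ev n p).IsSwap := by
  rw [ev, dif_pos ⟨by omega, h2⟩]
  exact ⟨_, _, by simp [Fin.ext_iff]; omega, rfl⟩

lemma exists_pairs {n : ℕ} (L : List (Perm (Fin n))) (h : ∀ σ ∈ L, σ.IsSwap) :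
    ∃ l : List (ℕ × ℕ), Good 0 (n - 1) l ∧ l.map (ev n) = L := by
  induction L with
  | nil => exact ⟨[], by intro p hp; simp at hp, rfl⟩
  | cons σ L ih =>
    obtain ⟨l, hl, rfl⟩ := ih (fun τ hτ => h τ (by simp [hτ]))
    obtain ⟨x, y, hxy, rfl⟩ := h σ (by simp)
    have key : ∃ p : ℕ × ℕ, (p.1 < p.2 ∧ p.2 ≤ n - 1) ∧ ev n p = swap x y := by
      have hx := x.2
      have hy := y.2
      have hne : (x : ℕ) ≠ y := fun h => hxy (Fin.ext h)
      rcases lt_or_gt_of_ne hne with h | h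
      · exact ⟨(x, y), ⟨h, by simp only; omega⟩, by simp [ev]⟩
      · exact ⟨(y, x), ⟨h, by simp only; omega⟩, by simp [ev, swap_comm]⟩
    obtain ⟨p, hp, e⟩ := key
    refine ⟨p :: l, ?_, by simp [e]⟩
    intro q hq
    rcases List.mem_cons.1 hq with rfl | hq
    · exact ⟨Nat.zero_le _, hp⟩
    · exact hl q hq

lemma ev_inj {n : ℕ} : Set.InjOn (ev n) {p | p.1 < p.2 ∧ p.2 < n} := by
  rintro ⟨x, y⟩ h ⟨x', y'⟩ h' he
  simp only [Set.mem_ofPred_eq] at h h'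
  have e1 := congrArg (fun σ : Perm (Fin n) => ((σ ⟨x, by omega⟩ : Fin n) : ℕ)) he
  have e2 := congrArg (fun σ : Perm (Fin n) => ((σ ⟨x', by omega⟩ : Fin n) : ℕ)) he
  rw [ev_apply (by simp only; omega) (by simp only; omega),
    ev_apply (by simp only; omega) (by simp only; omega)] at e1 e2
  simp only [swap_apply_def] at e1 e2
  simp only [Prod.mk.injEq]
  grind

lemma perm_of_map {n : ℕ} (hn : 2 ≤ n) {l l' : List (ℕ × ℕ)} (hl : Good 0 (n - 1) l)
    (hl' : Good 0 (n - 1) l') (h : (l.map (ev n)).Perm (l'.map (ev n))) : l.Perm l' := by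
  have hinv := (ev_inj (n := n)).leftInvOn_invFunOn
  have key : ∀ u : List (ℕ × ℕ), Good 0 (n - 1) u →
      (u.map (ev n)).map (Function.invFunOn (ev n) {p | p.1 < p.2 ∧ p.2 < n}) = u := by
    intro u hu
    rw [List.map_map]
    conv_rhs => rw [← List.map_id u]
    apply List.map_congr_left
    intro p hp
    have := hu p hp
    exact hinv (show p.1 < p.2 ∧ p.2 < n by omega)
  have := h.map (Function.invFunOn (ev n) {p | p.1 < p.2 ∧ p.2 < n})
  rwa [key l hl, key l' hl'] at this

lemma ev_comm {n : ℕ} {p q : ℕ × ℕ} (h : Dj p q) : ev n p * ev n q = ev n q * ev n p := by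
  by_cases hp : p.1 < n ∧ p.2 < n
  · by_cases hq : q.1 < n ∧ q.2 < n
    · ext x
      simp only [Perm.mul_apply]
      rw [ev_apply hp.1 hp.2, ev_apply hq.1 hq.2, ev_apply hq.1 hq.2, ev_apply hp.1 hp.2]
      exact congrArg (fun σ : Perm ℕ => σ x) (swap_comm_of_dj h)
    · simp [ev, hq]
  · simp [ev, hp]

lemma Eqv.factEquiv {n : ℕ} {l l'} (h : Eqv l l') :
    FactEquiv (l.map (ev n)) (l'.map (ev n)) := by
  induction h with
  | refl l => exact .refl _
  | swap l₁ l₂ p q h =>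
    simp only [List.map_append, List.map_cons]
    exact .swap _ _ _ _ (ev_comm h)
  | trans _ _ h1 h2 => exact h1.trans h2

lemma perm_of_factEquiv {n : ℕ} {l l' : List (Perm (Fin n))} (h : FactEquiv l l') :
    l.Perm l' := by
  induction h with
  | refl l => exact .refl _
  | swap l₁ l₂ p q h => exact (List.Perm.swap _ _ _).append_left _
  | trans _ _ h1 h2 => exact h1.trans h2

lemma G_good' {n : ℕ} {t : Tern} (h : t.size = n - 1) : Good 0 (n - 1) (t.G 0) := by
  have := G_good t 0
  rwa [h, Nat.zero_add] at this

def treeFact (n : ℕ) (hn : 2 ≤ n) (t : {t : Tern // t.size = n - 1}) : TransFact n :=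
  ⟨(t.1.G 0).map (ev n), by rw [List.length_map, G_length, t.2], by
    intro σ hσ
    obtain ⟨p, hp, rfl⟩ := List.mem_map.1 hσ
    have := G_good' t.2 p hp
    exact ev_isSwap this.2.1 (by omega), by
    rw [prod_iff hn _ (G_good' t.2), G_pr, t.2, Nat.zero_add]⟩

lemma card_classes (n : ℕ) (hn : 2 ≤ n) :
    Nat.card {t : Tern // t.size = n - 1} =
      Nat.card (Quot (fun l₁ l₂ : TransFact n => FactEquiv l₁.1 l₂.1)) := by
  apply Nat.card_congr
  refine Equiv.ofBijective (fun t => Quot.mk _ (treeFact n hn t)) ⟨?_, ?_⟩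
  · intro t t' h
    have h2 := congrArg (Quot.lift (fun L : TransFact n => (L.1 : Multiset (Perm (Fin n))))
      (fun L L' h => Multiset.coe_eq_coe.2 (perm_of_factEquiv h))) h
    have h3 : ((t.1.G 0).map (ev n)).Perm ((t'.1.G 0).map (ev n)) := Multiset.coe_eq_coe.1 h2
    exact Subtype.ext (G_inj _ _ 0 (perm_of_map hn (G_good' t.2) (G_good' t'.2) h3))
  · intro q
    induction q using Quot.ind with
    | mk L =>
      obtain ⟨L, hlen, hsw, hprod⟩ := L
      obtain ⟨l, hg, rfl⟩ := exists_pairs L hsw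
      obtain ⟨t, ht, he⟩ := exists_tree (n - 1) 0 (n - 1) l (by omega) hg
        (by rwa [List.length_map] at hlen) ((prod_iff hn l hg).1 hprod)
      refine ⟨⟨t, ht⟩, ?_⟩
      symm
      exact Quot.sound he.factEquiv

end TF

/-- the number of equivalence classes of factorizations of the
`n`-cycle `(1 2 … n)` into `n − 1` transpositions equals the number of rooted
plane trees with `n − 1` internal vertices of degree 4 and `2n` leaves, the
root being a leaf.  (The tree is encoded by the subtree below the root leaf,
which therefore has `2n − 1` leaves.) -/
theorem classes_eq_ternary_trees (n : ℕ) (hn : 2 ≤ n) :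
    Nat.card (Quot (fun l₁ l₂ : TransFact n => FactEquiv l₁.1 l₂.1)) =
      Nat.card {t : PTree //
        t.ternary ∧ t.internalCount = n - 1 ∧ t.numLeaves = 2 * n - 1} := by
  rw [← TF.card_classes n hn, TF.card_trees n hn]
end

section
/- For every n ≥ 1, ∑_{α : ⟨α⟩ = n} (−1)^{|α| + n} H̃(α) = C_n, the n-th Catalan number (1/(n+1))·binom(2n, n), where the sum is over all types α with ⟨α⟩ := ∑_{j≥2}(j−1)α_j = n and |α| := ∑_{j≥2} α_j. -/
/-- For a type `α`, the corresponding `n = 1 + ⟨α⟩ = 1 + ∑ (j−1) α j`. -/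
def nOf (α : ℕ →₀ ℕ) : ℕ := 1 + α.sum fun j a => (j - 1) * a

/-- Minimal factorizations of the `nOf α`-cycle `(1 2 … n)` of type `α`. -/
def FactOfType (α : ℕ →₀ ℕ) : Type :=
  {l : List (Equiv.Perm (Fin (nOf α))) //
    (∀ σ ∈ l, σ.IsCycle ∧ 2 ≤ σ.support.card) ∧ l.prod = finRotate (nOf α) ∧
    ∀ j, l.countP (fun σ => decide (σ.support.card = j)) = α j}

/-- `H̃ α` = number of inequivalent minimal factorizations of type `α`. -/
noncomputable def Htilde (α : ℕ →₀ ℕ) : ℕ :=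
  Nat.card (Quot (fun l₁ l₂ : FactOfType α => FactEquiv l₁.1 l₂.1))


section main
open Equiv Equiv.Perm

section permpart
variable {N : ℕ}

/-- absolute length -/
def absLen (g : Perm (Fin N)) : ℕ := (g.cycleType.map (fun k => k - 1)).sum

/-- signed Catalan number -/
def sCat (k : ℕ) : ℤ := (-1) ^ k * (catalan k : ℤ)

/-- multiplicative signed Catalan function on permutations -/
def mCat (g : Perm (Fin N)) : ℤ := (g.cycleType.map (fun k => sCat (k - 1))).prod

lemma absLen_one : absLen (1 : Perm (Fin N)) = 0 := by simp [absLen]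
lemma mCat_one : mCat (1 : Perm (Fin N)) = 1 := by simp [mCat]
lemma absLen_inv (g : Perm (Fin N)) : absLen g⁻¹ = absLen g := by simp [absLen]

lemma absLen_mul_disjoint {g h : Perm (Fin N)} (d : g.Disjoint h) :
    absLen (g * h) = absLen g + absLen h := by simp [absLen, d.cycleType_mul]
lemma mCat_mul_disjoint {g h : Perm (Fin N)} (d : g.Disjoint h) :
    mCat (g * h) = mCat g * mCat h := by simp [mCat, d.cycleType_mul]

lemma absLen_cycle {g : Perm (Fin N)} (h : g.IsCycle) : absLen g = g.support.card - 1 := by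
  simp [absLen, h.cycleType]

lemma cycleType_formPerm' {p q : Fin N} {l : List (Fin N)} (h : (p :: q :: l).Nodup) :
    (p :: q :: l).formPerm.cycleType = {(p :: q :: l).length} := by
  rw [(List.isCycle_formPerm h (by simp)).cycleType,
    List.support_formPerm_of_nodup _ h (by simp), List.toFinset_card_of_nodup h]

lemma absLen_formPerm {p : Fin N} {l : List (Fin N)} (h : (p :: l).Nodup) :
    absLen (p :: l).formPerm = l.length := by
  rcases l with _ | ⟨q, l⟩
  · simp [absLen]
  · rw [absLen, cycleType_formPerm' h]
    simp

lemma mCat_formPerm {p : Fin N} {l : List (Fin N)} (h : (p :: l).Nodup) :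
    mCat (p :: l).formPerm = sCat l.length := by
  rcases l with _ | ⟨q, l⟩
  · simp [mCat, sCat]
  · rw [mCat, cycleType_formPerm' h]
    simp

lemma absLen_pos {g : Perm (Fin N)} (h : g ≠ 1) : 0 < absLen g := by
  rw [absLen, Nat.pos_iff_ne_zero]
  intro h0
  rw [Multiset.sum_eq_zero_iff] at h0
  have : g.cycleType ≠ 0 := by simpa using h
  obtain ⟨k, hk⟩ := Multiset.exists_mem_of_ne_zero this
  have h2 := two_le_of_mem_cycleType hk
  have := h0 (k - 1) (Multiset.mem_map_of_mem _ hk)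
  omega

lemma absLen_lt_support {g : Perm (Fin N)} (h : g ≠ 1) : absLen g < g.support.card := by
  rw [← sum_cycleType, absLen]
  have : g.cycleType ≠ 0 := by simpa using h
  conv_rhs => rw [← Multiset.map_id g.cycleType]
  apply Multiset.sum_lt_sum_of_nonempty this
  intro k hk
  have h2 := two_le_of_mem_cycleType hk
  simp; omega

lemma formPerm_append_cons (l : List (Fin N)) (a : Fin N) (m : List (Fin N)) :
    (l ++ a :: m).formPerm = (l ++ [a]).formPerm * (a :: m).formPerm := by
  induction l with
  | nil => simp
  | cons x l ih =>
    rcases l with _ | ⟨y, l⟩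
    · simp
    · simp only [List.cons_append, List.formPerm_cons_cons] at ih ⊢
      rw [ih, mul_assoc]

lemma swap_mul_formPerm {p q : Fin N} {l m : List (Fin N)} (h : (p :: l ++ q :: m).Nodup) :
    swap p q * (p :: l ++ q :: m).formPerm = (p :: l).formPerm * (q :: m).formPerm := by
  rw [formPerm_append_cons]
  have h1 : (q :: p :: l).Nodup := by
    have := h.sublist (l₁ := p :: l ++ [q]) (by simp)
    rw [show q :: p :: l = [q] ++ (p :: l) from rfl]
    exact (List.perm_append_comm).nodup_iff.1 this
  have h2 : (p :: l ++ [q]).formPerm = (q :: p :: l).formPerm := by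
    have := List.formPerm_rotate_one (q :: p :: l) h1
    simpa using this
  rw [h2, List.formPerm_cons_cons, swap_comm q p, ← mul_assoc, ← mul_assoc, swap_mul_self, one_mul]

lemma formPerm_disjoint_of {l : List (Fin N)} {r : Perm (Fin N)} (h : ∀ x ∈ l, r x = x) :
    l.formPerm.Disjoint r := by
  intro x
  by_cases hx : x ∈ l
  · right; exact h x hx
  · left; exact List.formPerm_apply_of_notMem hx

lemma exists_decomp (g : Perm (Fin N)) (p : Fin N) :
    ∃ (l : List (Fin N)) (r : Perm (Fin N)), (p :: l).Nodup ∧ g = (p :: l).formPerm * r ∧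
      (∀ x ∈ p :: l, r x = x) ∧ (∀ x, x ∈ p :: l ↔ SameCycle g p x) := by
  by_cases hp : g p = p
  · refine ⟨[], g, by simp, by simp, by simpa using hp, ?_⟩
    intro x
    simp only [List.mem_singleton]
    constructor
    · rintro rfl; exact SameCycle.refl _ _
    · intro h; exact (h.eq_of_left hp).symm
  · have hm : p ∈ g.support := by simpa using hp
    have hne : g.toList p ≠ [] := by
      intro h
      rw [toList_eq_nil_iff] at h; exact h hm
    obtain ⟨a, l, hl⟩ := List.exists_cons_of_ne_nil hne
    have ha : a = p := by
      have := toList_getElem_zero (p := g) (x := p) hm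
      simpa [hl] using this
    subst ha
    have hf : (a :: l).formPerm = g.cycleOf a := by rw [← hl, formPerm_toList]
    have hsc : ∀ x, x ∈ a :: l ↔ SameCycle g a x := by
      intro x; rw [← hl, mem_toList_iff]; simp [hp]
    refine ⟨l, (g.cycleOf a)⁻¹ * g, hl ▸ nodup_toList g a, ?_, ?_, hsc⟩
    · rw [hf]; simp
    · intro x hx
      have := (hsc x).1 hx
      rw [Perm.mul_apply, Perm.inv_eq_iff_eq, this.cycleOf_apply]

/-- splitting -/
lemma split_aux {p q : Fin N} {l m : List (Fin N)} {r : Perm (Fin N)}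
    (h : (p :: l ++ q :: m).Nodup) (hr : ∀ x ∈ p :: l ++ q :: m, r x = x) :
    absLen (swap p q * ((p :: l ++ q :: m).formPerm * r)) = l.length + m.length + absLen r ∧
    absLen ((p :: l ++ q :: m).formPerm * r) = l.length + m.length + 1 + absLen r ∧
    mCat (swap p q * ((p :: l ++ q :: m).formPerm * r)) = sCat l.length * sCat m.length * mCat r := by
  rw [← mul_assoc, swap_mul_formPerm h]
  have hn := List.nodup_append.1 h
  have d1 : ((p :: l).formPerm).Disjoint (q :: m).formPerm := by
    apply formPerm_disjoint_of
    intro x hx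
    apply List.formPerm_apply_of_notMem
    intro hx'
    exact hn.2.2 x hx x hx' rfl
  have d2 : ((p :: l).formPerm * (q :: m).formPerm).Disjoint r := by
    apply Disjoint.mul_left <;> apply formPerm_disjoint_of <;> intro x hx <;> apply hr <;>
      simp at hx ⊢ <;> tauto
  have d3 : ((p :: l ++ q :: m).formPerm).Disjoint r := formPerm_disjoint_of hr
  rw [absLen_mul_disjoint d2, mCat_mul_disjoint d2, absLen_mul_disjoint d1, mCat_mul_disjoint d1,
    absLen_mul_disjoint d3, absLen_formPerm hn.1, absLen_formPerm hn.2.1, mCat_formPerm hn.1,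
    mCat_formPerm hn.2.1, List.cons_append, absLen_formPerm (by simpa using h)]
  simp; omega

lemma absLen_swap_mul_same {g : Perm (Fin N)} {p q : Fin N} (hpq : p ≠ q) (h : SameCycle g p q) :
    absLen (swap p q * g) + 1 = absLen g := by
  obtain ⟨l, r, hl, hg, hr, hs⟩ := exists_decomp g p
  have hq := (hs q).2 h
  have hq : q ∈ l := by
    rcases List.mem_cons.1 hq with h | h
    · exact absurd h.symm hpq
    · exact h
  obtain ⟨l₁, l₂, rfl⟩ := List.append_of_mem hq
  have := split_aux (p := p) (q := q) (l := l₁) (m := l₂) (r := r) (by simpa using hl)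
    (by simpa using hr)
  rw [hg, ← List.cons_append, this.1, this.2.1]; omega

lemma absLen_swap_mul_not_same {g : Perm (Fin N)} {p q : Fin N} (h : ¬ SameCycle g p q) :
    absLen (swap p q * g) = absLen g + 1 := by
  obtain ⟨l, r, hl, hg, hr, hs⟩ := exists_decomp g p
  obtain ⟨m, r', hm, hg', hr', hs'⟩ := exists_decomp r q
  have hq : q ∉ p :: l := fun hq => h ((hs q).1 hq)
  have key : ∀ x ∈ p :: l, x ∉ q :: m := by
    intro x hx hx'
    have := ((hs' x).1 hx').eq_of_right (hr x hx)
    exact hq (this ▸ hx)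
  have hnd : (p :: l ++ q :: m).Nodup := by
    rw [List.nodup_append]
    refine ⟨hl, hm, ?_⟩
    rintro x hx y hy rfl
    exact key x hx hy
  have hr2 : ∀ x ∈ p :: l ++ q :: m, r' x = x := by
    intro x hx
    rcases List.mem_append.1 hx with hx | hx
    · have h1 := hr x hx
      rw [hg', Perm.mul_apply] at h1
      rcases formPerm_disjoint_of hr' (r' x) with h2 | h2
      · rw [← h1]; rw [h1]; rw [h2] at h1; exact h1
      · exact r'.injective h2
    · exact hr' x hx
  have := split_aux hnd hr2
  have e : g = swap p q * ((p :: l ++ q :: m).formPerm * r') := by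
    rw [← mul_assoc, swap_mul_formPerm hnd, mul_assoc, ← hg', hg]
  have e2 : swap p q * g = (p :: l ++ q :: m).formPerm * r' := by
    rw [e, ← mul_assoc, swap_mul_self, one_mul]
  rw [e2, this.2.1, e, this.1]; omega

lemma absLen_swap_mul_le (g : Perm (Fin N)) (p q : Fin N) :
    absLen (swap p q * g) ≤ absLen g + 1 := by
  by_cases hpq : p = q
  · subst hpq; simp [← Perm.one_def]
  by_cases h : SameCycle g p q
  · have := absLen_swap_mul_same hpq h; omega
  · exact (absLen_swap_mul_not_same h).le

lemma absLen_mul_le (g h : Perm (Fin N)) : absLen (g * h) ≤ absLen g + absLen h := by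
  induction hk : absLen g using Nat.strong_induction_on generalizing g with
  | _ k ih =>
    by_cases hg : g = 1
    · subst hg; simp
    · obtain ⟨p, hp⟩ : ∃ p, g p ≠ p := by
        by_contra! hc; exact hg (Perm.ext hc)
      have hs : SameCycle g p (g p) := ⟨1, by simp⟩
      have h1 := absLen_swap_mul_same hp.symm hs
      have h2 := ih (absLen (swap p (g p) * g)) (by omega) _ rfl
      have h3 := absLen_swap_mul_le (swap p (g p) * g * h) p (g p)
      rw [← mul_assoc, ← mul_assoc, swap_mul_self, one_mul] at h3
      omega

lemma absLen_list_prod_le (l : List (Perm (Fin N))) : absLen l.prod ≤ (l.map absLen).sum := by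
  induction l with
  | nil => simp [absLen_one]
  | cons a l ih => simp only [List.prod_cons, List.map_cons, List.sum_cons]
                   exact (absLen_mul_le _ _).trans (by omega)

lemma absLen_mul_swap_of_fix {z : Perm (Fin N)} {p q : Fin N} (hz : z p = p) (hpq : p ≠ q) :
    absLen (z * swap p q) = absLen z + 1 := by
  rw [← absLen_inv, mul_inv_rev, swap_inv, ← absLen_inv z]
  apply absLen_swap_mul_not_same
  intro h
  exact hpq (h.eq_of_left (by rw [Function.IsFixedPt, Perm.inv_eq_iff_eq]; exact hz.symm))

lemma absLen_swap_mul_of_fix {z : Perm (Fin N)} {p q : Fin N} (hz : z p = p) (hpq : p ≠ q) :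
    absLen (swap p q * z) = absLen z + 1 := by
  apply absLen_swap_mul_not_same
  intro h
  exact hpq (h.eq_of_left hz)

lemma sCat_rec (k : ℕ) : ∑ i ∈ Finset.range (k + 1), sCat i * sCat (k - i) = - sCat (k + 1) := by
  rw [sCat, catalan_succ]
  push_cast
  rw [← Fin.sum_univ_eq_sum_range (fun i => sCat i * sCat (k - i)), Finset.mul_sum,
    ← Finset.sum_neg_distrib]
  apply Finset.sum_congr rfl
  rintro ⟨i, hi⟩ -
  simp only [sCat]
  have : (-1 : ℤ) ^ (k + 1) = - ((-1) ^ i * (-1) ^ (k - i)) := by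
    rw [← pow_add, pow_succ, show i + (k - i) = k by omega]; ring
  rw [this]; ring

lemma mCat_rec {g : Perm (Fin N)} {p : Fin N} (hp : g p ≠ p) :
    mCat g = - ∑ q with (q ≠ p ∧ SameCycle g p q), mCat (swap p q * g) := by
  obtain ⟨l, r, hl, hg, hr, hs⟩ := exists_decomp g p
  have hset : (Finset.univ.filter fun q => q ≠ p ∧ SameCycle g p q) = l.toFinset := by
    ext q
    simp only [Finset.mem_filter, Finset.mem_univ, true_and, List.mem_toFinset, ← hs,
      List.mem_cons]
    have : p ∉ l := (List.nodup_cons.1 hl).1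
    constructor
    · tauto
    · intro h; refine ⟨?_, Or.inr h⟩; rintro rfl; exact this h
  have hl0 : l ≠ [] := by
    rintro rfl
    apply hp
    have := hr p (by simp)
    rw [hg]; simp [this]
  obtain ⟨k, hk⟩ : ∃ k, l.length = k + 1 := ⟨l.length - 1, by
    have := List.length_pos_of_ne_nil hl0; omega⟩
  have hval : ∀ i (hi : i < l.length), mCat (swap p l[i] * g) = sCat i * sCat (k - i) * mCat r := by
    intro i hi
    have e : l = l.take i ++ l[i] :: l.drop (i + 1) := by simp
    have e' : p :: l = p :: l.take i ++ l[i] :: l.drop (i + 1) := by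
      rw [List.cons_append, ← e]
    have := (split_aux (p := p) (q := l[i]) (l := l.take i) (m := l.drop (i + 1)) (r := r)
      (e' ▸ hl) (e' ▸ hr)).2.2
    rw [← e', ← hg] at this
    rw [this]
    simp only [List.length_take, List.length_drop]
    congr 3 <;> omega
  have hM : mCat g = sCat (k + 1) * mCat r := by
    rw [hg, mCat_mul_disjoint (formPerm_disjoint_of hr), mCat_formPerm hl, hk]
  have hsum : ∑ q ∈ l.toFinset, mCat (swap p q * g) =
      ∑ i ∈ Finset.range (k + 1), sCat i * sCat (k - i) * mCat r := by
    rw [List.sum_toFinset _ (List.nodup_cons.1 hl).2, ← hk, ← Fin.sum_univ_eq_sum_range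
      (fun i => sCat i * sCat (k - i) * mCat r), ← Fin.sum_univ_getElem]
    refine Fintype.sum_equiv (finCongr (by simp)) _ _ ?_
    intro i
    simp [hval]
  rw [hset, hsum, ← Finset.sum_mul, sCat_rec, hM]; ring


/-- absolute order -/
def AbsLe (y x : Perm (Fin N)) : Prop := absLen y + absLen (y⁻¹ * x) = absLen x

lemma AbsLe.one (x : Perm (Fin N)) : AbsLe 1 x := by simp [AbsLe, absLen_one]
lemma AbsLe.self (x : Perm (Fin N)) : AbsLe x x := by simp [AbsLe, absLen_one]

lemma absLe_one_iff (y : Perm (Fin N)) : AbsLe y 1 ↔ y = 1 := by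
  constructor
  · intro h
    by_contra hy
    have := absLen_pos hy
    simp only [AbsLe, absLen_one] at h; omega
  · rintro rfl; exact AbsLe.self _

/-- `x ≤ y ≤ z` iff `x ≤ z` and `x⁻¹y ≤ x⁻¹z` -/
lemma absLe_chain (x y z : Perm (Fin N)) :
    (AbsLe x y ∧ AbsLe y z) ↔ (AbsLe x z ∧ AbsLe (x⁻¹ * y) (x⁻¹ * z)) := by
  have e : (x⁻¹ * y)⁻¹ * (x⁻¹ * z) = y⁻¹ * z := by group
  have h1 := absLen_mul_le x (x⁻¹ * y)
  have h2 := absLen_mul_le x (x⁻¹ * z)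
  have h3 := absLen_mul_le y (y⁻¹ * z)
  have h4 := absLen_mul_le (x⁻¹ * y) (y⁻¹ * z)
  rw [mul_inv_cancel_left] at h1 h2 h3
  rw [show x⁻¹ * y * (y⁻¹ * z) = x⁻¹ * z by group] at h4
  simp only [AbsLe, e]
  omega

lemma AbsLe.fix {y x : Perm (Fin N)} (h : AbsLe y x) {p : Fin N} (hx : x p = p) : y p = p := by
  by_contra hy
  have hq : p ≠ y⁻¹ p := by
    intro h; apply hy; conv_lhs => rw [h]
    simp
  have e1 : (y * swap p (y⁻¹ p)) p = p := by simp
  have h1 := absLen_mul_swap_of_fix e1 hq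
  rw [mul_assoc, swap_mul_self, mul_one] at h1
  have e2 : ((y * swap p (y⁻¹ p))⁻¹ * x) p = p := by
    rw [Perm.mul_apply, hx, Perm.inv_eq_iff_eq, e1]
  have h2 := absLen_swap_mul_of_fix e2 hq
  rw [mul_inv_rev, swap_inv, ← mul_assoc, ← mul_assoc, swap_mul_self, one_mul] at h2
  have h3 := absLen_mul_le (y * swap p (y⁻¹ p)) ((y * swap p (y⁻¹ p))⁻¹ * x)
  rw [mul_inv_cancel_left, mul_inv_rev, swap_inv] at h3
  simp only [AbsLe] at h
  omega

/-- remove a point from its cycle -/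
def removePt (x : Perm (Fin N)) (p : Fin N) : Perm (Fin N) := x * swap p (x⁻¹ p)

lemma removePt_fix (x : Perm (Fin N)) (p : Fin N) : removePt x p p = p := by simp [removePt]

lemma absLe_removePt {y x : Perm (Fin N)} {p : Fin N} (hy : y p = p) :
    AbsLe y x ↔ AbsLe y (removePt x p) := by
  by_cases hq : p = x⁻¹ p
  · rw [removePt, ← hq]; simp [← Perm.one_def]
  · have h1 := absLen_mul_swap_of_fix (removePt_fix x p) hq
    have e : (y⁻¹ * removePt x p) p = p := by
      rw [Perm.mul_apply, removePt_fix, Perm.inv_eq_iff_eq, hy]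
    have h2 := absLen_mul_swap_of_fix e hq
    simp only [removePt, mul_assoc, swap_mul_self, mul_one] at h1 h2
    simp only [removePt, AbsLe]
    omega

open Classical in
lemma weisner (F : Perm (Fin N) → ℤ)
    (hF : ∀ g, ∑ h with AbsLe h g, F (h⁻¹ * g) = if g = 1 then 1 else 0)
    {c : Perm (Fin N)} {p : Fin N} (hc : c p ≠ p) :
    F c = - ∑ q with (q ≠ p ∧ SameCycle c p q), F (swap p q * c) := by
  let Z : Matrix (Perm (Fin N)) (Perm (Fin N)) ℤ := Matrix.of fun x y => if AbsLe x y then 1 else 0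
  let A : Matrix (Perm (Fin N)) (Perm (Fin N)) ℤ :=
    Matrix.of fun x y => if AbsLe x y then F (x⁻¹ * y) else 0
  have hZA : Z * A = 1 := by
    ext x z
    rw [Matrix.mul_apply]
    have : ∀ y, Z x y * A y z =
        if AbsLe x z ∧ AbsLe (x⁻¹ * y) (x⁻¹ * z) then F ((x⁻¹ * y)⁻¹ * (x⁻¹ * z)) else 0 := by
      intro y
      simp only [← absLe_chain]
      rw [show (x⁻¹ * y)⁻¹ * (x⁻¹ * z) = y⁻¹ * z by group]
      simp only [Z, A, Matrix.of_apply]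
      by_cases h1 : AbsLe x y <;> by_cases h2 : AbsLe y z <;> simp [h1, h2]
    rw [Finset.sum_congr rfl (fun y _ => this y)]
    by_cases hxz : AbsLe x z
    · simp only [hxz, true_and]
      refine (Fintype.sum_equiv (Equiv.mulLeft x⁻¹) _
        (fun h => if AbsLe h (x⁻¹ * z) then F (h⁻¹ * (x⁻¹ * z)) else 0) (fun y => rfl)).trans ?_
      rw [← Finset.sum_filter, hF, Matrix.one_apply]
      simp only [inv_mul_eq_one]
    · simp only [hxz, false_and, if_false, Finset.sum_const_zero]
      rw [Matrix.one_apply_ne]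
      rintro rfl; exact hxz (AbsLe.self _)
  have hAZ : A * Z = 1 := mul_eq_one_comm.1 hZA
  have hF2 : ∀ z, ∑ y with AbsLe y z, F y = if z = 1 then 1 else 0 := by
    intro z
    have := congrFun (congrFun hAZ 1) z
    rw [Matrix.mul_apply, Matrix.one_apply] at this
    simp only [eq_comm (a := z)]
    rw [← this, Finset.sum_filter]
    apply Finset.sum_congr rfl
    intro y _
    simp [A, Z, AbsLe.one]
  let v : Perm (Fin N) → ℤ := fun y => if y p = p then F y else 0
  have hv : Matrix.vecMul (Matrix.vecMul v Z) A c = 0 := by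
    rw [Matrix.vecMul_vecMul, hZA, Matrix.vecMul_one]
    simp [v, hc]
  have hvZ : ∀ x, Matrix.vecMul v Z x = if removePt x p = 1 then 1 else 0 := by
    intro x
    rw [← hF2, Finset.sum_filter]
    simp only [Matrix.vecMul, dotProduct, v, Z, Matrix.of_apply]
    apply Finset.sum_congr rfl
    intro y _
    by_cases hy : y p = p
    · simp [hy, absLe_removePt (x := x) hy]
    · have : ¬ AbsLe y (removePt x p) := fun h => hy (h.fix (removePt_fix x p))
      simp [hy, this]
  have hrem : ∀ x, removePt x p = 1 ↔ ∃ q, swap p q = x := by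
    intro x
    constructor
    · intro h
      refine ⟨x⁻¹ p, ?_⟩
      rw [removePt, mul_eq_one_iff_eq_inv, swap_inv] at h
      exact h.symm
    · rintro ⟨q, rfl⟩
      simp [removePt]
  have hset : (Finset.univ.filter fun x => removePt x p = 1) =
      Finset.univ.image (fun q => swap p q) := by
    ext x; simp [hrem]
  have hinj : Function.Injective (fun q => swap p q) := by
    intro q q' h
    have := congrArg (fun σ : Perm (Fin N) => σ p) h
    simpa using this
  have key : ∑ q, (if AbsLe (swap p q) c then F (swap p q * c) else 0) = 0 := by
    refine Eq.trans ?_ hv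
    change _ = ∑ x, Matrix.vecMul v Z x * A x c
    simp only [hvZ, ite_mul, one_mul, zero_mul]
    symm
    rw [← Finset.sum_filter, hset, Finset.sum_image (fun a _ b _ h => hinj h)]
    simp [A]
  rw [← Finset.add_sum_erase _ _ (Finset.mem_univ p)] at key
  have h0 : swap p p = (1 : Perm (Fin N)) := by simp [Perm.one_def]
  rw [h0, if_pos (AbsLe.one c), one_mul] at key
  rw [eq_neg_iff_add_eq_zero, ← key, ← Finset.sum_filter]
  congr 1
  apply Finset.sum_congr _ (fun _ _ => rfl)
  ext q
  simp only [Finset.mem_filter, Finset.mem_univ, true_and, Finset.mem_erase, and_true]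
  apply and_congr_right
  intro hq
  have h1 : absLen (swap p q) = 1 := by
    have := absLen_mul_swap_of_fix (z := 1) (p := p) (q := q) (by simp) hq.symm
    simpa [absLen_one] using this
  simp only [AbsLe, h1, swap_inv]
  constructor
  · intro h
    have := absLen_swap_mul_same hq.symm h
    omega
  · intro h
    by_contra h2
    have := absLen_swap_mul_not_same h2
    omega

open Classical in
lemma eq_mCat (F : Perm (Fin N) → ℤ)
    (hF : ∀ g, ∑ h with AbsLe h g, F (h⁻¹ * g) = if g = 1 then 1 else 0) (g : Perm (Fin N)) :
    F g = mCat g := by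
  induction hk : absLen g using Nat.strong_induction_on generalizing g with
  | _ k ih =>
    by_cases hg : g = 1
    · subst hg
      have := hF 1
      simp only [absLe_one_iff, if_true] at this
      simpa [mCat_one, Finset.filter_eq'] using this
    · obtain ⟨p, hp⟩ : ∃ p, g p ≠ p := by
        by_contra! hc; exact hg (Perm.ext hc)
      rw [weisner F hF hp, mCat_rec hp]
      congr 1
      have e : (Finset.univ.filter fun q => q ≠ p ∧ SameCycle g p q) =
        @Finset.filter _ (fun q => q ≠ p ∧ SameCycle g p q) (fun _ => instDecidableAnd) Finset.univ := by
        congr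
      apply Finset.sum_congr
      · ext q; simp
      · intro q hq
        simp only [Finset.mem_filter, Finset.mem_univ, true_and] at hq
        have := absLen_swap_mul_same hq.1.symm hq.2
        exact ih _ (by omega) _ rfl

end permpart

section tracepart
variable {N : ℕ}

lemma FactEquiv.symm {l l' : List (Perm (Fin N))} (h : FactEquiv l l') : FactEquiv l' l := by
  induction h with
  | refl l => exact .refl l
  | swap l₁ l₂ a b h => exact .swap l₁ l₂ b a h.symm
  | trans _ _ ih1 ih2 => exact .trans ih2 ih1

lemma FactEquiv.perm {l l' : List (Perm (Fin N))} (h : FactEquiv l l') : l.Perm l' := by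
  induction h with
  | refl l => exact .refl l
  | swap l₁ l₂ a b h => exact (List.Perm.swap b a l₂).append_left l₁
  | trans _ _ ih1 ih2 => exact ih1.trans ih2

lemma FactEquiv.prod_eq {l l' : List (Perm (Fin N))} (h : FactEquiv l l') : l.prod = l'.prod := by
  induction h with
  | refl l => rfl
  | swap l₁ l₂ a b h =>
    simp only [List.prod_append, List.prod_cons]
    rw [← mul_assoc a, h, mul_assoc b]
  | trans _ _ ih1 ih2 => exact ih1.trans ih2

lemma FactEquiv.append_left (m : List (Perm (Fin N))) {l l' : List (Perm (Fin N))}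
    (h : FactEquiv l l') : FactEquiv (m ++ l) (m ++ l') := by
  induction h with
  | refl l => exact .refl _
  | swap l₁ l₂ a b h =>
    rw [← List.append_assoc, ← List.append_assoc]
    exact .swap _ l₂ a b h
  | trans _ _ ih1 ih2 => exact ih1.trans ih2

lemma FactEquiv.cons (a : Perm (Fin N)) {l l' : List (Perm (Fin N))}
    (h : FactEquiv l l') : FactEquiv (a :: l) (a :: l') := h.append_left [a]

lemma FactEquiv.erase (c : Perm (Fin N)) {l l' : List (Perm (Fin N))}
    (h : FactEquiv l l') : FactEquiv (l.erase c) (l'.erase c) := by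
  induction h with
  | refl l => exact .refl _
  | swap l₁ l₂ a b h =>
    by_cases hc : c ∈ l₁
    · rw [List.erase_append_left _ hc, List.erase_append_left _ hc]
      exact .swap _ l₂ a b h
    · rw [List.erase_append_right _ hc, List.erase_append_right _ hc]
      apply FactEquiv.append_left
      by_cases ha : a = c <;> by_cases hb : b = c
      · subst ha; subst hb; exact .refl _
      · subst ha
        rw [List.erase_cons_head, List.erase_cons_tail (by simpa using hb), List.erase_cons_head]
        exact .refl _
      · subst hb
        rw [List.erase_cons_head, List.erase_cons_tail (by simpa using ha), List.erase_cons_head]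
        exact .refl _
      · rw [List.erase_cons_tail (by simpa using ha), List.erase_cons_tail (by simpa using hb),
          List.erase_cons_tail (by simpa using hb), List.erase_cons_tail (by simpa using ha)]
        exact .swap [] _ a b h
  | trans _ _ ih1 ih2 => exact ih1.trans ih2

lemma FactEquiv.cancel_left {m l l' : List (Perm (Fin N))}
    (h : FactEquiv (m ++ l) (m ++ l')) : FactEquiv l l' := by
  induction m with
  | nil => exact h
  | cons a m ih => apply ih; simpa using h.erase a

lemma FactEquiv.filter_pair {a b : Perm (Fin N)} (hab : a * b ≠ b * a) {l l' : List (Perm (Fin N))}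
    (h : FactEquiv l l') :
    l.filter (fun x => decide (x = a ∨ x = b)) = l'.filter (fun x => decide (x = a ∨ x = b)) := by
  induction h with
  | refl l => rfl
  | swap l₁ l₂ x y h =>
    simp only [List.filter_append, List.filter_cons]
    congr 1
    by_cases hx : x = a ∨ x = b <;> by_cases hy : y = a ∨ y = b
    · rcases hx with rfl | rfl <;> rcases hy with rfl | rfl
      · rfl
      · exact absurd h hab
      · exact absurd h.symm hab
      · rfl
    all_goals simp [hx, hy]
  | trans _ _ ih1 ih2 => exact ih1.trans ih2

/-- two distinct initial letters commute -/
lemma FactEquiv.initial_comm {a b : Perm (Fin N)} {l l' : List (Perm (Fin N))}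
    (h : FactEquiv (a :: l) (b :: l')) : a * b = b * a := by
  by_contra hab
  have := h.filter_pair hab
  simp at this
  exact hab (by rw [this.1])

lemma FactEquiv.initial_comm' {a b : Perm (Fin N)} (hab : a ≠ b) {l l' : List (Perm (Fin N))}
    (h : FactEquiv (a :: l) (b :: l')) : FactEquiv l' (a :: l.erase b) := by
  have := h.erase b
  rw [List.erase_cons_head, List.erase_cons_tail (by simpa using hab)] at this
  exact this.symm

/-- bring a commuting letter to the front -/
lemma FactEquiv.bring {a : Perm (Fin N)} {L : List (Perm (Fin N))} (l : List (Perm (Fin N)))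
    (ha : a ∈ L) (hc : ∀ b ∈ L, a * b = b * a) : ∃ l', FactEquiv (L ++ l) (a :: l') := by
  induction L with
  | nil => simp at ha
  | cons b L ih =>
    by_cases hab : a = b
    · subst hab; exact ⟨L ++ l, .refl _⟩
    · have ha' : a ∈ L := by
        rcases List.mem_cons.1 ha with h | h
        · exact absurd h hab
        · exact h
      obtain ⟨l', hl'⟩ := ih ha' (fun c hcL => hc c (List.mem_cons_of_mem _ hcL))
      refine ⟨b :: l', (hl'.cons b).trans ?_⟩
      exact .swap [] l' b a (hc b (by simp)).symm

/-- if all letters of a nodup list are initial, then the list can be split off -/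
lemma FactEquiv.split_off {C : List (Perm (Fin N))} (hC : C.Nodup) {s : List (Perm (Fin N))}
    (h : ∀ a ∈ C, ∃ l, FactEquiv s (a :: l)) : ∃ l, FactEquiv s (C ++ l) := by
  induction C generalizing s with
  | nil => exact ⟨s, .refl _⟩
  | cons a C ih =>
    obtain ⟨l, hl⟩ := h a (by simp)
    have hn := List.nodup_cons.1 hC
    obtain ⟨m, hm⟩ := ih hn.2 (s := l) (by
      intro b hb
      obtain ⟨l', hl'⟩ := h b (by simp [hb])
      have hba : b ≠ a := by rintro rfl; exact hn.1 hb
      exact ⟨_, (hl'.symm.trans hl).initial_comm' hba⟩)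
    exact ⟨m, hl.trans (hm.cons a)⟩

instance factSetoid (N : ℕ) : Setoid (List (Perm (Fin N))) where
  r := FactEquiv
  iseqv := ⟨.refl, .symm, .trans⟩

/-- traces -/
abbrev Trace (N : ℕ) : Type := Quotient (factSetoid N)

/-- number of letters of a trace -/
def Trace.len (t : Trace N) : ℕ := Quotient.lift List.length (fun _ _ h => (FactEquiv.perm h).length_eq) t

/-- minimal factorization -/
def MinFact (g : Perm (Fin N)) (l : List (Perm (Fin N))) : Prop :=
  (∀ σ ∈ l, σ.IsCycle) ∧ l.prod = g ∧ (l.map absLen).sum = absLen g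

lemma MinFact.congr {g : Perm (Fin N)} {l l' : List (Perm (Fin N))} (h : FactEquiv l l')
    (hl : MinFact g l) : MinFact g l' := by
  refine ⟨fun σ hσ => hl.1 σ (h.perm.mem_iff.2 hσ), h.prod_eq ▸ hl.2.1, ?_⟩
  rw [← hl.2.2]
  exact ((h.perm.map _).sum_eq).symm

/-- set of minimal traces of `g` -/
def traceSet (g : Perm (Fin N)) : Set (Trace N) := {t | ∃ l, MinFact g l ∧ ⟦l⟧ = t}

lemma mk_mem_traceSet {g : Perm (Fin N)} {l : List (Perm (Fin N))} :
    (⟦l⟧ : Trace N) ∈ traceSet g ↔ MinFact g l := by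
  constructor
  · rintro ⟨l', h, e⟩
    exact h.congr (Quotient.exact e)
  · intro h; exact ⟨l, h, rfl⟩

lemma MinFact.length_le {g : Perm (Fin N)} {l : List (Perm (Fin N))} (h : MinFact g l) :
    l.length ≤ absLen g := by
  rw [← h.2.2, ← List.length_map (f := absLen)]
  apply List.length_le_sum_of_one_le
  intro k hk
  obtain ⟨σ, hσ, rfl⟩ := List.mem_map.1 hk
  exact absLen_pos (h.1 σ hσ).ne_one

lemma traceSet_finite (g : Perm (Fin N)) : (traceSet g).Finite := by
  apply ((List.finite_length_le (Perm (Fin N)) (absLen g)).image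
    (fun l => (⟦l⟧ : Trace N))).subset
  rintro _ ⟨l, h, rfl⟩
  exact ⟨l, h.length_le, rfl⟩

/-- finset of minimal traces -/
noncomputable def traceFin (g : Perm (Fin N)) : Finset (Trace N) := (traceSet_finite g).toFinset

lemma mk_mem_traceFin {g : Perm (Fin N)} {l : List (Perm (Fin N))} :
    (⟦l⟧ : Trace N) ∈ traceFin g ↔ MinFact g l := by
  rw [traceFin, Set.Finite.mem_toFinset, mk_mem_traceSet]

/-- signed count -/
noncomputable def signedCount (g : Perm (Fin N)) : ℤ := ∑ t ∈ traceFin g, (-1) ^ t.len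

/-- prepend a list to a trace -/
def Trace.prepend (L : List (Perm (Fin N))) (t : Trace N) : Trace N :=
  Quotient.map (fun l => L ++ l) (fun _ _ h => FactEquiv.append_left L h) t

lemma Trace.prepend_mk (L l : List (Perm (Fin N))) :
    Trace.prepend L (⟦l⟧ : Trace N) = ⟦L ++ l⟧ := rfl

lemma Trace.prepend_inj (L : List (Perm (Fin N))) {t t' : Trace N}
    (h : t.prepend L = t'.prepend L) : t = t' := by
  induction t using Quotient.inductionOn with | _ l =>
  induction t' using Quotient.inductionOn with | _ l' =>
  exact Quotient.sound (FactEquiv.cancel_left (Quotient.exact h))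

lemma support_subset_of_comm {a b : Perm (Fin N)} (ha : a.IsCycle)
    (hab : a * b = b * a) {x : Fin N} (hxa : a x ≠ x) (hxb : b x ≠ x) : a.support ⊆ b.support := by
  intro y hy
  rw [mem_support] at hy ⊢
  obtain ⟨i, hi⟩ := ha.exists_zpow_eq hxa hy
  have hc : Commute (a ^ i) b := Commute.zpow_left hab i
  rw [← hi, ← Perm.mul_apply, ← hc.eq, Perm.mul_apply]
  intro h
  exact hxb ((a ^ i).injective h)

lemma disjoint_of_comm {a b : Perm (Fin N)} (ha : a.IsCycle) (hb : b.IsCycle)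
    (hab : a * b = b * a) (h : absLen a + absLen b ≤ absLen (a * b)) : a.Disjoint b := by
  by_contra hd
  simp only [Perm.Disjoint, not_forall, not_or] at hd
  obtain ⟨x, hxa, hxb⟩ := hd
  have h1 := support_subset_of_comm ha hab hxa hxb
  have h2 := support_subset_of_comm hb hab.symm hxb hxa
  have he := Finset.Subset.antisymm h1 h2
  have hpos := absLen_pos ha.ne_one
  have hpos' := absLen_pos hb.ne_one
  by_cases hab1 : a * b = 1
  · rw [hab1, absLen_one] at h; omega
  · have h3 := absLen_lt_support hab1
    have h4 : (a * b).support ⊆ a.support := by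
      refine (support_mul_le a b).trans ?_
      rw [← he]; simp
    have h5 := Finset.card_le_card h4
    rw [absLen_cycle ha] at h hpos
    omega

/-- cycle list -/
noncomputable def cyc (h : Perm (Fin N)) : List (Perm (Fin N)) := h.cycleFactorsFinset.toList

lemma cyc_spec (h : Perm (Fin N)) :
    (∀ σ ∈ cyc h, σ.IsCycle) ∧ (cyc h).Pairwise Perm.Disjoint ∧ (cyc h).prod = h :=
  (cycleFactorsFinset_eq_list_toFinset (σ := h) (Finset.nodup_toList _)).1 (by simp)

lemma absLen_prod_disjoint {L : List (Perm (Fin N))} (h : L.Pairwise Perm.Disjoint) :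
    absLen L.prod = (L.map absLen).sum := by
  induction L with
  | nil => simp [absLen_one]
  | cons a L ih =>
    rw [List.pairwise_cons] at h
    rw [List.prod_cons, absLen_mul_disjoint (disjoint_prod_right L h.1), ih h.2]
    simp

lemma minFact_append {g h : Perm (Fin N)} (hg : AbsLe h g) {l : List (Perm (Fin N))}
    (hl : MinFact (h⁻¹ * g) l) : MinFact g (cyc h ++ l) := by
  have hs := cyc_spec h
  have := absLen_prod_disjoint hs.2.1
  refine ⟨?_, ?_, ?_⟩
  · intro σ hσ
    rcases List.mem_append.1 hσ with h | h
    · exact hs.1 σ h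
    · exact hl.1 σ h
  · rw [List.prod_append, hs.2.2, hl.2.1, mul_inv_cancel_left]
  · rw [List.map_append, List.sum_append, ← this, hs.2.2, hl.2.2]
    exact hg

open Classical in
/-- initial letters of a trace -/
noncomputable def initials (s : Trace N) : Finset (Perm (Fin N)) :=
  Finset.univ.filter fun a => ∃ l, s = ⟦a :: l⟧

lemma split_trace {g : Perm (Fin N)} {s : Trace N} (hs : s ∈ traceFin g)
    {C : Finset (Perm (Fin N))} (hC : C ⊆ initials s) :
    ∃ (h : Perm (Fin N)) (t : Trace N), AbsLe h g ∧ t ∈ traceFin (h⁻¹ * g) ∧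
      t.prepend (cyc h) = s ∧ h.cycleFactorsFinset = C := by
  induction s using Quotient.inductionOn with | _ s =>
  rw [mk_mem_traceFin] at hs
  classical
  have hin : ∀ a ∈ C, ∃ l, FactEquiv s (a :: l) := by
    intro a ha
    obtain ⟨l, hl⟩ := (Finset.mem_filter.1 (hC ha)).2
    exact ⟨l, Quotient.exact hl⟩
  obtain ⟨l, hl⟩ := FactEquiv.split_off (C := C.toList) (Finset.nodup_toList C)
    (s := s) (by simpa using hin)
  have hm := hs.congr hl
  have hcyc : ∀ σ ∈ C.toList, σ.IsCycle := fun σ hσ => hm.1 σ (List.mem_append_left _ hσ)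
  have hdis : ∀ a ∈ C, ∀ b ∈ C, a ≠ b → a.Disjoint b := by
    intro a ha b hb hab
    obtain ⟨la, hla⟩ := hin a ha
    obtain ⟨lb, hlb⟩ := hin b hb
    have hc := (hla.symm.trans hlb).initial_comm
    have h2 := (hla.symm.trans hlb).initial_comm' hab
    have h3 := hs.congr (hlb.trans (h2.cons b))
    have h4 := absLen_list_prod_le (la.erase b)
    have h5 := absLen_mul_le (a * b) (la.erase b).prod
    obtain ⟨h6, h7, h8⟩ := h3
    rw [List.prod_cons, List.prod_cons, ← mul_assoc, ← hc] at h7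
    rw [h7] at h5
    simp only [List.map_cons, List.sum_cons] at h8
    exact disjoint_of_comm (h6 a (by simp)) (h6 b (by simp)) hc (by omega)
  have hpw : C.toList.Pairwise Perm.Disjoint := by
    have := Finset.nodup_toList C
    refine List.Pairwise.imp_of_mem ?_ this
    intro a b ha hb hab
    exact hdis a (by simpa using ha) b (by simpa using hb) hab
  have hfac : C.toList.prod.cycleFactorsFinset = C := by
    have := (cycleFactorsFinset_eq_list_toFinset (σ := C.toList.prod)
      (Finset.nodup_toList C)).2 ⟨hcyc, hpw, rfl⟩
    simpa using this
  have hp : C.toList.prod⁻¹ * g = l.prod := by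
    rw [← hm.2.1, List.prod_append, inv_mul_cancel_left]
  have e1 := absLen_prod_disjoint hpw
  have e2 := absLen_list_prod_le l
  have e3 := absLen_mul_le C.toList.prod l.prod
  have e4 := hm.2.2
  have e5 := hm.2.1
  rw [List.prod_append] at e5
  rw [e5] at e3
  rw [List.map_append, List.sum_append] at e4
  refine ⟨C.toList.prod, ⟦l⟧, ?_, ?_, ?_, hfac⟩
  · rw [AbsLe, hp]; omega
  · rw [mk_mem_traceFin, hp]
    refine ⟨fun σ hσ => hm.1 σ (List.mem_append_right _ hσ), rfl, by omega⟩
  · rw [Trace.prepend_mk, cyc, hfac]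
    exact Quotient.sound hl.symm

open Classical in
lemma signedCount_zeta (g : Perm (Fin N)) :
    ∑ h with AbsLe h g, signedCount (h⁻¹ * g) = if g = 1 then 1 else 0 := by
  by_cases hg : g = 1
  · subst hg
    simp only [absLe_one_iff, if_true, Finset.filter_eq', Finset.mem_univ, Finset.sum_singleton,
      inv_one, mul_one]
    have : traceFin (1 : Perm (Fin N)) = {⟦[]⟧} := by
      ext t
      induction t using Quotient.inductionOn with | _ l =>
      rw [mk_mem_traceFin, Finset.mem_singleton]
      constructor
      · intro h
        have := h.length_le
        rw [absLen_one] at this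
        rw [List.length_eq_zero_iff.1 (Nat.le_zero.1 this)]
      · intro h
        have := (FactEquiv.perm (Quotient.exact h)).eq_nil
        subst this
        exact ⟨by simp, by simp, by simp [absLen_one]⟩
    rw [signedCount, this, Finset.sum_singleton]
    rfl
  rw [if_neg hg]
  simp only [signedCount]
  rw [Finset.sum_sigma' (Finset.univ.filter fun h => AbsLe h g) (fun h => traceFin (h⁻¹ * g))
    (fun _ t => (-1 : ℤ) ^ t.len)]
  have hmaps : ∀ x ∈ (Finset.univ.filter fun h => AbsLe h g).sigma
      (fun h => traceFin (h⁻¹ * g)), x.2.prepend (cyc x.1) ∈ traceFin g := by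
    rintro ⟨h, t⟩ hx
    rw [Finset.mem_sigma, Finset.mem_filter] at hx
    induction t using Quotient.inductionOn with | _ l =>
    rw [Trace.prepend_mk, mk_mem_traceFin]
    exact minFact_append hx.1.2 (mk_mem_traceFin.1 hx.2)
  rw [← Finset.sum_fiberwise_of_maps_to hmaps]
  apply Finset.sum_eq_zero
  intro s hs
  have hne : (initials s).Nonempty := by
    induction s using Quotient.inductionOn with | _ l =>
    rw [mk_mem_traceFin] at hs
    rcases l with _ | ⟨a, l⟩
    · exact absurd hs.2.1.symm (by simpa using hg)
    · exact ⟨a, by simp only [initials, Finset.mem_filter, Finset.mem_univ, true_and]; exact ⟨l, rfl⟩⟩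
  have hz := Finset.sum_powerset_neg_one_pow_card_of_nonempty hne
  have : ∑ x ∈ ((Finset.univ.filter fun h => AbsLe h g).sigma
      (fun h => traceFin (h⁻¹ * g))).filter (fun x => x.2.prepend (cyc x.1) = s),
      (-1 : ℤ) ^ x.2.len = ∑ C ∈ (initials s).powerset, (-1 : ℤ) ^ s.len * (-1) ^ C.card := by
    apply Finset.sum_bij (fun x _ => x.1.cycleFactorsFinset)
    · rintro ⟨h, t⟩ hx
      rw [Finset.mem_filter] at hx
      rw [Finset.mem_powerset]
      intro a ha
      obtain ⟨hx, rfl⟩ := hx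
      induction t using Quotient.inductionOn with | _ l =>
      obtain ⟨l', hl'⟩ := FactEquiv.bring (a := a) (L := cyc h) l (by simpa [cyc] using ha) (by
        intro b hb
        exact cycleFactorsFinset_mem_commute' h ha (by simpa [cyc] using hb))
      simp only [initials, Finset.mem_filter, Finset.mem_univ, true_and]
      exact ⟨l', Quotient.sound hl'⟩
    · rintro ⟨h, t⟩ hx ⟨h', t'⟩ hx' e
      have e' : h = h' := cycleFactorsFinset_injective e
      subst e'
      rw [Finset.mem_filter] at hx hx'
      have := Trace.prepend_inj (cyc h) (hx.2.trans hx'.2.symm)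
      exact Sigma.ext rfl (heq_of_eq this)
    · intro C hC
      obtain ⟨h, t, h1, h2, h3, h4⟩ := split_trace hs (Finset.mem_powerset.1 hC)
      refine ⟨⟨h, t⟩, ?_, h4⟩
      rw [Finset.mem_filter, Finset.mem_sigma, Finset.mem_filter]
      exact ⟨⟨⟨Finset.mem_univ _, h1⟩, h2⟩, h3⟩
    · rintro ⟨h, t⟩ hx
      rw [Finset.mem_filter] at hx
      obtain ⟨hx, rfl⟩ := hx
      induction t using Quotient.inductionOn with | _ l =>
      have : (Trace.prepend (cyc h) (⟦l⟧ : Trace N)).len = h.cycleFactorsFinset.card + l.length := by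
        change (cyc h ++ l).length = _
        simp [cyc]
      rw [this]
      change (-1 : ℤ) ^ l.length = _
      rw [pow_add, mul_right_comm, ← pow_add, Even.neg_one_pow ⟨_, rfl⟩, one_mul]
  rw [this, ← Finset.mul_sum, hz, mul_zero]

lemma signedCount_eq (g : Perm (Fin N)) : signedCount g = mCat g := by
  classical
  apply eq_mCat
  intro g
  convert signedCount_zeta g

end tracepart

section finalpart
variable {N : ℕ}

/-- the type of a list of permutations -/
noncomputable def listType (l : List (Perm (Fin N))) : ℕ →₀ ℕ :=
  Multiset.toFinsupp (l.map fun σ => σ.support.card : Multiset ℕ)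

lemma listType_apply (l : List (Perm (Fin N))) (j : ℕ) :
    listType l j = l.countP (fun σ => decide (σ.support.card = j)) := by
  rw [listType, Multiset.toFinsupp_apply, Multiset.coe_count, List.count, List.countP_map]
  apply List.countP_congr
  intro σ _
  simp

lemma listType_sum (l : List (Perm (Fin N))) (f : ℕ → ℕ) :
    (listType l).sum (fun j a => f j * a) = (l.map fun σ => f σ.support.card).sum := by
  have := Finset.sum_multiset_map_count (l.map fun σ => σ.support.card : Multiset ℕ) f
  rw [Multiset.map_coe, Multiset.sum_coe, List.map_map] at this
  change _ = (l.map (f ∘ fun σ => σ.support.card)).sum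
  rw [this, Finsupp.sum, listType, Multiset.toFinsupp_support]
  apply Finset.sum_congr rfl
  intro j _
  rw [Multiset.toFinsupp_apply, smul_eq_mul, mul_comm]

lemma listType_sum_len (l : List (Perm (Fin N))) :
    ((listType l).sum fun _ a => a) = l.length := by
  have := listType_sum l (fun _ => 1)
  simpa using this

/-- the type of a trace -/
noncomputable def Trace.type (t : Trace N) : ℕ →₀ ℕ :=
  Quotient.lift listType (fun l l' (h : FactEquiv l l') => by
    rw [listType, listType, Multiset.coe_eq_coe.2 (h.perm.map _)]) t

lemma Trace.type_mk (l : List (Perm (Fin N))) : Trace.type (⟦l⟧ : Trace N) = listType l := rfl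

lemma sum_absLen_cycles {l : List (Perm (Fin N))} (h : ∀ σ ∈ l, σ.IsCycle) :
    (l.map absLen).sum = (listType l).sum (fun j a => (j - 1) * a) := by
  rw [listType_sum l (fun j => j - 1)]
  congr 1
  apply List.map_congr_left
  intro σ hσ
  exact absLen_cycle (h σ hσ)

lemma absLen_finRotate (n : ℕ) : absLen (finRotate (1 + n)) = n := by
  rw [add_comm]
  rcases n with _ | n
  · rw [finRotate_one, ← Perm.one_def, absLen_one]
  · rw [absLen, cycleType_finRotate]; simp

lemma mCat_finRotate (n : ℕ) : mCat (finRotate (1 + n)) = sCat n := by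
  rw [add_comm]
  rcases n with _ | n
  · rw [finRotate_one, ← Perm.one_def, mCat_one]; simp [sCat]
  · rw [mCat, cycleType_finRotate]; simp

lemma factOfType_iff (α : ℕ →₀ ℕ) (l : List (Perm (Fin (nOf α)))) :
    ((∀ σ ∈ l, σ.IsCycle ∧ 2 ≤ σ.support.card) ∧ l.prod = finRotate (nOf α) ∧
      ∀ j, l.countP (fun σ => decide (σ.support.card = j)) = α j) ↔
    MinFact (finRotate (nOf α)) l ∧ listType l = α := by
  constructor
  · rintro ⟨h1, h2, h3⟩
    have ht : listType l = α := by
      ext j; rw [listType_apply, h3]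
    refine ⟨⟨fun σ hσ => (h1 σ hσ).1, h2, ?_⟩, ht⟩
    rw [sum_absLen_cycles (fun σ hσ => (h1 σ hσ).1), ht]
    exact (absLen_finRotate _).symm
  · rintro ⟨⟨h1, h2, h3⟩, ht⟩
    refine ⟨fun σ hσ => ⟨h1 σ hσ, (h1 σ hσ).two_le_card_support⟩, h2, ?_⟩
    intro j; rw [← listType_apply, ht]

open Classical in
lemma Htilde_eq {α : ℕ →₀ ℕ} (hN : N = nOf α) :
    Htilde α = ((traceFin (finRotate N)).filter (fun t => t.type = α)).card := by
  subst hN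
  let f : Quot (fun l₁ l₂ : FactOfType α => FactEquiv l₁.1 l₂.1) →
      ((traceFin (finRotate (nOf α))).filter (fun t => t.type = α)) :=
    Quot.lift (fun l => ⟨⟦l.1⟧, by
      have := (factOfType_iff α l.1).1 l.2
      rw [Finset.mem_filter, mk_mem_traceFin]
      exact this⟩) (fun l l' h => Subtype.ext (Quotient.sound h))
  have hf : Function.Bijective f := by
    constructor
    · rintro ⟨l⟩ ⟨l'⟩ h
      exact Quot.sound (Quotient.exact (congrArg Subtype.val h))
    · rintro ⟨t, ht⟩
      induction t using Quotient.inductionOn with | _ l =>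
      have ht' := ht
      rw [Finset.mem_filter, mk_mem_traceFin] at ht'
      exact ⟨Quot.mk _ ⟨l, (factOfType_iff α l).2 ht'⟩, rfl⟩
  rw [Htilde, Nat.card_eq_of_bijective f hf, Nat.card_eq_fintype_card, Fintype.card_coe]

end finalpart

end main

/-- for `n ≥ 1`,
`∑_{α : ⟨α⟩ = n} (−1)^{|α| + n} H̃(α) = C_n`, the `n`-th Catalan number,
where `⟨α⟩ = ∑_{j≥2} (j−1) α j` and `|α| = ∑_{j≥2} α j`, the sum being over
all types `α` supported on `{j | 2 ≤ j}`. -/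
theorem signed_sum_eq_catalan (n : ℕ) (hn : 1 ≤ n) :
    (∑ᶠ α ∈ {α : ℕ →₀ ℕ | (∀ j < 2, α j = 0) ∧ (α.sum fun j a => (j - 1) * a) = n},
        ((-1 : ℤ) ^ ((α.sum fun _ a => a) + n) * (Htilde α : ℤ))) =
      (catalan n : ℤ) := by
  classical
  set T := traceFin (finRotate (1 + n)) with hT
  have hmem : ∀ t ∈ T, (∀ j < 2, t.type j = 0) ∧ (t.type.sum fun j a => (j - 1) * a) = n ∧
      (t.type.sum fun _ a => a) = t.len := by
    intro t ht
    induction t using Quotient.inductionOn with | _ l =>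
    rw [hT, mk_mem_traceFin] at ht
    rw [Trace.type_mk]
    refine ⟨?_, ?_, listType_sum_len l⟩
    · intro j hj
      rw [listType_apply, List.countP_eq_zero]
      intro σ hσ
      have := (ht.1 σ hσ).two_le_card_support
      simp; omega
    · rw [← sum_absLen_cycles ht.1, ht.2.2, absLen_finRotate]
  have hH : ∀ α : ℕ →₀ ℕ, (α.sum fun j a => (j - 1) * a) = n →
      Htilde α = (T.filter (fun t => t.type = α)).card := by
    intro α hα
    exact Htilde_eq (by rw [nOf, hα])
  rw [finsum_mem_eq_sum_of_inter_support_eq (t := T.image Trace.type)]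
  · have h1 : ∀ α ∈ T.image Trace.type,
        ((-1 : ℤ) ^ ((α.sum fun _ a => a) + n) * (Htilde α : ℤ)) =
        ∑ t ∈ T with t.type = α, (-1 : ℤ) ^ (t.len + n) := by
      intro α hα
      obtain ⟨t, ht, rfl⟩ := Finset.mem_image.1 hα
      rw [hH _ (hmem t ht).2.1]
      rw [Finset.sum_congr rfl (g := fun _ => (-1 : ℤ) ^ ((t.type.sum fun _ a => a) + n))]
      · rw [Finset.sum_const, nsmul_eq_mul, mul_comm]
      · intro t' ht'
        rw [Finset.mem_filter] at ht'
        rw [← ht'.2, (hmem t' ht'.1).2.2]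
    rw [Finset.sum_congr rfl h1,
      Finset.sum_fiberwise_of_maps_to (fun t ht => Finset.mem_image_of_mem _ ht)]
    have h2 := signedCount_eq (finRotate (1 + n))
    rw [mCat_finRotate, signedCount] at h2
    simp only [pow_add]
    rw [← Finset.sum_mul, h2, sCat, mul_right_comm, ← pow_add, Even.neg_one_pow ⟨_, rfl⟩, one_mul]
  · ext α
    simp only [Set.mem_inter_iff, Set.mem_setOf_eq, Function.mem_support, Finset.mem_coe]
    apply and_congr_left
    intro hne
    constructor
    · rintro ⟨-, hα⟩
      have : Htilde α ≠ 0 := by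
        intro h0; apply hne; rw [h0]; simp
      rw [hH α hα, Finset.card_ne_zero] at this
      obtain ⟨t, ht⟩ := this
      rw [Finset.mem_filter] at ht
      exact Finset.mem_image.2 ⟨t, ht⟩
    · intro hα
      obtain ⟨t, ht, rfl⟩ := Finset.mem_image.1 hα
      exact ⟨(hmem t ht).1, (hmem t ht).2.1⟩
end

section
/- Two increasing cycles σ and τ appearing in a minimal factorization of (1 2 … n) are 'noncrossing': there do not exist a < b < c < d in {1,…,n} with a, c in the support of σ and b, d in the support of τ (or vice versa). -/
namespace NC
open Equiv

def V {n : ℕ} (π : Perm (Fin n)) : Submodule ℚ (Fin n → ℚ) where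
  carrier := {f | ∀ x, f (π x) = f x}
  add_mem' := by
    intro f g hf hg x
    simp only [Set.mem_ofPred_eq] at hf hg
    simp [hf x, hg x]
  zero_mem' := by intro x; simp
  smul_mem' := by
    intro r f hf x
    simp only [Set.mem_ofPred_eq] at hf
    simp [hf x]

theorem mem_V {n : ℕ} (π : Perm (Fin n)) (f : Fin n → ℚ) : f ∈ V π ↔ ∀ x, f (π x) = f x := Iff.rfl

noncomputable def cd {n : ℕ} (π : Perm (Fin n)) : ℕ := n - Module.finrank ℚ (V π)

theorem fr_le {n : ℕ} (W : Submodule ℚ (Fin n → ℚ)) : Module.finrank ℚ W ≤ n := by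
  have := Submodule.finrank_le W
  simpa using this

theorem cd_mul {n : ℕ} (σ τ : Perm (Fin n)) : cd (σ * τ) ≤ cd σ + cd τ := by
  have h1 := Submodule.finrank_sup_add_finrank_inf_eq (V σ) (V τ)
  have h2 : V σ ⊓ V τ ≤ V (σ * τ) := by
    rintro f ⟨hf, hg⟩ x
    rw [Perm.mul_apply]
    exact (hf _).trans (hg x)
  have h3 := Submodule.finrank_mono h2
  have h4 := fr_le (V σ ⊔ V τ)
  unfold cd
  omega

theorem cd_one {n : ℕ} : cd (1 : Perm (Fin n)) = 0 := by
  have : V (1 : Perm (Fin n)) = ⊤ := by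
    ext f; simp [mem_V]
  unfold cd
  rw [this, finrank_top]
  simp

theorem cd_conj {n : ℕ} (s π : Perm (Fin n)) : cd (s * π * s⁻¹) ≤ cd π := by
  have h : (V π).map (LinearEquiv.funCongrLeft ℚ ℚ s⁻¹ : (Fin n → ℚ) →ₗ[ℚ] (Fin n → ℚ)) ≤ V (s * π * s⁻¹) := by
    rintro _ ⟨f, hf, rfl⟩ x
    have := hf (s⁻¹ x)
    simpa [LinearEquiv.funCongrLeft, LinearMap.funLeft] using this
  have h3 := Submodule.finrank_mono h
  rw [LinearEquiv.finrank_map_eq] at h3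
  unfold cd
  omega

theorem cd_cycle {n : ℕ} (σ : Perm (Fin n)) (x : Fin n) (hx : x ∈ σ.support) :
    cd σ ≤ σ.support.card - 1 := by
  let L : (Fin n → ℚ) →ₗ[ℚ] ({y // y ∈ σ.support.erase x} → ℚ) :=
    { toFun := fun f y => f y - f x
      map_add' := by intro f g; ext y; simp; ring
      map_smul' := by intro r f; ext y; simp; ring }
  have h1 := L.finrank_range_add_finrank_ker
  have h2 := Submodule.finrank_le (LinearMap.range L)
  have h3 : LinearMap.ker L ≤ V σ := by
    intro f hf y
    have key : ∀ z ∈ σ.support, f z = f x := by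
      intro z hz
      by_cases hzx : z = x
      · rw [hzx]
      · have := congrFun hf ⟨z, Finset.mem_erase.2 ⟨hzx, hz⟩⟩
        simpa [L, sub_eq_zero] using this
    by_cases hy : y ∈ σ.support
    · rw [key y hy, key _ (Perm.apply_mem_support.2 hy)]
    · rw [Perm.notMem_support.1 hy]
  have h4 := Submodule.finrank_mono h3
  rw [Module.finrank_fintype_fun_eq_card, Fintype.card_coe, Finset.card_erase_of_mem hx] at h2
  rw [Module.finrank_fintype_fun_eq_card, Fintype.card_fin] at h1
  unfold cd
  omega

theorem cd_prod {n : ℕ} (l : List (Perm (Fin n))) (h : ∀ σ ∈ l, σ.IsCycle ∧ 2 ≤ σ.support.card) :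
    cd l.prod ≤ (l.map fun σ => σ.support.card - 1).sum := by
  induction l with
  | nil => simp [cd_one]
  | cons σ l ih =>
    have h1 := ih (fun τ hτ => h τ (List.mem_cons_of_mem _ hτ))
    have h2 := h σ List.mem_cons_self
    obtain ⟨x, hx⟩ : σ.support.Nonempty := Finset.card_pos.1 (by omega)
    have h3 := cd_cycle σ x hx
    have h4 := cd_mul σ l.prod
    simp only [List.prod_cons, List.map_cons, List.sum_cons]
    omega

theorem const_of_V {n : ℕ} (σ : Perm (Fin n)) (hσ : σ.IsCycle) (f : Fin n → ℚ) (hf : f ∈ V σ)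
    (a c : Fin n) (ha : a ∈ σ.support) (hc : c ∈ σ.support) : f c = f a := by
  obtain ⟨j, hj⟩ := hσ.exists_pow_eq (Perm.mem_support.1 ha) (Perm.mem_support.1 hc)
  rw [← hj]
  clear hj
  induction j with
  | zero => simp
  | succ j ih => rw [pow_succ', Perm.mul_apply, hf, ih]

theorem cd_swap {n : ℕ} (σ : Perm (Fin n)) (hσ : σ.IsCycle) (a c : Fin n) (hac : a ≠ c)
    (ha : a ∈ σ.support) (hc : c ∈ σ.support) : cd (swap a c * σ) + 1 ≤ σ.support.card - 1 := by
  classical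
  have hex := hσ.exists_pow_eq (Perm.mem_support.1 ha) (Perm.mem_support.1 hc)
  let j := Nat.find hex
  have hj : (σ ^ j) a = c := Nat.find_spec hex
  have hmin : ∀ i < j, (σ ^ i) a ≠ c := fun i hi => Nat.find_min hex hi
  have hj0 : 0 < j := by
    rcases Nat.eq_zero_or_pos j with h | h
    · rw [h] at hj; exact absurd hj hac
    · exact h
  let S : Finset (Fin n) := (Finset.range j).image fun i => (σ ^ i) a
  have haS : a ∈ S := Finset.mem_image.2 ⟨0, by simpa using hj0, by simp⟩
  have hcS : c ∉ S := by
    intro h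
    obtain ⟨i, hi, h⟩ := Finset.mem_image.1 h
    exact hmin i (Finset.mem_range.1 hi) h
  have hinv : ∀ x ∈ S, (swap a c * σ) x ∈ S := by
    intro x hx
    obtain ⟨i, hi, rfl⟩ := Finset.mem_image.1 hx
    have hi := Finset.mem_range.1 hi
    have e : σ ((σ ^ i) a) = (σ ^ (i + 1)) a := by rw [pow_succ', Perm.mul_apply]
    rw [Perm.mul_apply]
    simp only [e]
    by_cases h1 : i + 1 = j
    · rw [h1, hj, swap_apply_right]; exact haS
    · have h2 : (σ ^ (i + 1)) a ≠ c := hmin _ (by omega)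
      by_cases h3 : (σ ^ (i + 1)) a = a
      · -- then the orbit never reaches `c`
        exfalso
        have := hmin (j - (i + 1)) (by omega)
        apply this
        have : (σ ^ j) a = (σ ^ (j - (i + 1))) ((σ ^ (i + 1)) a) := by
          rw [← Perm.mul_apply, ← pow_add]; congr 2; omega
        rw [h3] at this
        rw [← this, hj]
      · rw [swap_apply_of_ne_of_ne h3 h2]
        exact Finset.mem_image.2 ⟨i + 1, Finset.mem_range.2 (by omega), rfl⟩
  have himg : S.image (swap a c * σ) = S := by
    apply Finset.eq_of_subset_of_card_le
    · intro y hy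
      obtain ⟨x, hx, rfl⟩ := Finset.mem_image.1 hy
      exact hinv x hx
    · rw [Finset.card_image_of_injective _ (Equiv.injective _)]
  have hiff : ∀ x, (swap a c * σ) x ∈ S ↔ x ∈ S := by
    intro x
    refine ⟨fun h => ?_, hinv x⟩
    rw [← himg] at h
    obtain ⟨y, hy, h⟩ := Finset.mem_image.1 h
    rwa [← (Equiv.injective _) h]
  let g : Fin n → ℚ := fun x => if x ∈ S then 1 else 0
  have hg : g ∈ V (swap a c * σ) := by
    intro x
    simp only [g, hiff x]
  have hg' : g ∉ V σ := by
    intro h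
    have := const_of_V σ hσ g h a c ha hc
    simp [g, haS, hcS] at this
  have hle : V σ ≤ V (swap a c * σ) := by
    intro f hf x
    have hfac := const_of_V σ hσ f hf a c ha hc
    rw [← hf x, Perm.mul_apply]
    rcases eq_or_ne (σ x) a with h | h
    · rw [h, swap_apply_left, hfac]
    rcases eq_or_ne (σ x) c with h' | h'
    · rw [h', swap_apply_right, hfac]
    rw [swap_apply_of_ne_of_ne h h']
  have hlt : V σ < V (swap a c * σ) := lt_of_le_of_ne hle (fun h => hg' (h ▸ hg))
  have h1 := Submodule.finrank_lt_finrank_of_lt hlt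
  have h2 := cd_cycle σ a ha
  have h3 := fr_le (V (swap a c * σ))
  unfold cd at *
  omega

theorem nat_const (F : ℕ → ℚ) (N a b c d : ℕ) (hab : a < b) (hbc : b < c) (hcd : c < d) (hd : d ≤ N)
    (h0 : ∀ i < N, i + 1 ≠ a → i + 1 ≠ b → i + 1 ≠ c → i + 1 ≠ d → F (i + 1) = F i)
    (ha : ∀ i < N, i + 1 = a → F c = F i) (hb : ∀ i < N, i + 1 = b → F d = F i)
    (hc : ∀ i < N, i + 1 = c → F a = F i) (hd' : ∀ i < N, i + 1 = d → F b = F i)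
    (hw : a ≠ 0 → F 0 = F N) (hw' : a = 0 → F c = F N) : ∀ i ≤ N, F i = F N := by
  have int : ∀ p k, p + k ≤ N → (∀ i, p < i → i ≤ p + k → i ≠ a ∧ i ≠ b ∧ i ≠ c ∧ i ≠ d) →
      F (p + k) = F p := by
    intro p k
    induction k with
    | zero => intros; rfl
    | succ k ih =>
      intro h1 h2
      obtain ⟨x1, x2, x3, x4⟩ := h2 (p + k + 1) (by omega) (by omega)
      rw [← add_assoc, h0 (p + k) (by omega) x1 x2 x3 x4]
      exact ih (by omega) (fun i hi hi' => h2 i hi (by omega))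
  have int' : ∀ p q, p ≤ q → q ≤ N → (∀ i, p < i → i ≤ q → i ≠ a ∧ i ≠ b ∧ i ≠ c ∧ i ≠ d) →
      F q = F p := by
    intro p q h1 h2 h3
    obtain ⟨k, rfl⟩ := Nat.exists_eq_add_of_le h1
    exact int p k h2 h3
  have hA : ∀ q, a ≤ q → q < b → F q = F a := fun q h1 h2 =>
    int' a q h1 (by omega) (fun i _ _ => by omega)
  have hB : ∀ q, b ≤ q → q < c → F q = F b := fun q h1 h2 =>
    int' b q h1 (by omega) (fun i _ _ => by omega)
  have hC : ∀ q, c ≤ q → q < d → F q = F c := fun q h1 h2 =>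
    int' c q h1 (by omega) (fun i _ _ => by omega)
  have hD : ∀ q, d ≤ q → q ≤ N → F q = F d := fun q h1 h2 =>
    int' d q h1 (by omega) (fun i _ _ => by omega)
  have hZ : ∀ q, q < a → F q = F 0 := fun q h2 =>
    int' 0 q (by omega) (by omega) (fun i _ _ => by omega)
  have eDN : F N = F d := hD N hd le_rfl
  have e1 : F d = F a := (hb (b - 1) (by omega) (by omega)).trans (hA _ (by omega) (by omega))
  have e2 : F a = F b := (hc (c - 1) (by omega) (by omega)).trans (hB _ (by omega) (by omega))
  have e3 : F b = F c := (hd' (d - 1) (by omega) (by omega)).trans (hC _ (by omega) (by omega))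
  intro i hi
  by_cases q1 : i < a
  · rw [hZ i q1, hw (by omega)]
  by_cases q2 : i < b
  · rw [hA i (by omega) q2, eDN, e1]
  by_cases q3 : i < c
  · rw [hB i (by omega) q3, eDN, e1, e2]
  by_cases q4 : i < d
  · rw [hC i (by omega) q4, eDN, e1, e2, e3]
  rw [hD i (by omega) hi, eDN]

theorem cd_cross {N : ℕ} (a b c d : Fin (N + 1)) (hab : a < b) (hbc : b < c) (hcd : c < d) :
    N ≤ cd (swap b d * (swap a c * finRotate (N + 1))) := by
  have hle : V (swap b d * (swap a c * finRotate (N + 1))) ≤ Submodule.span ℚ {fun _ => (1 : ℚ)} := by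
    intro f hf
    rw [mem_V] at hf
    simp only [Perm.mul_apply] at hf
    let F : ℕ → ℚ := fun i => if h : i < N + 1 then f ⟨i, h⟩ else 0
    have hF : ∀ x : Fin (N + 1), F x = f x := by intro x; exact dif_pos x.isLt
    have hrot : ∀ i (h : i < N), finRotate (N + 1) ⟨i, by omega⟩ = ⟨i + 1, by omega⟩ := by
      intro i h; exact finRotate_of_lt h
    have hlast : finRotate (N + 1) ⟨N, by omega⟩ = ⟨0, by omega⟩ := finRotate_last'
    have nab : a ≠ b := hab.ne
    have nbc : b ≠ c := hbc.ne
    have ncd : c ≠ d := hcd.ne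
    have nac : a ≠ c := (hab.trans hbc).ne
    have nbd : b ≠ d := (hbc.trans hcd).ne
    have nad : a ≠ d := (hab.trans (hbc.trans hcd)).ne
    have ga : swap b d (swap a c a) = c := by
      rw [swap_apply_left, swap_apply_of_ne_of_ne nbc.symm ncd]
    have gb : swap b d (swap a c b) = d := by
      rw [swap_apply_of_ne_of_ne nab.symm nbc, swap_apply_left]
    have gc : swap b d (swap a c c) = a := by
      rw [swap_apply_right, swap_apply_of_ne_of_ne nab nad]
    have gd : swap b d (swap a c d) = b := by
      rw [swap_apply_of_ne_of_ne nad.symm ncd.symm, swap_apply_right]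
    have g0 : ∀ x, x ≠ a → x ≠ b → x ≠ c → x ≠ d → swap b d (swap a c x) = x := by
      intro x h1 h2 h3 h4
      rw [swap_apply_of_ne_of_ne h1 h3, swap_apply_of_ne_of_ne h2 h4]
    have hs : ∀ i (h : i < N) (x : Fin (N + 1)), i + 1 = (x : ℕ) →
        f (swap b d (swap a c x)) = F i := by
      intro i h x hx
      have h1 := hf ⟨i, by omega⟩
      rw [hrot i h] at h1
      have h2 : (⟨i + 1, by omega⟩ : Fin (N + 1)) = x := Fin.ext hx
      rw [h2] at h1
      rw [h1]; exact (hF _).symm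
    have hl : f (swap b d (swap a c ⟨0, by omega⟩)) = F N := by
      have h1 := hf ⟨N, by omega⟩
      rw [hlast] at h1
      rw [h1]; exact (hF _).symm
    have key := nat_const F N a b c d hab hbc hcd (by omega)
      (by
        intro i hi h1 h2 h3 h4
        have := hs i hi ⟨i + 1, by omega⟩ rfl
        rw [g0 _ (fun h => h1 (congrArg Fin.val h)) (fun h => h2 (congrArg Fin.val h))
          (fun h => h3 (congrArg Fin.val h)) (fun h => h4 (congrArg Fin.val h))] at this
        rw [← this]; exact hF ⟨i + 1, by omega⟩)
      (by intro i hi h; rw [hF, ← hs i hi a h, ga])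
      (by intro i hi h; rw [hF, ← hs i hi b h, gb])
      (by intro i hi h; rw [hF, ← hs i hi c h, gc])
      (by intro i hi h; rw [hF, ← hs i hi d h, gd])
      (by
        intro h
        rw [g0 _ (by intro q; apply h; rw [← q])
          (by intro q; have := congrArg Fin.val q; simp only at this; omega)
          (by intro q; have := congrArg Fin.val q; simp only at this; omega)
          (by intro q; have := congrArg Fin.val q; simp only at this; omega)] at hl
        rw [← hl]; exact hF ⟨0, by omega⟩)
      (by
        intro h
        have : (⟨0, by omega⟩ : Fin (N + 1)) = a := Fin.ext h.symm
        rw [this, ga] at hl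
        rw [← hl]; exact hF c)
    rw [Submodule.mem_span_singleton]
    refine ⟨F N, ?_⟩
    ext x
    rw [← hF x, key x (by omega)]
    simp
  have h1 := Submodule.finrank_mono hle
  have h2 : Module.finrank ℚ (Submodule.span ℚ {fun _ : Fin (N + 1) => (1 : ℚ)}) ≤ 1 :=
    (finrank_span_le_card _).trans (by simp)
  unfold cd
  omega

theorem main {n : ℕ} (A B C : List (Perm (Fin n))) (σ τ : Perm (Fin n))
    (hcyc : ∀ ρ ∈ A ++ σ :: (B ++ τ :: C), ρ.IsCycle ∧ 2 ≤ ρ.support.card)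
    (p r q u : Fin n) (hpr : p ≠ r) (hqu : q ≠ u)
    (hp : p ∈ σ.support) (hr : r ∈ σ.support) (hq : q ∈ τ.support) (hu : u ∈ τ.support) :
    cd (swap q u * (swap p r * (A ++ σ :: (B ++ τ :: C)).prod)) + 2 ≤
      ((A ++ σ :: (B ++ τ :: C)).map fun σ => σ.support.card - 1).sum := by
  have hA := cd_prod A (fun ρ h => hcyc ρ (by simp [h]))
  have hB := cd_prod B (fun ρ h => hcyc ρ (by simp [h]))
  have hC := cd_prod C (fun ρ h => hcyc ρ (by simp [h]))
  have hσ := cd_swap σ (hcyc σ (by simp)).1 p r hpr hp hr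
  have hτ := cd_swap τ (hcyc τ (by simp)).1 q u hqu hq hu
  set s := swap p r with hs
  set t := swap q u with ht
  have hss : s⁻¹ * s = 1 := by group
  have htt : t⁻¹ = t := by simp [ht]
  have hss' : s⁻¹ = s := by simp [hs]
  have e : t * (s * (A ++ σ :: (B ++ τ :: C)).prod) =
      (t * ((s * A.prod * s⁻¹) * (s * σ) * B.prod) * t⁻¹) * (t * τ) * C.prod := by
    simp only [List.prod_append, List.prod_cons]
    group
  rw [e]
  have i1 := cd_mul ((t * ((s * A.prod * s⁻¹) * (s * σ) * B.prod) * t⁻¹) * (t * τ)) C.prod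
  have i2 := cd_mul (t * ((s * A.prod * s⁻¹) * (s * σ) * B.prod) * t⁻¹) (t * τ)
  have i3 := cd_conj t ((s * A.prod * s⁻¹) * (s * σ) * B.prod)
  have i4 := cd_mul ((s * A.prod * s⁻¹) * (s * σ)) B.prod
  have i5 := cd_mul (s * A.prod * s⁻¹) (s * σ)
  have i6 := cd_conj s A.prod
  simp only [List.map_append, List.map_cons, List.sum_append, List.sum_cons]
  omega

theorem split_list {α : Type*} (l : List α) (i j : Fin l.length) (h : i < j) :
    ∃ A B C, l = A ++ l.get i :: (B ++ l.get j :: C) := by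
  have hij : (i : ℕ) < j := h
  have h1 : l = l.take j ++ l.get j :: l.drop (j + 1) := by simp
  have h2 : l.take j = (l.take j).take i ++ l.get i :: (l.take j).drop (i + 1) := by
    have hi : (i : ℕ) < (l.take j).length := by simp [hij]
    have : l.get i = (l.take j)[(i : ℕ)] := by simp
    rw [this, List.getElem_cons_drop, List.take_append_drop]
  refine ⟨(l.take j).take i, (l.take j).drop (i + 1), l.drop (j + 1), ?_⟩
  conv_lhs => rw [h1, h2]
  simp only [List.append_assoc, List.cons_append]

theorem lt_case (n : ℕ) (l : List (Perm (Fin n)))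
    (hcyc : ∀ σ ∈ l, σ.IsCycle ∧ 2 ≤ σ.support.card)
    (hprod : l.prod = finRotate n)
    (hmin : (l.map fun σ => σ.support.card - 1).sum = n - 1)
    (i j : Fin l.length) (hij : i < j) (a b c d : Fin n) (hab : a < b) (hbc : b < c) (hcd : c < d)
    (h : (a ∈ (l.get i).support ∧ c ∈ (l.get i).support ∧
          b ∈ (l.get j).support ∧ d ∈ (l.get j).support) ∨
         (a ∈ (l.get j).support ∧ c ∈ (l.get j).support ∧
          b ∈ (l.get i).support ∧ d ∈ (l.get i).support)) : False := by
  obtain ⟨A, B, C, e⟩ := split_list l i j hij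
  obtain ⟨N, rfl⟩ : ∃ N, n = N + 1 := ⟨n - 1, by omega⟩
  have hx := cd_cross a b c d hab hbc hcd
  have nac : a ≠ c := (hab.trans hbc).ne
  have nbd : b ≠ d := (hbc.trans hcd).ne
  generalize l.get i = σ at *
  generalize l.get j = τ at *
  rcases h with ⟨h1, h2, h3, h4⟩ | ⟨h1, h2, h3, h4⟩
  · have := main A B C σ τ (by rw [← e]; exact hcyc) a c b d nac nbd h1 h2 h3 h4
    rw [← e, hprod, hmin] at this
    omega
  · have := main A B C σ τ (by rw [← e]; exact hcyc) b d a c nbd nac h3 h4 h1 h2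
    rw [← e, hprod, hmin] at this
    have hcomm : swap a c * swap b d = swap b d * swap a c := by
      have : Perm.Disjoint (swap a c) (swap b d) := by
        intro x
        by_cases hxa : x = a
        · right; subst hxa; exact swap_apply_of_ne_of_ne hab.ne (hab.trans (hbc.trans hcd)).ne
        by_cases hxc : x = c
        · right; subst hxc; exact swap_apply_of_ne_of_ne hbc.ne' hcd.ne
        left; exact swap_apply_of_ne_of_ne hxa hxc
      exact this.commute
    rw [← mul_assoc, hcomm, mul_assoc] at this
    omega

end NC


/-- two factors of a minimal factorization of the `n`-cycle
`(1 2 … n)` (realized as `finRotate n`) are noncrossing: there are no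
`a < b < c < d` with `a, c` in the support of one and `b, d` in the support
of the other. -/
theorem factors_noncrossing (n : ℕ)
    (l : List (Equiv.Perm (Fin n)))
    (hcyc : ∀ σ ∈ l, σ.IsCycle ∧ 2 ≤ σ.support.card)
    (hprod : l.prod = finRotate n)
    (hmin : (l.map fun σ => σ.support.card - 1).sum = n - 1) :
    ∀ i j : Fin l.length, i ≠ j →
      ¬ ∃ a b c d : Fin n, a < b ∧ b < c ∧ c < d ∧
        ((a ∈ (l.get i).support ∧ c ∈ (l.get i).support ∧
          b ∈ (l.get j).support ∧ d ∈ (l.get j).support) ∨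
         (a ∈ (l.get j).support ∧ c ∈ (l.get j).support ∧
          b ∈ (l.get i).support ∧ d ∈ (l.get i).support)) := by
  rintro i j hij ⟨a, b, c, d, hab, hbc, hcd, h⟩
  rcases lt_or_gt_of_ne hij with hlt | hlt
  · exact NC.lt_case n l hcyc hprod hmin i j hlt a b c d hab hbc hcd h
  · exact NC.lt_case n l hcyc hprod hmin j i hlt a b c d hab hbc hcd h.symm
end
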